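/- (Uniqueness, Theorem 5.1) Let 0 ≤ α < 1/2 and fix a cut-off function θ on ℝ². Let u₁ and u₂ be classical Yudovich solutions of the 2D Euler equations on [0,∞) × ℝ² (with the same cut-off θ in the pressure formula) such that, for every T > 0 and i = 1,2: sup_{0 ≤ t ≤ T} ( sup_x |curl uᵢ(t,x)| + ‖uᵢ(t,·)‖_{L²_α} ) < ∞. If u₁(0,·) = u₂(0,·), then u₁(t,x) = u₂(t,x) for all t ≥ 0 and x ∈ ℝ². -/

import Mathlib

/-!
Uniqueness is proved by an energy method for the difference `w = u - v` of two solutions, localised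
to discs of radius `R`. The global energy may be infinite, so the argument follows how
the bound on `∫_{B(0,r)} |w|²` grows with `r`.

*Velocity.* Let `B_r` be the far-field kernel `(1-θ)E` rescaled to length `r`. Its Laplacian `g_r` is
a smooth mollifier of nonzero, scale independent mass (`gk_mass`, `cg_ne`), and the difference of two
scales, `B_d - B_r`, is constant near the origin and outside a disc; hence integration by parts gives
a localised Biot–Savart law expressing `g_d * u - g_r * u` through the vorticity (`bs_ident`). With
bounded vorticity, each solution is an `O(d)` error plus its mollification at scale `d`, whose
gradient is at most a constant times `1 + log (R/d)` on discs of radius comparable to `R`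
(`vel_bounds`). The same bounds give the growth `|u| ≤ A R^(3/4)`, and `enstrophy` bounds the local
`L²` norm of `∇u`.

*Pressure.* The cut-off scale in the pressure formula may be changed (`PF_split`): the force is a
near part, whose kernel has range and mass of order `d`, a far part with kernel `O((R + |y|)⁻³)`, and
an intermediate part which is the gradient of a potential. In the energy balance the divergence-free
condition moves that gradient onto the cut-off `θ(x/R)`, and the potential loses only a logarithm
(`term_mid`). The far kernel beats the growth of the velocities precisely because `α < 1/2`
(`far_le`).

*Bootstrap.* Altogether (`key_fixed`), if `∫_{B(0,r)} |w|² ≤ c r^m` for all `r ≥ 1`, the energy `F_R`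
localised by `θ(x/R)` satisfies
`|F_R'| ≤ 2 A (1 + log (R/d)) (F_R + c R^(m - 1/4)) + 2 A d R⁴`.
Take `d = R⁻⁶`. On a time interval of small length, on which `w` vanishes initially, Grönwall's
inequality turns the logarithmic rate into a power `R^(1/16)`, and a second `R^(1/16)` absorbs the
logarithm in the source, so the exponent `m` improves by `1/8` (`boot_step`). It starts at `m = 3`,
and after 25 steps it is negative; since discs increase with the radius, `w = 0` (`boot`). The length
of the interval depends only on the bounds for the solutions on `[0, T]`, so finitely many steps
cover `[0, T]` (`uniq_on`).
-/

open MeasureTheory Metric ENNReal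

noncomputable section

/-- The plane `ℝ²` as a Euclidean space. -/
abbrev E2 := EuclideanSpace ℝ (Fin 2)

/-- The `i`-th standard basis vector of `ℝ²`. -/
def e2 (i : Fin 2) : E2 := EuclideanSpace.single i 1

/-- Partial derivative `∂ᵢ F` of a scalar function on `ℝ²`. -/
def pd (i : Fin 2) (F : E2 → ℝ) (z : E2) : ℝ := fderiv ℝ F z (e2 i)

/-- Partial derivative `∂ⱼ uᵢ` of a vector field on `ℝ²`. -/
def pdv (j i : Fin 2) (u : E2 → E2) (y : E2) : ℝ := fderiv ℝ u y (e2 j) i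

/-- Divergence `∂₁u₁ + ∂₂u₂` of a vector field on `ℝ²`. -/
def div2 (u : E2 → E2) (x : E2) : ℝ := ∑ i, pdv i i u x

/-- Scalar vorticity `∂₁u₂ − ∂₂u₁` of a vector field on `ℝ²`. -/
def curl2 (u : E2 → E2) (x : E2) : ℝ := pdv 0 1 u x - pdv 1 0 u x

/-- Truncated local Morrey `L²` norm
`‖f‖_{L²_α(R)} = sup_{r ≥ R} ( r^{-(d+2α)} ∫_{B(0,r)} |f|² )^{1/2}`, valued in `ℝ≥0∞`. -/
def morreyR {d : ℕ} {F : Type*} [NormedAddCommGroup F] (α R : ℝ)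
    (f : EuclideanSpace ℝ (Fin d) → F) : ℝ≥0∞ :=
  ⨆ r : {r : ℝ // R ≤ r},
    ((∫⁻ x in ball (0 : EuclideanSpace ℝ (Fin d)) (r : ℝ), (‖f x‖₊ : ℝ≥0∞) ^ 2) /
      ENNReal.ofReal ((r : ℝ) ^ ((d : ℝ) + 2 * α))) ^ ((1 : ℝ) / 2)

/-- Truncated `L^∞_β` norm `sup_{r ≥ R} r^{-β} sup_{|x| ≤ r} |f(x)|`, valued in `ℝ≥0∞`. -/
def morreyInfR {d : ℕ} {F : Type*} [NormedAddCommGroup F] (β R : ℝ)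
    (f : EuclideanSpace ℝ (Fin d) → F) : ℝ≥0∞ :=
  ⨆ r : {r : ℝ // R ≤ r},
    (⨆ x : {x : EuclideanSpace ℝ (Fin d) // ‖x‖ ≤ (r : ℝ)}, (‖f x.1‖₊ : ℝ≥0∞)) /
      ENNReal.ofReal ((r : ℝ) ^ β)

/-- The fundamental solution `E(x) = −(2π)⁻¹ log |x|` of `−Δ` on `ℝ²`. -/
def fundE (z : E2) : ℝ := -(2 * Real.pi)⁻¹ * Real.log ‖z‖

/-- A cut-off function: smooth, `0 ≤ θ ≤ 1`, `θ ≡ 1` on `B(0,1)`, supported in `B(0,2)`. -/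
def IsCutoff (θ : E2 → ℝ) : Prop :=
  ContDiff ℝ (⊤ : ℕ∞) θ ∧ (∀ x, 0 ≤ θ x ∧ θ x ≤ 1) ∧ (∀ x : E2, ‖x‖ ≤ 1 → θ x = 1) ∧
    (∀ x : E2, 2 ≤ ‖x‖ → θ x = 0)

/-- The near-field kernel `θE`. -/
def thetaE (θ : E2 → ℝ) (w : E2) : ℝ := θ w * fundE w

/-- The far-field kernel `(1−θ)E` (which vanishes near the origin). -/
def oneThetaE (θ : E2 → ℝ) (w : E2) : ℝ := (1 - θ w) * fundE w

/-- The pressure force `∇Π(u⊗u)` of Definition 3.1: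
`∂ᵢΠ = ∂ᵢ(θE) * (Σ_{jk} ∂ⱼu_k ∂_k uⱼ) + Σ_{jk} ∂ᵢ∂ⱼ∂ₖ((1−θ)E) * (uⱼ u_k)`. -/
def pressureForce (θ : E2 → ℝ) (u : E2 → E2) (i : Fin 2) (x : E2) : ℝ :=
  (∫ y, pd i (thetaE θ) (x - y) * ∑ j, ∑ k, pdv j k u y * pdv k j u y) +
  ∑ j, ∑ k, ∫ y, pd i (pd j (pd k (oneThetaE θ))) (x - y) * (u y j * u y k)

/-- Absolute convergence of all the integrals defining the pressure force. -/
def PressureIntegrable (θ : E2 → ℝ) (u : E2 → E2) (x : E2) : Prop :=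
  (∀ i : Fin 2,
    Integrable (fun y => pd i (thetaE θ) (x - y) * ∑ j, ∑ k, pdv j k u y * pdv k j u y)) ∧
  (∀ i j k : Fin 2,
    Integrable (fun y => pd i (pd j (pd k (oneThetaE θ))) (x - y) * (u y j * u y k)))

/-- A classical Yudovich solution of the 2D incompressible Euler equations on `[0,∞) × ℝ²`:
a smooth divergence-free vector field satisfying
`∂ₜuᵢ + Σⱼ uⱼ∂ⱼuᵢ + Pᵢ = 0` with the integral pressure force `Pᵢ`, all pressure integrals
being absolutely convergent. -/
def IsYudovichSolution (θ : E2 → ℝ) (u : ℝ → E2 → E2) : Prop :=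
  ContDiffOn ℝ (⊤ : ℕ∞) (fun q : ℝ × E2 => u q.1 q.2) (Set.Ici 0 ×ˢ Set.univ) ∧
  (∀ t, 0 ≤ t → ∀ x, div2 (u t) x = 0) ∧
  (∀ t, 0 ≤ t → ∀ x, PressureIntegrable θ (u t) x) ∧
  (∀ t, 0 ≤ t → ∀ x, ∀ i : Fin 2,
    HasDerivWithinAt (fun s => u s x i)
      (-(∑ j, u t x j * pdv j i (u t) x) - pressureForce θ (u t) i x) (Set.Ici 0) t)

/-! ### Calculus of partial derivatives and integration by parts -/

/-- Smooth scalar functions on the plane. -/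
abbrev Sm (f : E2 → ℝ) : Prop := ContDiff ℝ (⊤ : ℕ∞) f

lemma Sm.differentiable {f : E2 → ℝ} (hf : Sm f) : Differentiable ℝ f :=
  ContDiff.differentiable hf (by simp)

lemma Sm.pd {f : E2 → ℝ} (hf : Sm f) (i : Fin 2) : Sm (pd i f) := by
  have h : ContDiff ℝ (⊤ : ℕ∞) (fderiv ℝ f) := ContDiff.fderiv_right (m := (⊤ : ℕ∞)) hf (by simp)
  exact h.clm_apply contDiff_const

lemma Sm.cont {f : E2 → ℝ} (hf : Sm f) : Continuous f := ContDiff.continuous hf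

lemma Sm.of_le {f : E2 → ℝ} (hf : Sm f) (n : ℕ) : ContDiff ℝ n f :=
  ContDiff.of_le hf (by exact_mod_cast le_top)

lemma pd_cs {f : E2 → ℝ} (hf : HasCompactSupport f) (i : Fin 2) : HasCompactSupport (pd i f) :=
  hf.fderiv_apply (𝕜 := ℝ) (e2 i)

lemma pd_add {f g : E2 → ℝ} (hf : Sm f) (hg : Sm g) (i : Fin 2) :
    pd i (fun x => f x + g x) = fun x => pd i f x + pd i g x := by
  funext x
  simp only [pd]
  rw [fderiv_fun_add (hf.differentiable x) (hg.differentiable x)]; rfl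

lemma pd_sub {f g : E2 → ℝ} (hf : Sm f) (hg : Sm g) (i : Fin 2) :
    pd i (fun x => f x - g x) = fun x => pd i f x - pd i g x := by
  funext x
  simp only [pd]
  rw [fderiv_fun_sub (hf.differentiable x) (hg.differentiable x)]; rfl

lemma pd_sub_const (f : E2 → ℝ) (c : ℝ) (i : Fin 2) :
    pd i (fun x => f x - c) = pd i f := by
  funext x
  simp only [pd]
  rw [fderiv_sub_const]

lemma pd_mul {f g : E2 → ℝ} (hf : Sm f) (hg : Sm g) (i : Fin 2) :
    pd i (fun x => f x * g x) = fun x => pd i f x * g x + f x * pd i g x := by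
  funext x
  simp only [pd]
  rw [fderiv_fun_mul (hf.differentiable x) (hg.differentiable x)]
  simp only [add_apply, smul_apply, smul_eq_mul]; ring

lemma pd_const_mul {f : E2 → ℝ} (hf : Sm f) (c : ℝ) (i : Fin 2) :
    pd i (fun x => c * f x) = fun x => c * pd i f x := by
  funext x
  simp only [pd]
  rw [fderiv_const_mul (hf.differentiable x)]; rfl

lemma pd_sum {ι : Type*} (s : Finset ι) {f : ι → E2 → ℝ} (hf : ∀ k, Sm (f k)) (i : Fin 2) :
    pd i (fun x => ∑ k ∈ s, f k x) = fun x => ∑ k ∈ s, pd i (f k) x := by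
  funext x
  simp only [pd]
  rw [fderiv_fun_sum (fun k _ => (hf k).differentiable x)]
  simp

lemma pd_comp_smul (f : E2 → ℝ) (c : ℝ) (i : Fin 2) :
    pd i (fun x => f (c • x)) = fun x => c * pd i f (c • x) := by
  funext x
  simp only [pd]
  rw [fderiv_comp_smul]; simp

lemma pd_comp_sub (f : E2 → ℝ) (x : E2) (i : Fin 2) :
    pd i (fun y => f (x - y)) = fun y => - pd i f (x - y) := by
  funext y
  simp only [pd]
  have h2 : (fun y => f (x - y)) = fun y => (fun z => f ((-1 : ℝ) • z)) (y + -x) := by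
    funext y; simp [sub_eq_add_neg, add_comm]
  have h3 := fderiv_comp_add_right (𝕜 := ℝ) (f := fun z => f ((-1 : ℝ) • z)) (x := y) (-x)
  rw [h2, h3, fderiv_comp_smul]
  simp [sub_eq_add_neg, add_comm]

lemma pd_congr_nhds {f g : E2 → ℝ} {x : E2} (h : f =ᶠ[nhds x] g) (i : Fin 2) : pd i f x = pd i g x := by
  simp only [pd]; rw [h.fderiv_eq]

lemma pd_comm {f : E2 → ℝ} (hf : Sm f) (i j : Fin 2) : pd i (pd j f) = pd j (pd i f) := by
  funext x
  have h : ContDiff ℝ (⊤ : ℕ∞) (fderiv ℝ f) := ContDiff.fderiv_right (m := (⊤ : ℕ∞)) hf (by simp)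
  have hd : DifferentiableAt ℝ (fderiv ℝ f) x := (h.differentiable (by simp)) x
  have key : ∀ v w : E2, fderiv ℝ (fun y => fderiv ℝ f y v) x w = fderiv ℝ (fderiv ℝ f) x w v := by
    intro v w
    rw [fderiv_clm_apply hd (differentiableAt_const v)]; simp
  have hs : IsSymmSndFDerivAt ℝ f x :=
    (hf.contDiffAt).isSymmSndFDerivAt (by
      rw [minSmoothness_of_isRCLikeNormedField]; 
      exact WithTop.coe_le_coe.2 (le_top : (2 : ℕ∞) ≤ ⊤))
  change fderiv ℝ (fun y => fderiv ℝ f y (e2 j)) x (e2 i) =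
    fderiv ℝ (fun y => fderiv ℝ f y (e2 i)) x (e2 j)
  rw [key, key]; exact hs.eq _ _

lemma pd_zero_off {f : E2 → ℝ} {r : ℝ} (h : ∀ x, r ≤ ‖x‖ → f x = 0) (i : Fin 2) :
    ∀ x, r < ‖x‖ → pd i f x = 0 := by
  intro x hx
  have : f =ᶠ[nhds x] fun _ => 0 := by
    filter_upwards [(continuous_norm.isOpen_preimage _ isOpen_Ioi).mem_nhds hx] with y hy
    exact h y (le_of_lt hy)
  rw [pd_congr_nhds this]; simp [pd]

lemma cs_of_zero_off {f : E2 → ℝ} {r : ℝ} (h : ∀ x, r < ‖x‖ → f x = 0) : HasCompactSupport f := by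
  apply HasCompactSupport.intro (isCompact_closedBall (0 : E2) r)
  intro x hx
  apply h
  simpa [mem_closedBall] using hx

lemma cs_int {f : E2 → ℝ} (hf : Continuous f) (hc : HasCompactSupport f) : Integrable f :=
  hf.integrable_of_hasCompactSupport hc

/-- Integration by parts against a compactly supported function. -/
lemma ibp {f g : E2 → ℝ} (hf : Sm f) (hg : Sm g) (hc : HasCompactSupport f) (i : Fin 2) :
    ∫ x, f x * pd i g x = - ∫ x, pd i f x * g x := by
  apply integral_mul_fderiv_eq_neg_fderiv_mul_of_integrable
  · exact cs_int ((hf.pd i).cont.mul hg.cont) ((pd_cs hc i).mul_right)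
  · exact cs_int (hf.cont.mul (hg.pd i).cont) (hc.mul_right)
  · exact cs_int (hf.cont.mul hg.cont) (hc.mul_right)
  · exact fun x _ => hf.differentiable x
  · exact fun x _ => hg.differentiable x

lemma int_pd_zero {f : E2 → ℝ} (hf : Sm f) (hc : HasCompactSupport f) (i : Fin 2) :
    ∫ x, pd i f x = 0 := by
  have := ibp hf (g := fun _ => 1) contDiff_const hc i
  simp [pd] at this
  simpa [pd] using this

/-! ### Convolutions -/

/-- The convolution `G * h`, with the argument convention of the pressure formula. -/
def cv (G h : E2 → ℝ) (x : E2) : ℝ := ∫ y, G (x - y) * h y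

lemma cs_refl {G : E2 → ℝ} (hc : HasCompactSupport G) (x : E2) :
    HasCompactSupport (fun y => G (x - y)) :=
  hc.comp_homeomorph (Homeomorph.subLeft x)

lemma cv_integrable {G h : E2 → ℝ} (hG : Continuous G) (hh : Continuous h)
    (hc : HasCompactSupport G) (x : E2) : Integrable (fun y => G (x - y) * h y) :=
  cs_int ((hG.comp (continuous_const.sub continuous_id)).mul hh) ((cs_refl hc x).mul_right)

lemma cv_eq_conv (G h : E2 → ℝ) : cv G h = convolution h G (ContinuousLinearMap.mul ℝ ℝ) volume := by
  funext x
  simp only [cv, convolution, ContinuousLinearMap.mul_apply']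
  congr 1; funext y; ring

lemma sm_comp_sub {G : E2 → ℝ} (hG : Sm G) (x : E2) : Sm (fun y => G (x - y)) :=
  ContDiff.comp hG (contDiff_const.sub contDiff_id)

lemma cv_ibp {G h : E2 → ℝ} (hG : Sm G) (hh : Sm h) (hc : HasCompactSupport G) (i : Fin 2) :
    cv (pd i G) h = cv G (pd i h) := by
  funext x
  have := ibp (sm_comp_sub hG x) hh (cs_refl hc x) i
  simp only [cv]
  rw [this, pd_comp_sub, ← integral_neg]
  congr 1; funext y; ring

lemma cv_sm {G h : E2 → ℝ} (hG : Sm G) (hh : Continuous h) (hc : HasCompactSupport G) :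
    Sm (cv G h) := by
  rw [cv_eq_conv]
  exact hc.contDiff_convolution_right _ hh.locallyIntegrable hG

lemma pd_cv {G h : E2 → ℝ} (hG : Sm G) (hh : Continuous h) (hc : HasCompactSupport G) (i : Fin 2) :
    pd i (cv G h) = cv (pd i G) h := by
  funext x
  rw [cv_eq_conv]
  have h1 := hc.hasFDerivAt_convolution_right (ContinuousLinearMap.mul ℝ ℝ) (μ := volume)
    hh.locallyIntegrable (hG.of_le 1) x
  simp only [pd]
  rw [h1.fderiv]
  have hc' : HasCompactSupport (fderiv ℝ G) := hc.fderiv (𝕜 := ℝ)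
  have hi : ConvolutionExistsAt h (fderiv ℝ G) x
      (ContinuousLinearMap.precompR E2 (ContinuousLinearMap.mul ℝ ℝ)) volume :=
    (HasCompactSupport.convolutionExists_right _ hc' hh.locallyIntegrable
      ((hG.of_le 1).continuous_fderiv (by simp))) x
  rw [convolution, ContinuousLinearMap.integral_apply hi]
  simp only [cv, pd]
  congr 1; funext y
  change h y * (fderiv ℝ G (x - y)) (e2 i) = _
  ring

lemma cv_sub_left {G G' h : E2 → ℝ} (hG : Continuous G) (hG' : Continuous G') (hh : Continuous h)
    (hc : HasCompactSupport G) (hc' : HasCompactSupport G') (x : E2) :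
    cv (fun y => G y - G' y) h x = cv G h x - cv G' h x := by
  simp only [cv, sub_mul]
  exact integral_sub (cv_integrable hG hh hc x) (cv_integrable hG' hh hc' x)

/-! ### The kernels: logarithm, far field and their rescalings -/

lemma fundE_contDiffAt {z : E2} (hz : z ≠ 0) : ContDiffAt ℝ (⊤ : ℕ∞) fundE z := by
  unfold fundE
  exact contDiffAt_const.mul ((contDiffAt_id.norm ℝ hz).log (norm_ne_zero_iff.2 hz))

lemma oneThetaE_zero {θ : E2 → ℝ} (hθ : IsCutoff θ) {x : E2} (hx : ‖x‖ ≤ 1) :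
    oneThetaE θ x = 0 := by
  simp [oneThetaE, hθ.2.2.1 x hx]

lemma oneThetaE_far {θ : E2 → ℝ} (hθ : IsCutoff θ) {x : E2} (hx : 2 ≤ ‖x‖) :
    oneThetaE θ x = fundE x := by
  simp [oneThetaE, hθ.2.2.2 x hx]

lemma oneThetaE_sm {θ : E2 → ℝ} (hθ : IsCutoff θ) : Sm (oneThetaE θ) := by
  rw [Sm, contDiff_iff_contDiffAt]
  intro x
  by_cases hx : x = 0
  · have : oneThetaE θ =ᶠ[nhds x] fun _ => 0 := by
      filter_upwards [ball_mem_nhds x one_pos] with y hy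
      apply oneThetaE_zero hθ
      rw [hx] at hy
      exact le_of_lt (by simpa using hy)
    exact contDiffAt_const.congr_of_eventuallyEq this
  · exact (contDiffAt_const.sub hθ.1.contDiffAt).mul (fundE_contDiffAt hx)

lemma fundE_smul {c : ℝ} (hc : 0 < c) {x : E2} (hx : x ≠ 0) :
    fundE (c • x) = fundE x - (2 * Real.pi)⁻¹ * Real.log c := by
  simp only [fundE, norm_smul, Real.norm_eq_abs, abs_of_pos hc]
  rw [Real.log_mul hc.ne' (norm_ne_zero_iff.2 hx)]; ring

lemma norm_sq_e2 (x : E2) : ‖x‖ ^ 2 = ∑ k, x k ^ 2 := by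
  rw [EuclideanSpace.norm_sq_eq]; simp

lemma hasFDerivAt_coord (k : Fin 2) (x : E2) :
    HasFDerivAt (fun y : E2 => y k) (EuclideanSpace.proj k : E2 →L[ℝ] ℝ) x :=
  (EuclideanSpace.proj k : E2 →L[ℝ] ℝ).hasFDerivAt

lemma pd_coord (k i : Fin 2) (x : E2) : pd i (fun y => y k) x = if k = i then 1 else 0 := by
  simp only [pd]; rw [(hasFDerivAt_coord k x).fderiv]; simp [e2]

lemma sm_coord (k : Fin 2) : Sm (fun y : E2 => y k) :=
  (EuclideanSpace.proj k : E2 →L[ℝ] ℝ).contDiff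

lemma sm_normsq : Sm (fun y : E2 => ‖y‖ ^ 2) := contDiff_norm_sq ℝ

lemma pd_normsq (i : Fin 2) (x : E2) : pd i (fun y => ‖y‖ ^ 2) x = 2 * x i := by
  have : (fun y : E2 => ‖y‖ ^ 2) = fun y => ∑ k, y k * y k := by
    funext y; rw [norm_sq_e2]; simp [sq]
  rw [this, pd_sum _ (fun k => (sm_coord k).mul (sm_coord k))]
  simp only [pd_mul (sm_coord _) (sm_coord _), pd_coord]
  fin_cases i <;> simp <;> ring

lemma pd_fundE (i : Fin 2) {x : E2} (hx : x ≠ 0) :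
    pd i fundE x = -(2 * Real.pi)⁻¹ * (x i / ‖x‖ ^ 2) := by
  have h0 : ‖x‖ ^ 2 ≠ 0 := pow_ne_zero _ (norm_ne_zero_iff.2 hx)
  have h1 : fundE = fun y => (-(2 * Real.pi)⁻¹ / 2) * Real.log (‖y‖ ^ 2) := by
    funext y; simp only [fundE, Real.log_pow]; push_cast; ring
  have h2 : HasFDerivAt (fun y : E2 => ‖y‖ ^ 2) (fderiv ℝ (fun y : E2 => ‖y‖ ^ 2) x) x :=
    (sm_normsq.differentiable x).hasFDerivAt
  have h3 := (h2.log h0).const_mul (-(2 * Real.pi)⁻¹ / 2)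
  have h4 := pd_normsq i x
  simp only [pd] at h4 ⊢
  rw [h1, h3.fderiv]
  simp only [smul_apply, h4, smul_eq_mul]
  field_simp

/-- The logarithm is harmonic away from the origin. -/
lemma lap_fundE {x : E2} (hx : x ≠ 0) : ∑ k, pd k (pd k fundE) x = 0 := by
  have h0 : ‖x‖ ^ 2 ≠ 0 := pow_ne_zero _ (norm_ne_zero_iff.2 hx)
  have key : ∀ k, pd k (pd k fundE) x =
      -(2 * Real.pi)⁻¹ * ((‖x‖ ^ 2 - 2 * x k * x k) / (‖x‖ ^ 2) ^ 2) := by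
    intro k
    have he : pd k fundE =ᶠ[nhds x] fun y => -(2 * Real.pi)⁻¹ * (y k / ‖y‖ ^ 2) := by
      filter_upwards [isOpen_ne.mem_nhds hx] with y hy
      exact pd_fundE k hy
    rw [pd_congr_nhds he]
    have h2 : HasFDerivAt (fun y : E2 => ‖y‖ ^ 2) (fderiv ℝ (fun y : E2 => ‖y‖ ^ 2) x) x :=
      (sm_normsq.differentiable x).hasFDerivAt
    have h5 : HasFDerivAt (fun y : E2 => (‖y‖ ^ 2)⁻¹) _ x := (hasDerivAt_inv h0).comp_hasFDerivAt x h2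
    have h3 := ((hasFDerivAt_coord k x).mul h5).const_mul (-(2 * Real.pi)⁻¹)
    have h4 := pd_normsq k x
    simp only [pd] at h4 ⊢
    simp only [div_eq_mul_inv]
    erw [h3.fderiv]
    simp only [add_apply, smul_apply, smul_eq_mul, h4]
    simp [e2]
    field_simp
    ring
  simp only [key, Fin.sum_univ_two]
  rw [norm_sq_e2] at h0 ⊢
  simp only [Fin.sum_univ_two] at h0 ⊢
  field_simp; ring

lemma abs_coord_le (x : E2) (i : Fin 2) : |x i| ≤ ‖x‖ := by
  simpa using PiLp.norm_apply_le x i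

lemma pd_fundE_bound (i : Fin 2) {x : E2} (hx : x ≠ 0) : |pd i fundE x| ≤ 1 / ‖x‖ := by
  have h0 : 0 < ‖x‖ := norm_pos_iff.2 hx
  rw [pd_fundE i hx, abs_mul, abs_div, abs_neg, abs_of_pos (by positivity : (0:ℝ) < (2 * Real.pi)⁻¹),
    abs_of_pos (by positivity : 0 < ‖x‖ ^ 2)]
  have h1 : (2 * Real.pi)⁻¹ ≤ 1 := inv_le_one_of_one_le₀ (by linarith [Real.pi_gt_three])
  have h2 : |x i| / ‖x‖ ^ 2 ≤ 1 / ‖x‖ := by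
    rw [div_le_div_iff₀ (by positivity) h0]
    have := abs_coord_le x i
    nlinarith
  calc _ ≤ 1 * (|x i| / ‖x‖ ^ 2) := by gcongr
    _ ≤ _ := by simpa using h2

/-- `F` is homogeneous of degree `-k` on `{‖z‖ > 2}`. -/
def Homog (k : ℕ) (F : E2 → ℝ) : Prop :=
  ∀ z : E2, 2 < ‖z‖ → ∀ l : ℝ, 1 ≤ l → l ^ k * F (l • z) = F z

lemma two_lt_nhds {z : E2} (hz : 2 < ‖z‖) : ∀ᶠ y in nhds z, 2 < ‖y‖ :=
  (continuous_norm.isOpen_preimage _ isOpen_Ioi).mem_nhds hz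

lemma sm_smul {F : E2 → ℝ} (hF : Sm F) (c : ℝ) : Sm (fun x => F (c • x)) :=
  ContDiff.comp hF (contDiff_const_smul c)

/-- Differentiation raises the order of homogeneity by one. -/
lemma Homog.pd {k : ℕ} {F : E2 → ℝ} (hF : Sm F) (h : Homog k F) (i : Fin 2) :
    Homog (k + 1) (pd i F) := by
  intro z hz l hl
  have he : (fun x => l ^ k * F (l • x)) =ᶠ[nhds z] F := by
    filter_upwards [two_lt_nhds hz] with y hy using h y hy l hl
  rw [← pd_congr_nhds he i, pd_const_mul (sm_smul hF l), pd_comp_smul]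
  ring

/-- The far-field kernel itself is only homogeneous up to an additive constant, which its gradient
does not see. -/
lemma homog_pd_B {θ : E2 → ℝ} (hθ : IsCutoff θ) (i : Fin 2) : Homog 1 (pd i (oneThetaE θ)) := by
  intro z hz l hl
  have he : (fun x => oneThetaE θ (l • x)) =ᶠ[nhds z]
      fun x => oneThetaE θ x - (2 * Real.pi)⁻¹ * Real.log l := by
    filter_upwards [two_lt_nhds hz] with y hy
    have hy0 : y ≠ 0 := by rintro rfl; simp at hy; linarith
    have h2 : 2 ≤ ‖l • y‖ := by
      rw [norm_smul, Real.norm_eq_abs, abs_of_pos (by linarith)]; nlinarith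
    rw [oneThetaE_far hθ h2, oneThetaE_far hθ hy.le, fundE_smul (by linarith) hy0]
  have := pd_congr_nhds he i
  rw [pd_comp_smul, pd_sub_const] at this
  simpa using this

/-- A continuous function with this homogeneity decays: scale to the sphere `|z| = 3` when `|z| > 3`,
and use compactness otherwise. -/
lemma Homog.decay {k : ℕ} {F : E2 → ℝ} (hF : Continuous F) (h : Homog k F) :
    ∃ C : ℝ, 0 < C ∧ ∀ z, |F z| ≤ C / (1 + ‖z‖) ^ k := by
  obtain ⟨C0, hC0⟩ := (isCompact_closedBall (0 : E2) 3).exists_bound_of_continuousOn hF.continuousOn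
  have hC : ∀ z : E2, ‖z‖ ≤ 3 → |F z| ≤ max C0 1 := fun z hz =>
    (hC0 z (by simpa using hz)).trans (le_max_left _ _)
  have hm : 0 < max C0 1 := lt_max_of_lt_right one_pos
  refine ⟨max C0 1 * 4 ^ k, by positivity, fun z => ?_⟩
  rw [le_div_iff₀ (by positivity)]
  rcases le_or_gt ‖z‖ 3 with hz | hz
  · have := hC z hz
    have h2 : (1 + ‖z‖) ^ k ≤ 4 ^ k := by gcongr; linarith
    gcongr
  · set l := ‖z‖ / 3 with hl
    have hl1 : 1 ≤ l := by rw [hl]; linarith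
    have hl0 : 0 < l := by linarith
    have hz0 : ‖l⁻¹ • z‖ = 3 := by
      rw [norm_smul, Real.norm_eq_abs, abs_of_pos (by positivity), hl]
      field_simp
    have h3 := h (l⁻¹ • z) (by rw [hz0]; norm_num) l hl1
    rw [smul_smul, mul_inv_cancel₀ hl0.ne', one_smul] at h3
    have h4 := hC _ hz0.le
    rw [← h3, abs_mul, abs_of_pos (by positivity : 0 < l ^ k)] at h4
    have h5 : (1 + ‖z‖) ^ k ≤ (4 * l) ^ k := by gcongr; rw [hl]; linarith
    calc |F z| * (1 + ‖z‖) ^ k ≤ |F z| * (4 * l) ^ k := by gcongr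
      _ = (l ^ k * |F z|) * 4 ^ k := by rw [mul_pow]; ring
      _ ≤ _ := by gcongr

/-- The far-field kernel at scale `r`. Up to an additive constant it coincides with `E` on
`{‖x‖ ≥ 2r}`, and it vanishes on `{‖x‖ ≤ r}`. -/
def Bs (θ : E2 → ℝ) (r : ℝ) (x : E2) : ℝ := oneThetaE θ (r⁻¹ • x)

lemma Bs_sm {θ : E2 → ℝ} (hθ : IsCutoff θ) (r : ℝ) : Sm (Bs θ r) := sm_smul (oneThetaE_sm hθ) _

lemma Bs_one (θ : E2 → ℝ) : Bs θ 1 = oneThetaE θ := by funext x; simp [Bs]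

lemma pd_Bs (θ : E2 → ℝ) (r : ℝ) (i : Fin 2) :
    pd i (Bs θ r) = fun x => r⁻¹ * pd i (oneThetaE θ) (r⁻¹ • x) := pd_comp_smul _ _ _

lemma pd2_Bs {θ : E2 → ℝ} (hθ : IsCutoff θ) (r : ℝ) (i j : Fin 2) :
    pd i (pd j (Bs θ r)) = fun x => r⁻¹ ^ 2 * pd i (pd j (oneThetaE θ)) (r⁻¹ • x) := by
  rw [pd_Bs, pd_const_mul (sm_smul ((oneThetaE_sm hθ).pd j) _), pd_comp_smul]
  funext x; ring

lemma pd3_Bs {θ : E2 → ℝ} (hθ : IsCutoff θ) (r : ℝ) (i j k : Fin 2) :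
    pd i (pd j (pd k (Bs θ r))) =
      fun x => r⁻¹ ^ 3 * pd i (pd j (pd k (oneThetaE θ))) (r⁻¹ • x) := by
  rw [pd2_Bs hθ, pd_const_mul (sm_smul (((oneThetaE_sm hθ).pd k).pd j) _), pd_comp_smul]
  funext x; ring

lemma scale_bound {F : E2 → ℝ} {C : ℝ} {k : ℕ} (h : ∀ z, |F z| ≤ C / (1 + ‖z‖) ^ k) {r : ℝ}
    (hr : 0 < r) (x : E2) : |r⁻¹ ^ k * F (r⁻¹ • x)| ≤ C / (r + ‖x‖) ^ k := by
  have h1 := h (r⁻¹ • x)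
  rw [norm_smul, Real.norm_eq_abs, abs_of_pos (by positivity : 0 < r⁻¹)] at h1
  rw [abs_mul, abs_of_pos (by positivity : 0 < r⁻¹ ^ k)]
  calc _ ≤ r⁻¹ ^ k * (C / (1 + r⁻¹ * ‖x‖) ^ k) := by gcongr
    _ = C / (r + ‖x‖) ^ k := by
      have : r + ‖x‖ = r * (1 + r⁻¹ * ‖x‖) := by field_simp
      rw [this, mul_pow, inv_pow]
      field_simp

lemma exists_fin_bound {ι : Type*} [Finite ι] (c : ι → ℝ) : ∃ C : ℝ, 1 ≤ C ∧ ∀ i, c i ≤ C := by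
  obtain ⟨C, hC⟩ := (Set.finite_range c).bddAbove
  exact ⟨max C 1, le_max_right _ _, fun i => (hC ⟨i, rfl⟩).trans (le_max_left _ _)⟩

/-- Uniform decay of the first three derivatives of the rescaled far-field kernels. -/
lemma kernel_bounds {θ : E2 → ℝ} (hθ : IsCutoff θ) : ∃ C : ℝ, 1 ≤ C ∧ ∀ r : ℝ, 0 < r → ∀ x : E2,
    (∀ i, |pd i (Bs θ r) x| ≤ C / (r + ‖x‖)) ∧
    (∀ i j, |pd i (pd j (Bs θ r)) x| ≤ C / (r + ‖x‖) ^ 2) ∧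
    (∀ i j k, |pd i (pd j (pd k (Bs θ r))) x| ≤ C / (r + ‖x‖) ^ 3) := by
  have hB := oneThetaE_sm hθ
  choose C1 hC1 h1 using fun i => Homog.decay (hB.pd i).cont (homog_pd_B hθ i)
  choose C2 hC2 h2 using fun i j => Homog.decay ((hB.pd j).pd i).cont
    ((homog_pd_B hθ j).pd (hB.pd j) i)
  choose C3 hC3 h3 using fun i j k => Homog.decay (((hB.pd k).pd j).pd i).cont
    (((homog_pd_B hθ k).pd (hB.pd k) j).pd ((hB.pd k).pd j) i)
  obtain ⟨K1, hK1, k1⟩ := exists_fin_bound C1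
  obtain ⟨K2, hK2, k2⟩ := exists_fin_bound fun p : Fin 2 × Fin 2 => C2 p.1 p.2
  obtain ⟨K3, hK3, k3⟩ := exists_fin_bound fun p : Fin 2 × Fin 2 × Fin 2 => C3 p.1 p.2.1 p.2.2
  refine ⟨K1 + K2 + K3, by linarith, ?_⟩
  intro r hr x
  have hrx : 0 < r + ‖x‖ := by positivity
  refine ⟨fun i => ?_, fun i j => ?_, fun i j k => ?_⟩
  · rw [pd_Bs]
    have := scale_bound (h1 i) hr x
    simp only [pow_one] at this
    refine this.trans ?_
    gcongr
    linarith [k1 i]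
  · rw [pd2_Bs hθ]
    refine (scale_bound (h2 i j) hr x).trans ?_
    gcongr
    linarith [k2 (i, j)]
  · rw [pd3_Bs hθ]
    refine (scale_bound (h3 i j k) hr x).trans ?_
    gcongr
    linarith [k3 (i, j, k)]

lemma Bs_far {θ : E2 → ℝ} (hθ : IsCutoff θ) {r : ℝ} (hr : 0 < r) {x : E2} (hx : 2 * r ≤ ‖x‖) :
    Bs θ r x = fundE x + (2 * Real.pi)⁻¹ * Real.log r := by
  have h1 : 2 ≤ ‖r⁻¹ • x‖ := by
    rw [norm_smul, Real.norm_eq_abs, abs_of_pos (by positivity)]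
    rw [← div_eq_inv_mul, le_div_iff₀ hr]; exact hx
  have hx0 : x ≠ 0 := by rintro rfl; simp at hx; linarith
  rw [Bs, oneThetaE_far hθ h1, fundE_smul (by positivity) hx0, Real.log_inv]; ring

lemma Bs_near {θ : E2 → ℝ} (hθ : IsCutoff θ) {r : ℝ} (hr : 0 < r) {x : E2} (hx : ‖x‖ ≤ r) :
    Bs θ r x = 0 := by
  apply oneThetaE_zero hθ
  rw [norm_smul, Real.norm_eq_abs, abs_of_pos (by positivity), ← div_eq_inv_mul, div_le_one hr]
  exact hx

/-- The smooth compactly supported kernel interpolating between the scales `d` and `r`. -/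
def Mk (θ : E2 → ℝ) (d r : ℝ) (x : E2) : ℝ :=
  (Bs θ d x - Bs θ r x) - (2 * Real.pi)⁻¹ * (Real.log d - Real.log r)

lemma Mk_sm {θ : E2 → ℝ} (hθ : IsCutoff θ) (d r : ℝ) : Sm (Mk θ d r) :=
  ((Bs_sm hθ d).sub (Bs_sm hθ r)).sub contDiff_const

lemma Mk_zero {θ : E2 → ℝ} (hθ : IsCutoff θ) {d r : ℝ} (hd : 0 < d) (hdr : d ≤ r) {x : E2}
    (hx : 2 * r ≤ ‖x‖) : Mk θ d r x = 0 := by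
  rw [Mk, Bs_far hθ hd (by linarith), Bs_far hθ (by linarith) hx]; ring

lemma Mk_cs {θ : E2 → ℝ} (hθ : IsCutoff θ) {d r : ℝ} (hd : 0 < d) (hdr : d ≤ r) :
    HasCompactSupport (Mk θ d r) := cs_of_zero_off fun _ hx => Mk_zero hθ hd hdr (le_of_lt hx)

lemma pd_Mk {θ : E2 → ℝ} (hθ : IsCutoff θ) (d r : ℝ) (i : Fin 2) :
    pd i (Mk θ d r) = fun x => pd i (Bs θ d) x - pd i (Bs θ r) x := by
  have : Mk θ d r = fun x => (fun y => Bs θ d y - Bs θ r y) x -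
    (2 * Real.pi)⁻¹ * (Real.log d - Real.log r) := rfl
  rw [this, pd_sub_const, pd_sub (Bs_sm hθ d) (Bs_sm hθ r)]

lemma pd2_Mk {θ : E2 → ℝ} (hθ : IsCutoff θ) (d r : ℝ) (i j : Fin 2) :
    pd i (pd j (Mk θ d r)) = fun x => pd i (pd j (Bs θ d)) x - pd i (pd j (Bs θ r)) x := by
  rw [pd_Mk hθ, pd_sub ((Bs_sm hθ d).pd j) ((Bs_sm hθ r).pd j)]

lemma pd3_Mk {θ : E2 → ℝ} (hθ : IsCutoff θ) (d r : ℝ) (i j k : Fin 2) :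
    pd i (pd j (pd k (Mk θ d r))) =
      fun x => pd i (pd j (pd k (Bs θ d))) x - pd i (pd j (pd k (Bs θ r))) x := by
  rw [pd2_Mk hθ, pd_sub (((Bs_sm hθ d).pd k).pd j) (((Bs_sm hθ r).pd k).pd j)]

/-- The near-field kernel at scale `d`: the gradient of `E` minus that of the far-field kernel. -/
def Dk (θ : E2 → ℝ) (d : ℝ) (i : Fin 2) (x : E2) : ℝ := pd i fundE x - pd i (Bs θ d) x

lemma Dk_zero {θ : E2 → ℝ} (hθ : IsCutoff θ) {d : ℝ} (hd : 0 < d) (i : Fin 2) {x : E2}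
    (hx : 2 * d < ‖x‖) : Dk θ d i x = 0 := by
  have : Bs θ d =ᶠ[nhds x] fun y => fundE y - (-((2 * Real.pi)⁻¹ * Real.log d)) := by
    filter_upwards [(continuous_norm.isOpen_preimage _ isOpen_Ioi).mem_nhds hx] with y hy
    rw [Bs_far hθ hd (le_of_lt hy)]; ring
  rw [Dk, pd_congr_nhds this, pd_sub_const, sub_self]

/-- Away from the origin the near-field kernel of the pressure is `Dk` at scale `d` plus the gradient
of the interpolating kernel between the scales `d` and `1`. -/
lemma pd_thetaE {θ : E2 → ℝ} (hθ : IsCutoff θ) (d : ℝ) (i : Fin 2) {x : E2} (hx : x ≠ 0) :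
    pd i (thetaE θ) x = Dk θ d i x + pd i (Mk θ d 1) x := by
  rw [pd_Mk hθ, Bs_one, Dk]
  have h1 : thetaE θ = fun y => fundE y - oneThetaE θ y := by
    funext y; simp only [thetaE, oneThetaE]; ring
  have h2 : pd i (thetaE θ) x = pd i fundE x - pd i (oneThetaE θ) x := by
    rw [h1]
    simp only [pd]
    rw [fderiv_fun_sub ((fundE_contDiffAt hx).differentiableAt (by simp))
      ((oneThetaE_sm hθ).differentiable x)]; rfl
  rw [h2]; ring

/-! ### Integral inequalities -/

/-- The area of the unit disc. -/
def V2 : ℝ := (volume : Measure E2).real (ball 0 1)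

lemma V2_nonneg : 0 ≤ V2 := measureReal_nonneg

/-- The radial majorant `1/|x|` on the disc of radius `r`. -/
def K1 (r : ℝ) (x : E2) : ℝ := (Set.Ioc 0 r).indicator (fun s => 1 / s) ‖x‖

/-- The radial majorant `1/|x|²` on the annulus `d < |x| ≤ r`. -/
def K2 (d r : ℝ) (x : E2) : ℝ := (Set.Ioc d r).indicator (fun s => 1 / s ^ 2) ‖x‖

lemma K1_nonneg (r : ℝ) (x : E2) : 0 ≤ K1 r x :=
  Set.indicator_nonneg (fun _ hs => one_div_nonneg.2 hs.1.le) _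

lemma K2_nonneg (d r : ℝ) (x : E2) : 0 ≤ K2 d r x :=
  Set.indicator_nonneg (fun _ _ => by positivity) _

lemma K1_zero {r : ℝ} {x : E2} (hx : r < ‖x‖) : K1 r x = 0 :=
  Set.indicator_of_notMem (fun h => absurd h.2 (not_le.2 hx)) _

lemma K2_zero {d r : ℝ} {x : E2} (hx : r < ‖x‖) : K2 d r x = 0 :=
  Set.indicator_of_notMem (fun h => absurd h.2 (not_le.2 hx)) _

lemma finrank_E2 : Module.finrank ℝ E2 = 2 := by simp

lemma K1_int {r : ℝ} (hr : 0 < r) : Integrable (K1 r) ∧ ∫ x, K1 r x = 2 * V2 * r := by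
  have key : ∀ y : ℝ, y ^ (Module.finrank ℝ E2 - 1) • (Set.Ioc 0 r).indicator (fun s => 1 / s) y
      = (Set.Ioc 0 r).indicator (fun _ => (1 : ℝ)) y := by
    intro y
    rw [finrank_E2]
    by_cases hy : y ∈ Set.Ioc 0 r
    · rw [Set.indicator_of_mem hy, Set.indicator_of_mem hy]
      have : y ≠ 0 := hy.1.ne'
      simp [this]
    · rw [Set.indicator_of_notMem hy, Set.indicator_of_notMem hy, smul_zero]
  have hsub : Set.Ioc 0 r ⊆ Set.Ioi 0 := fun y hy => hy.1
  constructor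
  · refine (integrable_fun_norm_addHaar (E := E2) volume).2 ?_
    simp only [key]
    apply Integrable.integrableOn
    rw [integrable_indicator_iff measurableSet_Ioc]
    exact integrableOn_const (by simp)
  · have := integral_fun_norm_addHaar (E := E2) volume ((Set.Ioc 0 r).indicator (fun s => 1 / s))
    unfold K1
    rw [this]
    simp only [key]
    rw [setIntegral_indicator measurableSet_Ioc, Set.inter_eq_self_of_subset_right hsub, finrank_E2]
    simp [V2, hr.le]; ring

lemma K2_int {d r : ℝ} (hd : 0 < d) (hdr : d ≤ r) :
    Integrable (K2 d r) ∧ ∫ x, K2 d r x = 2 * V2 * Real.log (r / d) := by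
  have hr : 0 < r := by linarith
  have key : ∀ y : ℝ, y ^ (Module.finrank ℝ E2 - 1) • (Set.Ioc d r).indicator (fun s => 1 / s ^ 2) y
      = (Set.Ioc d r).indicator (fun y => 1 / y) y := by
    intro y
    rw [finrank_E2]
    by_cases hy : y ∈ Set.Ioc d r
    · rw [Set.indicator_of_mem hy, Set.indicator_of_mem hy]
      have : y ≠ 0 := (hd.trans hy.1).ne'
      simp; field_simp
    · rw [Set.indicator_of_notMem hy, Set.indicator_of_notMem hy, smul_zero]
  have hsub : Set.Ioc d r ⊆ Set.Ioi 0 := fun y hy => hd.trans hy.1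
  constructor
  · refine (integrable_fun_norm_addHaar (E := E2) volume).2 ?_
    simp only [key]
    apply Integrable.integrableOn
    rw [integrable_indicator_iff measurableSet_Ioc]
    rw [← intervalIntegrable_iff_integrableOn_Ioc_of_le hdr]
    apply intervalIntegral.intervalIntegrable_one_div
    · intro x hx; rw [Set.uIcc_of_le hdr] at hx; linarith [hx.1]
    · exact continuousOn_id
  · have := integral_fun_norm_addHaar (E := E2) volume
      ((Set.Ioc d r).indicator (fun s => 1 / s ^ 2))
    unfold K2
    rw [this]
    simp only [key]
    rw [setIntegral_indicator measurableSet_Ioc, Set.inter_eq_self_of_subset_right hsub, finrank_E2,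
      ← intervalIntegral.integral_of_le hdr, integral_one_div_of_pos hd hr]
    simp [V2]; ring

lemma intOn_ball {f : E2 → ℝ} (hf : Continuous f) (r : ℝ) : IntegrableOn f (ball 0 r) :=
  (hf.continuousOn.integrableOn_compact (isCompact_closedBall 0 r)).mono_set ball_subset_closedBall

/-- An integrand supported in a disc may be bounded on that disc only. -/
lemma abs_int_le {f g : E2 → ℝ} {r : ℝ} (h0 : ∀ x, r ≤ ‖x‖ → f x = 0)
    (hg : IntegrableOn g (ball 0 r)) (h : ∀ x, ‖x‖ < r → |f x| ≤ g x) :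
    |∫ x, f x| ≤ ∫ x in ball 0 r, g x := by
  rw [← integral_indicator measurableSet_ball]
  refine norm_integral_le_of_norm_le (μ := volume) (f := f)
    (g := (ball (0 : E2) r).indicator g) (hg.integrable_indicator measurableSet_ball)
    (Filter.Eventually.of_forall fun x => ?_)
  by_cases hx : x ∈ ball (0 : E2) r
  · rw [Set.indicator_of_mem hx]; exact h x (by simpa using hx)
  · rw [Set.indicator_of_notMem hx, h0 x (by simpa using hx)]; simp

lemma ball_mono_int {f : E2 → ℝ} (hf : Continuous f) (h0 : ∀ x, 0 ≤ f x) {r s : ℝ} (h : r ≤ s) :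
    ∫ x in ball 0 r, f x ≤ ∫ x in ball 0 s, f x :=
  setIntegral_mono_set (intOn_ball hf s) (Filter.Eventually.of_forall h0)
    (ball_subset_ball h).eventuallyLE

lemma ind_int {h : E2 → ℝ} (hh : Continuous h) (s : ℝ) :
    Integrable ((ball (0 : E2) s).indicator h) :=
  (intOn_ball hh s).integrable_indicator measurableSet_ball

lemma ind_bdd {h : E2 → ℝ} (hh : Continuous h) (s : ℝ) :
    ∃ C, ∀ y, ‖(ball (0 : E2) s).indicator h y‖ ≤ C := by
  obtain ⟨C, hC⟩ := (isCompact_closedBall (0 : E2) s).exists_bound_of_continuousOn hh.continuousOn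
  refine ⟨max C 0, fun y => ?_⟩
  by_cases hy : y ∈ ball (0 : E2) s
  · rw [Set.indicator_of_mem hy]
    exact (hC y (ball_subset_closedBall hy)).trans (le_max_left _ _)
  · rw [Set.indicator_of_notMem hy]; simp

lemma cut_eq {K h : E2 → ℝ} {s t : ℝ} (hz : ∀ x, s < ‖x‖ → K x = 0) {x : E2} (hx : ‖x‖ < t) (y : E2) :
    K (x - y) * h y = K (x - y) * (ball (0 : E2) (t + s)).indicator h y := by
  by_cases hy : y ∈ ball (0 : E2) (t + s)
  · rw [Set.indicator_of_mem hy]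
  · have : s < ‖x - y‖ := by
      have h1 : t + s ≤ ‖y‖ := by simpa using hy
      have h2 := norm_sub_norm_le y x
      rw [norm_sub_rev] at h2
      linarith
    rw [hz _ this]; simp

/-- Convergence of the convolution of an integrable compactly supported kernel with a
continuous function. -/
lemma cvK_integrable {K h : E2 → ℝ} {s : ℝ} (hK : Integrable K) (hz : ∀ x, s < ‖x‖ → K x = 0)
    (hh : Continuous h) (x : E2) : Integrable (fun y => K (x - y) * h y) := by
  have h1 : ∀ y, K (x - y) * h y = K (x - y) * (ball (0 : E2) (‖x‖ + 1 + s)).indicator h y :=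
    fun y => cut_eq hz (by linarith) y
  simp only [h1]
  obtain ⟨C, hC⟩ := ind_bdd hh (‖x‖ + 1 + s)
  exact (hK.comp_sub_left x).mul_bdd (ind_int hh _).aestronglyMeasurable
    (Filter.Eventually.of_forall hC)

/-- Young's inequality `L¹ * L¹ ⊂ L¹`, localised to discs. -/
lemma young {K h : E2 → ℝ} {s : ℝ} (t : ℝ) (hK : Integrable K) (hK0 : ∀ x, 0 ≤ K x)
    (hz : ∀ x, s < ‖x‖ → K x = 0) (hh : Continuous h) (hh0 : ∀ x, 0 ≤ h x) :
    IntegrableOn (cv K h) (ball 0 t) ∧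
    ∫ x in ball 0 t, cv K h x ≤ (∫ x, K x) * ∫ x in ball 0 (t + s), h x := by
  set H := (ball (0 : E2) (t + s)).indicator h with hH
  have hHi : Integrable H := ind_int hh _
  have hH0 : ∀ y, 0 ≤ H y := fun y => Set.indicator_nonneg (fun y _ => hh0 y) y
  have e1 : ∀ x ∈ ball (0 : E2) t, cv K h x = cv K H x := by
    intro x hx
    simp only [cv]
    congr 1; funext y
    exact cut_eq hz (by simpa using hx) y
  have hci : Integrable (cv K H) := by
    rw [cv_eq_conv]
    exact hHi.integrable_convolution _ hK
  have h2 : ∫ x, cv K H x = (∫ x, K x) * ∫ x in ball 0 (t + s), h x := by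
    rw [cv_eq_conv, integral_convolution _ hHi hK, hH, integral_indicator measurableSet_ball]
    simp; ring
  constructor
  · exact hci.integrableOn.congr_fun (fun x hx => (e1 x hx).symm) measurableSet_ball
  · rw [setIntegral_congr_fun measurableSet_ball e1, ← h2]
    exact setIntegral_le_integral hci (Filter.Eventually.of_forall fun x =>
      integral_nonneg fun y => mul_nonneg (hK0 _) (hH0 _))

/-- Cauchy–Schwarz on discs. -/
lemma cs_ball {f g : E2 → ℝ} (hf : Continuous f) (hg : Continuous g) (f0 : ∀ x, 0 ≤ f x)
    (g0 : ∀ x, 0 ≤ g x) {r X Y : ℝ} (hX : ∫ x in ball 0 r, f x ^ 2 ≤ X)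
    (hY : ∫ x in ball 0 r, g x ^ 2 ≤ Y) :
    ∫ x in ball 0 r, f x * g x ≤ √X * √Y := by
  have m : ∀ {k : E2 → ℝ}, Continuous k → MemLp k (ENNReal.ofReal 2) (volume.restrict (ball (0 : E2) r)) := by
    intro k hk
    have : ENNReal.ofReal 2 = 2 := by simp
    rw [this, memLp_two_iff_integrable_sq hk.aestronglyMeasurable]
    exact intOn_ball (hk.pow 2) r
  have h := integral_mul_le_Lp_mul_Lq_of_nonneg (μ := volume.restrict (ball (0 : E2) r))
    Real.HolderConjugate.two_two (Filter.Eventually.of_forall f0) (Filter.Eventually.of_forall g0)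
    (m hf) (m hg)
  refine h.trans ?_
  simp only [Real.sqrt_eq_rpow, Real.rpow_two]
  have hX0 : 0 ≤ ∫ x in ball 0 r, f x ^ 2 := integral_nonneg fun x => by positivity
  have hY0 : 0 ≤ ∫ x in ball 0 r, g x ^ 2 := integral_nonneg fun x => by positivity
  have hX1 : 0 ≤ X := hX0.trans hX
  gcongr

/-- Tail integrals against `(R+|y|)⁻³`, computed by integrating over the discs `B(0,r)`, `r > R`. -/
lemma layer {H : E2 → ℝ} (hH : Continuous H) (H0 : ∀ x, 0 ≤ H x) {D s : ℝ} (hD : 0 ≤ D) (hs : s < 3)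
    (hb : ∀ r : ℝ, 1 ≤ r → ∫ x in ball 0 r, H x ≤ D * r ^ s) {R : ℝ} (hR : 1 ≤ R) :
    Integrable (fun y => H y / (R + ‖y‖) ^ 3) ∧
    ∫ y, H y / (R + ‖y‖) ^ 3 ≤ D * (3 / (3 - s)) * R ^ (s - 3) := by
  have hR0 : 0 < R := by linarith
  set B := D * (3 / (3 - s)) * R ^ (s - 3) with hB
  have hB0 : 0 ≤ B := by
    have : 0 < 3 - s := by linarith
    positivity
  have hcont : Continuous (fun y => H y / (R + ‖y‖) ^ 3) :=
    hH.div (by fun_prop) (fun y => by positivity)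
  have hnn : ∀ y, 0 ≤ H y / (R + ‖y‖) ^ 3 := fun y => div_nonneg (H0 y) (by positivity)
  have main : ∫⁻ y, ENNReal.ofReal (H y / (R + ‖y‖) ^ 3) ≤ ENNReal.ofReal B := by
    have e1 : ∀ y : E2, ENNReal.ofReal (H y / (R + ‖y‖) ^ 3) =
        ∫⁻ r in Set.Ioi R, (Set.Ioi (R + ‖y‖)).indicator
          (fun r => ENNReal.ofReal (3 * r ^ (-4 : ℝ))) r * ENNReal.ofReal (H y) := by
      intro y
      have hp : 0 < R + ‖y‖ := by positivity
      rw [lintegral_mul_const'' _ (by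
        refine (Measurable.indicator ?_ measurableSet_Ioi).aemeasurable
        fun_prop), lintegral_indicator measurableSet_Ioi,
        Measure.restrict_restrict measurableSet_Ioi, Set.inter_eq_self_of_subset_left
        (Set.Ioi_subset_Ioi (by linarith [norm_nonneg y])),
        ← ofReal_integral_eq_lintegral_ofReal
          ((integrableOn_Ioi_rpow_of_lt (by norm_num) hp).const_mul 3)
          ((ae_restrict_mem measurableSet_Ioi).mono fun r hr => by
            have : 0 < r := hp.trans hr
            positivity),
        integral_const_mul, integral_Ioi_rpow_of_lt (by norm_num) hp, ← ENNReal.ofReal_mul (by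
          have : (-4 + 1 : ℝ) < 0 := by norm_num
          have h3 : 0 < (R + ‖y‖) ^ (-4 + 1 : ℝ) := Real.rpow_pos_of_pos hp _
          have : 0 ≤ -(R + ‖y‖) ^ (-4 + 1 : ℝ) / (-4 + 1) :=
            div_nonneg_of_nonpos (by linarith) (by norm_num)
          positivity)]
      congr 1
      have : (-4 + 1 : ℝ) = -(3 : ℕ) := by norm_num
      rw [this, Real.rpow_neg hp.le, Real.rpow_natCast]
      field_simp; norm_num
    simp only [e1]
    rw [lintegral_lintegral_swap (by
      refine Measurable.aemeasurable ?_
      refine Measurable.mul ?_ (by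
        exact (ENNReal.measurable_ofReal.comp (hH.measurable)).comp measurable_fst)
      have : (fun a : E2 × ℝ => (Set.Ioi (R + ‖a.1‖)).indicator
          (fun r => ENNReal.ofReal (3 * r ^ (-4 : ℝ))) a.2) =
          {p : E2 × ℝ | R + ‖p.1‖ < p.2}.indicator
            (fun p => ENNReal.ofReal (3 * p.2 ^ (-4 : ℝ))) := by
        funext p; simp only [Set.indicator, Set.mem_Ioi, Set.mem_ofPred_eq]
      rw [this]
      refine Measurable.indicator (by fun_prop) ?_
      exact measurableSet_lt (by fun_prop) (by fun_prop))]
    have e2 : ∀ r ∈ Set.Ioi R, ∫⁻ y, (Set.Ioi (R + ‖y‖)).indicator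
          (fun r => ENNReal.ofReal (3 * r ^ (-4 : ℝ))) r * ENNReal.ofReal (H y) ≤
          ENNReal.ofReal (3 * D * r ^ (s - 4)) := by
      intro r hr
      have hr0 : 0 < r := hR0.trans hr
      calc _ ≤ ∫⁻ y, (ball (0 : E2) r).indicator (fun y => ENNReal.ofReal (3 * r ^ (-4 : ℝ)) *
              ENNReal.ofReal (H y)) y := by
            apply lintegral_mono
            intro y
            by_cases hy : R + ‖y‖ < r
            · have : y ∈ ball (0 : E2) r := by simp; linarith
              simp only [Set.indicator_of_mem this]
              rw [Set.indicator_of_mem (show r ∈ Set.Ioi (R + ‖y‖) from hy)]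
            · dsimp only
              rw [Set.indicator_of_notMem (show r ∉ Set.Ioi (R + ‖y‖) from hy)]; simp
        _ = ENNReal.ofReal (3 * r ^ (-4 : ℝ)) * ∫⁻ y in ball 0 r, ENNReal.ofReal (H y) := by
            rw [lintegral_indicator measurableSet_ball, lintegral_const_mul' _ _ ENNReal.ofReal_ne_top]
        _ = ENNReal.ofReal (3 * r ^ (-4 : ℝ)) * ENNReal.ofReal (∫ y in ball 0 r, H y) := by
            rw [ofReal_integral_eq_lintegral_ofReal (intOn_ball hH r)
              (Filter.Eventually.of_forall H0)]
        _ ≤ ENNReal.ofReal (3 * r ^ (-4 : ℝ)) * ENNReal.ofReal (D * r ^ s) := by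
            gcongr; exact hb r (hR.trans (le_of_lt hr))
        _ = _ := by
            rw [← ENNReal.ofReal_mul (by positivity)]
            congr 1
            have : s - 4 = -4 + s := by ring
            rw [this, Real.rpow_add hr0]; ring
    refine (setLIntegral_mono' measurableSet_Ioi e2).trans ?_
    rw [← ofReal_integral_eq_lintegral_ofReal
          ((integrableOn_Ioi_rpow_of_lt (by linarith) hR0).const_mul (3 * D))
          ((ae_restrict_mem measurableSet_Ioi).mono fun r hr => by
            have : 0 < r := hR0.trans hr
            positivity), integral_const_mul, integral_Ioi_rpow_of_lt (by linarith) hR0]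
    apply le_of_eq
    congr 1
    rw [hB]
    have h3 : 3 - s ≠ 0 := by linarith
    have h4 : s - 4 + 1 = s - 3 := by ring
    have h5 : s - 3 ≠ 0 := by linarith
    rw [h4]
    field_simp
    ring
  have h_int : Integrable (fun y => H y / (R + ‖y‖) ^ 3) := by
    refine ⟨hcont.aestronglyMeasurable, ?_⟩
    rw [hasFiniteIntegral_iff_ofReal (Filter.Eventually.of_forall hnn)]
    exact main.trans_lt ENNReal.ofReal_lt_top
  refine ⟨h_int, ?_⟩
  rw [← ENNReal.ofReal_le_ofReal_iff hB0,
    ofReal_integral_eq_lintegral_ofReal h_int (Filter.Eventually.of_forall hnn)]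
  exact main

/-! ### The mollifier `Δ((1-θ)E)` -/

/-- The Laplacian of the far-field kernel at scale `r`: a multiple of an approximate identity. -/
def gk (θ : E2 → ℝ) (r : ℝ) (x : E2) : ℝ := ∑ k, pd k (pd k (Bs θ r)) x

lemma gk_sm {θ : E2 → ℝ} (hθ : IsCutoff θ) (r : ℝ) : Sm (gk θ r) :=
  ContDiff.sum fun k _ => ((Bs_sm hθ r).pd k).pd k

lemma gk_zero {θ : E2 → ℝ} (hθ : IsCutoff θ) {r : ℝ} (hr : 0 < r) {x : E2} (hx : 2 * r < ‖x‖) :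
    gk θ r x = 0 := by
  have hx0 : x ≠ 0 := by rintro rfl; simp at hx; linarith
  rw [gk, ← lap_fundE hx0]
  refine Finset.sum_congr rfl fun k _ => ?_
  apply pd_congr_nhds
  filter_upwards [(continuous_norm.isOpen_preimage _ isOpen_Ioi).mem_nhds hx] with y hy
  have := Dk_zero hθ hr k hy
  rw [Dk] at this; linarith

lemma gk_cs {θ : E2 → ℝ} (hθ : IsCutoff θ) {r : ℝ} (hr : 0 < r) : HasCompactSupport (gk θ r) :=
  cs_of_zero_off fun _ hx => gk_zero hθ hr hx

lemma pd_gk {θ : E2 → ℝ} (hθ : IsCutoff θ) (r : ℝ) (i : Fin 2) :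
    pd i (gk θ r) = fun x => ∑ k, pd i (pd k (pd k (Bs θ r))) x :=
  pd_sum _ (fun k => ((Bs_sm hθ r).pd k).pd k) i

lemma gk_sub {θ : E2 → ℝ} (hθ : IsCutoff θ) (d r : ℝ) (x : E2) :
    ∑ k, pd k (pd k (Mk θ d r)) x = gk θ d x - gk θ r x := by
  simp only [pd2_Mk hθ, gk, Finset.sum_sub_distrib]

/-- The total mass of the mollifier. -/
def cg (θ : E2 → ℝ) : ℝ := ∫ x, gk θ 1 x

/-- The mass does not depend on the scale: mollifiers at two scales differ by the Laplacian of a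
compactly supported function. -/
lemma gk_mass {θ : E2 → ℝ} (hθ : IsCutoff θ) {d : ℝ} (hd : 0 < d) (hd1 : d ≤ 1) :
    ∫ x, gk θ d x = cg θ := by
  have h : ∫ x, ∑ k, pd k (pd k (Mk θ d 1)) x = 0 := by
    rw [integral_finsetSum]
    · exact Finset.sum_eq_zero fun k _ =>
        int_pd_zero ((Mk_sm hθ d 1).pd k) (pd_cs (Mk_cs hθ hd hd1) k) k
    · exact fun k _ => cs_int (((Mk_sm hθ d 1).pd k).pd k).cont
        (pd_cs (pd_cs (Mk_cs hθ hd hd1) k) k)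
  simp only [gk_sub hθ] at h
  rw [integral_sub (cs_int (gk_sm hθ d).cont (gk_cs hθ hd))
    (cs_int (gk_sm hθ 1).cont (gk_cs hθ one_pos))] at h
  rw [cg]; linarith

/-- The mass is nonzero: tested against a radially decreasing bump equal to `1` on the support,
it is the integral of a function of constant sign. -/
lemma cg_ne {θ : E2 → ℝ} (hθ : IsCutoff θ) : cg θ ≠ 0 := by
  intro hc
  let h : ℝ → ℝ := fun s => Real.smoothTransition (5 - s)
  have hsm : ContDiff ℝ (⊤ : ℕ∞) h :=
    Real.smoothTransition.contDiff.comp (contDiff_const.sub contDiff_id)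
  have hd : Differentiable ℝ h := hsm.differentiable (by simp)
  have hanti : Antitone h := fun a b hab => Real.smoothTransition.monotone (by linarith)
  have hdn : ∀ s, deriv h s ≤ 0 := fun s => hanti.deriv_nonpos
  let f : E2 → ℝ := fun x => h (‖x‖ ^ 2)
  have hf : Sm f := hsm.comp sm_normsq
  have hfcs : HasCompactSupport f := by
    apply cs_of_zero_off (r := 3)
    intro x hx
    exact Real.smoothTransition.zero_of_nonpos (by nlinarith)
  have hf1 : ∀ x : E2, ‖x‖ ≤ 2 → f x = 1 := fun x hx =>
    Real.smoothTransition.one_of_one_le (by nlinarith [norm_nonneg x])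
  have hpf : ∀ k x, pd k f x = deriv h (‖x‖ ^ 2) * (2 * x k) := by
    intro k x
    have h1 := (hd (‖x‖ ^ 2)).hasDerivAt.comp_hasFDerivAt x (sm_normsq.differentiable x).hasFDerivAt
    have h2 : pd k f x = deriv h (‖x‖ ^ 2) * pd k (fun y => ‖y‖ ^ 2) x := by
      simp only [pd]
      rw [show f = h ∘ fun y => ‖y‖ ^ 2 from rfl, h1.fderiv]; rfl
    rw [h2, pd_normsq]
  have hB := Bs_sm hθ 1
  let G : E2 → ℝ := fun x => ∑ k, pd k f x * pd k (Bs θ 1) x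
  have h_int : ∀ k, Integrable fun x => pd k f x * pd k (Bs θ 1) x := fun k =>
    cs_int ((hf.pd k).cont.mul (hB.pd k).cont) ((pd_cs hfcs k).mul_right)
  have e1 : ∫ x, G x = 0 := by
    rw [integral_finsetSum _ (fun k _ => h_int k)]
    have h2 : ∀ k, ∫ x, pd k f x * pd k (Bs θ 1) x = - ∫ x, f x * pd k (pd k (Bs θ 1)) x := by
      intro k; rw [ibp hf (hB.pd k) hfcs k]; ring
    have h_int2 : ∀ k, Integrable fun x => f x * pd k (pd k (Bs θ 1)) x := fun k =>
      cs_int (hf.cont.mul ((hB.pd k).pd k).cont) hfcs.mul_right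
    simp only [h2]
    rw [Finset.sum_neg_distrib, ← integral_finsetSum _ (fun k _ => h_int2 k)]
    have : ∀ x, ∑ k, f x * pd k (pd k (Bs θ 1)) x = gk θ 1 x := by
      intro x
      rw [← Finset.mul_sum]
      by_cases hx : ‖x‖ ≤ 2
      · rw [hf1 x hx, one_mul]; rfl
      · have := gk_zero hθ one_pos (x := x) (by linarith)
        rw [show ∑ k, pd k (pd k (Bs θ 1)) x = gk θ 1 x from rfl, this, mul_zero]
    simp only [this]
    change - cg θ = 0
    rw [hc, neg_zero]
  have e2' : ∀ x : E2, 2 < ‖x‖ → G x = (2 * Real.pi)⁻¹ * (-2 * deriv h (‖x‖ ^ 2)) := by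
    intro x hx
    have hx0 : x ≠ 0 := by rintro rfl; simp at hx; linarith
    have : ∀ k, pd k (Bs θ 1) x = -(2 * Real.pi)⁻¹ * (x k / ‖x‖ ^ 2) := by
      intro k
      have := Dk_zero hθ one_pos k (x := x) (by linarith)
      rw [Dk] at this
      rw [← pd_fundE k hx0]; linarith
    simp only [G, this, hpf]
    have h0 : ‖x‖ ^ 2 ≠ 0 := pow_ne_zero _ (norm_ne_zero_iff.2 hx0)
    have h3 := norm_sq_e2 x
    have h4 : ∀ k, deriv h (‖x‖ ^ 2) * (2 * x k) * (-(2 * Real.pi)⁻¹ * (x k / ‖x‖ ^ 2)) =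
      (2 * Real.pi)⁻¹ * (-2 * deriv h (‖x‖ ^ 2)) / ‖x‖ ^ 2 * (x k ^ 2) := by
      intro k; ring
    simp only [h4]
    rw [← Finset.mul_sum, ← h3]; field_simp
  have e3 : ∀ x : E2, 0 ≤ G x := by
    intro x
    rcases lt_or_ge 2 ‖x‖ with hx | hx
    · rw [e2' x hx]
      have := hdn (‖x‖ ^ 2)
      have : 0 ≤ -2 * deriv h (‖x‖ ^ 2) := by linarith
      positivity
    · have hz : ∀ k, pd k f x = 0 := by
        intro k
        rw [hpf]
        have h1 : deriv h (‖x‖ ^ 2) = 0 := by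
          apply IsLocalMax.deriv_eq_zero
          refine Filter.Eventually.of_forall fun y => ?_
          rw [show h (‖x‖ ^ 2) = 1 from hf1 x hx]
          exact Real.smoothTransition.le_one _
        rw [h1, zero_mul]
      simp [G, hz]
  have hGc : Continuous G := continuous_finsetSum _ fun k _ => (hf.pd k).cont.mul (hB.pd k).cont
  have hGi : Integrable G := integrable_finsetSum _ fun k _ => h_int k
  have hGcs : HasCompactSupport G := cs_of_zero_off (r := 3) fun x hx => by
    have hz : ∀ k, pd k f x = 0 := fun k => pd_zero_off (r := 3) (fun y hy =>
      Real.smoothTransition.zero_of_nonpos (by nlinarith)) k x hx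
    simp [G, hz]
  obtain ⟨s, hs, hs'⟩ := exists_deriv_eq_slope h (show (4 : ℝ) < 5 by norm_num)
    hd.continuous.continuousOn hd.differentiableOn
  have h4 : h 4 = 1 := Real.smoothTransition.one_of_one_le (by norm_num)
  have h5 : h 5 = 0 := Real.smoothTransition.zero_of_nonpos (by norm_num)
  have hx : ‖(√s • e2 0 : E2)‖ = √s := by
    rw [norm_smul]; simp [e2, abs_of_nonneg (Real.sqrt_nonneg s)]
  have hs2 : ‖(√s • e2 0 : E2)‖ ^ 2 = s := by rw [hx, Real.sq_sqrt (by linarith [hs.1])]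
  have hG := e2' (√s • e2 0) (by
    rw [hx]; exact (Real.lt_sqrt (by norm_num)).2 (by linarith [hs.1]))
  rw [hs2, hs', h4, h5] at hG
  have hpos := hGc.integral_pos_of_hasCompactSupport_nonneg_nonzero (μ := volume) hGcs e3
    (x := √s • e2 0) (by rw [hG]; norm_num)
  linarith

/-! ### Velocity fields with bounded vorticity -/

/-- Uniform decay, with constant `C`, of the derivatives of the far-field kernels at all scales. -/
def KB (θ : E2 → ℝ) (C : ℝ) : Prop := ∀ r : ℝ, 0 < r → ∀ x : E2,
    (∀ i, |pd i (Bs θ r) x| ≤ C / (r + ‖x‖)) ∧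
    (∀ i j, |pd i (pd j (Bs θ r)) x| ≤ C / (r + ‖x‖) ^ 2) ∧
    (∀ i j k, |pd i (pd j (pd k (Bs θ r))) x| ≤ C / (r + ‖x‖) ^ 3)

/-- The scalar vorticity, in terms of the components of the velocity. -/
def rot (U : Fin 2 → E2 → ℝ) (x : E2) : ℝ := pd 0 (U 1) x - pd 1 (U 0) x

/-- Energy density of a vector field given by its components. -/
def en (U : Fin 2 → E2 → ℝ) (x : E2) : ℝ := ∑ k, U k x ^ 2

/-- Smooth divergence-free fields, given by their components, with vorticity at most `Ω` and
energy in discs of radius `r ≥ 1` at most `L r^(2+2α)`. -/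
structure Adm (α Ω L : ℝ) (U : Fin 2 → E2 → ℝ) : Prop where
  sm : ∀ k, Sm (U k)
  div : ∀ x, ∑ k, pd k (U k) x = 0
  vort : ∀ x, |rot U x| ≤ Ω
  mor : ∀ r : ℝ, 1 ≤ r → ∫ x in ball 0 r, en U x ≤ L * r ^ (2 + 2 * α)

lemma en_nonneg (U : Fin 2 → E2 → ℝ) (x : E2) : 0 ≤ en U x := Finset.sum_nonneg fun _ _ => sq_nonneg _

lemma sq_le_en (U : Fin 2 → E2 → ℝ) (i : Fin 2) (x : E2) : U i x ^ 2 ≤ en U x :=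
  Finset.single_le_sum (f := fun k => U k x ^ 2) (fun _ _ => sq_nonneg _) (Finset.mem_univ i)

lemma en_cont {U : Fin 2 → E2 → ℝ} (h : ∀ k, Sm (U k)) : Continuous (en U) :=
  continuous_finsetSum _ fun k _ => (h k).cont.pow 2

lemma rot_sm {U : Fin 2 → E2 → ℝ} (h : ∀ k, Sm (U k)) : Sm (rot U) :=
  ((h 1).pd 0).sub ((h 0).pd 1)

/-- The sign in the Biot–Savart law. -/
def sg (i : Fin 2) : ℝ := if i = 0 then -1 else 1

lemma abs_sg (i : Fin 2) : |sg i| = 1 := by unfold sg; split_ifs <;> simp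

/-- The Biot–Savart law, localised between the scales `d` and `r`. -/
lemma bs_ident {θ : E2 → ℝ} (hθ : IsCutoff θ) {U : Fin 2 → E2 → ℝ} (hs : ∀ k, Sm (U k))
    (hdiv : ∀ x, ∑ k, pd k (U k) x = 0) {d r : ℝ} (hd : 0 < d) (hdr : d ≤ r) (i : Fin 2) (x : E2) :
    cv (gk θ d) (U i) x - cv (gk θ r) (U i) x = sg i * cv (pd (1 - i) (Mk θ d r)) (rot U) x := by
  set M := Mk θ d r with hM
  have hMs : Sm M := Mk_sm hθ d r
  have hMc : HasCompactSupport M := Mk_cs hθ hd hdr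
  have e1 : cv (gk θ d) (U i) x - cv (gk θ r) (U i) x = ∑ k, cv (pd k M) (pd k (U i)) x := by
    rw [← cv_sub_left (gk_sm hθ d).cont (gk_sm hθ r).cont (hs i).cont (gk_cs hθ hd)
      (gk_cs hθ (hd.trans_le hdr))]
    have : (fun y => gk θ d y - gk θ r y) = fun y => ∑ k, pd k (pd k M) y := by
      funext y; rw [gk_sub hθ]
    rw [this]
    have h2 : cv (fun y => ∑ k, pd k (pd k M) y) (U i) x = ∑ k, cv (pd k (pd k M)) (U i) x := by
      simp only [cv, Finset.sum_mul]
      exact integral_finsetSum _ fun k _ => cv_integrable ((hMs.pd k).pd k).cont (hs i).cont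
        (pd_cs (pd_cs hMc k) k) x
    rw [h2]
    refine Finset.sum_congr rfl fun k _ => ?_
    rw [cv_ibp (hMs.pd k) (hs i) (pd_cs hMc k)]
  have sw : ∀ a b c : Fin 2, cv (pd a M) (pd b (U c)) = cv (pd b M) (pd a (U c)) := by
    intro a b c
    rw [← cv_ibp (hMs.pd a) (hs c) (pd_cs hMc a), ← cv_ibp (hMs.pd b) (hs c) (pd_cs hMc b),
      pd_comm hMs]
  have hr : ∀ a, cv (pd a M) (rot U) x = cv (pd a M) (pd 0 (U 1)) x - cv (pd a M) (pd 1 (U 0)) x := by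
    intro a
    simp only [cv, rot, mul_sub]
    exact integral_sub (cv_integrable (hMs.pd a).cont ((hs 1).pd 0).cont (pd_cs hMc a) x)
      (cv_integrable (hMs.pd a).cont ((hs 0).pd 1).cont (pd_cs hMc a) x)
  have hn : ∀ a, cv (pd a M) (pd 0 (U 0)) x = - cv (pd a M) (pd 1 (U 1)) x := by
    intro a
    have : pd 0 (U 0) = fun y => - pd 1 (U 1) y := by
      funext y; have := hdiv y; rw [Fin.sum_univ_two] at this; linarith
    simp only [cv, this, mul_neg, integral_neg]
  rw [e1, Fin.sum_univ_two, hr]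
  fin_cases i
  · simp [sg]
    rw [hn, sw 0 1 1]; ring
  · simp [sg]
    have := hn 1
    rw [sw 1 0 0] at this
    rw [this]; ring

lemma ae_ne_zero : ∀ᵐ x : E2, x ≠ 0 := by
  have : volume ({0} : Set E2) = 0 := measure_singleton 0
  exact compl_mem_ae_iff.2 this

/-- Convolution of an integrably majorised kernel with a bounded function. -/
lemma cv_bound {K N h : E2 → ℝ} {Ω : ℝ} (hN : Integrable N) (hK : ∀ x, x ≠ 0 → |K x| ≤ N x)
    (hh : ∀ x, |h x| ≤ Ω) (x : E2) : |cv K h x| ≤ (∫ x, N x) * Ω := by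
  have h1 : ∀ᵐ y : E2, x - y ≠ 0 := by
    have : volume ({x} : Set E2) = 0 := measure_singleton x
    filter_upwards [compl_mem_ae_iff.2 this] with y hy
    exact sub_ne_zero.2 (Ne.symm hy)
  have h2 : ∫ y, N (x - y) * Ω = (∫ x, N x) * Ω := by
    rw [integral_mul_const, integral_sub_left_eq_self]
  rw [← h2]
  refine norm_integral_le_of_norm_le (μ := volume) (f := fun y => K (x - y) * h y)
    (g := fun y => N (x - y) * Ω) ((hN.comp_sub_left x).mul_const Ω) ?_
  filter_upwards [h1] with y hy
  rw [Real.norm_eq_abs, abs_mul]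
  exact mul_le_mul (hK _ hy) (hh _) (abs_nonneg _) ((abs_nonneg _).trans (hK _ hy))

lemma pdM_le {θ : E2 → ℝ} (hθ : IsCutoff θ) {C : ℝ} (hC : 1 ≤ C) (hB : KB θ C) {d r : ℝ}
    (hd : 0 < d) (hdr : d ≤ r) (i : Fin 2) {x : E2} (hx : x ≠ 0) :
    |pd i (Mk θ d r) x| ≤ 2 * C * K1 (2 * r) x := by
  have hx0 : 0 < ‖x‖ := norm_pos_iff.2 hx
  rcases le_or_gt ‖x‖ (2 * r) with h | h
  · rw [K1, Set.indicator_of_mem (show ‖x‖ ∈ Set.Ioc 0 (2 * r) from ⟨hx0, h⟩), pd_Mk hθ]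
    have h1 := (hB d hd x).1 i
    have h2 := (hB r (hd.trans_le hdr) x).1 i
    have h3 : C / (d + ‖x‖) ≤ C / ‖x‖ := by gcongr; linarith
    have h4 : C / (r + ‖x‖) ≤ C / ‖x‖ := by gcongr; linarith
    calc _ ≤ |pd i (Bs θ d) x| + |pd i (Bs θ r) x| := abs_sub _ _
      _ ≤ C / ‖x‖ + C / ‖x‖ := by linarith
      _ = _ := by ring
  · rw [K1_zero h, pd_zero_off (fun y hy => Mk_zero hθ hd hdr hy) i x h]; simp

lemma pd2M_le {θ : E2 → ℝ} (hθ : IsCutoff θ) {C : ℝ} (hC : 1 ≤ C) (hB : KB θ C) {d r : ℝ}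
    (hd : 0 < d) (hdr : d ≤ r) (i j : Fin 2) (x : E2) :
    |pd i (pd j (Mk θ d r)) x| ≤ 2 * C * K2 (d / 2) (2 * r) x := by
  rcases le_or_gt ‖x‖ (2 * r) with h | h
  · rcases le_or_gt ‖x‖ (d / 2) with h' | h'
    · have hz : ∀ a : ℝ, d ≤ a → pd i (pd j (Bs θ a)) x = 0 := by
        intro a ha
        have e : ∀ y : E2, ‖y‖ < d → pd j (Bs θ a) y = 0 := by
          intro y hy
          have : Bs θ a =ᶠ[nhds y] fun _ => 0 := by
            filter_upwards [(continuous_norm.isOpen_preimage _ isOpen_Iio).mem_nhds hy] with z hz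
            exact Bs_near hθ (hd.trans_le ha) ((le_of_lt hz).trans ha)
          rw [pd_congr_nhds this]; simp [pd]
        have hxd : ‖x‖ < d := by linarith
        have : pd j (Bs θ a) =ᶠ[nhds x] fun _ => 0 := by
          filter_upwards [(continuous_norm.isOpen_preimage _ isOpen_Iio).mem_nhds hxd] with z hz
          exact e z hz
        rw [pd_congr_nhds this]; simp [pd]
      rw [pd2_Mk hθ]
      simp only [hz d le_rfl, hz r hdr, sub_zero, abs_zero]
      exact mul_nonneg (by linarith) (K2_nonneg _ _ _)
    · have hx0 : 0 < ‖x‖ := by linarith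
      rw [K2, Set.indicator_of_mem (show ‖x‖ ∈ Set.Ioc (d / 2) (2 * r) from ⟨h', h⟩), pd2_Mk hθ]
      have h1 := (hB d hd x).2.1 i j
      have h2 := (hB r (hd.trans_le hdr) x).2.1 i j
      have h3 : C / (d + ‖x‖) ^ 2 ≤ C / ‖x‖ ^ 2 := by gcongr; linarith
      have h4 : C / (r + ‖x‖) ^ 2 ≤ C / ‖x‖ ^ 2 := by gcongr; linarith
      calc _ ≤ |pd i (pd j (Bs θ d)) x| + |pd i (pd j (Bs θ r)) x| := abs_sub _ _
        _ ≤ C / ‖x‖ ^ 2 + C / ‖x‖ ^ 2 := by linarith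
        _ = _ := by ring
  · rw [K2_zero h]
    have := pd_zero_off (fun y hy => Mk_zero hθ hd hdr hy) j
    have e : pd j (Mk θ d r) =ᶠ[nhds x] fun _ => 0 := by
      filter_upwards [(continuous_norm.isOpen_preimage _ isOpen_Ioi).mem_nhds h] with z hz
      exact this z hz
    rw [pd_congr_nhds e]; simp [pd]

lemma gk_le {θ : E2 → ℝ} {C : ℝ} (hC : 1 ≤ C) (hB : KB θ C) {r : ℝ} (hr : 0 < r) (x : E2) :
    |gk θ r x| ≤ 2 * C / r ^ 2 := by
  have h := (hB r hr x).2.1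
  have h3 : C / (r + ‖x‖) ^ 2 ≤ C / r ^ 2 := by gcongr; linarith [norm_nonneg x]
  rw [gk, Fin.sum_univ_two]
  calc _ ≤ _ := abs_add_le _ _
    _ ≤ C / r ^ 2 + C / r ^ 2 := add_le_add ((h 0 0).trans h3) ((h 1 1).trans h3)
    _ = _ := by ring

lemma pd_gk_le {θ : E2 → ℝ} (hθ : IsCutoff θ) {C : ℝ} (hC : 1 ≤ C) (hB : KB θ C) {r : ℝ}
    (hr : 0 < r) (j : Fin 2) (x : E2) : |pd j (gk θ r) x| ≤ 2 * C / r ^ 3 := by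
  have h := (hB r hr x).2.2
  have h3 : C / (r + ‖x‖) ^ 3 ≤ C / r ^ 3 := by gcongr; linarith [norm_nonneg x]
  rw [pd_gk hθ]
  simp only [Fin.sum_univ_two]
  calc _ ≤ _ := abs_add_le _ _
    _ ≤ C / r ^ 3 + C / r ^ 3 := add_le_add ((h j 0 0).trans h3) ((h j 1 1).trans h3)
    _ = _ := by ring

lemma vol_cb (x : E2) {r : ℝ} (hr : 0 ≤ r) :
    (volume : Measure E2).real (closedBall x r) = r ^ 2 * V2 := by
  rw [Measure.addHaar_real_closedBall _ _ hr, finrank_E2, V2]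

/-- Passage to the limit in the approximate identity: a bound on `g_ε * f - g_d * f` uniform in
small `ε` bounds `c f - g_d * f`. -/
lemma approx_id {θ : E2 → ℝ} (hθ : IsCutoff θ) {C : ℝ} (hC : 1 ≤ C) (hB : KB θ C) {f : E2 → ℝ}
    (hf : Continuous f) {x : E2} {d b : ℝ} (hd : 0 < d)
    (h : ∀ e, 0 < e → e ≤ d → |cv (gk θ e) f x - cv (gk θ d) f x| ≤ b) :
    |cg θ * f x - cv (gk θ d) f x| ≤ b := by
  apply _root_.le_of_forall_pos_le_add
  intro η hη
  have hV := V2_nonneg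
  set c := 8 * C * V2 + 1 with hc
  have hc0 : 0 < c := by positivity
  obtain ⟨s, hs, hs'⟩ := Metric.continuousAt_iff.1 (hf.continuousAt (x := x)) (η / c) (by positivity)
  obtain ⟨e, he, he'⟩ : ∃ e, 0 < e ∧ e ≤ d ∧ e ≤ 1 ∧ 2 * e < s :=
    ⟨min (min d 1) (s / 3), by positivity, (min_le_left _ _).trans (min_le_left _ _),
      (min_le_left _ _).trans (min_le_right _ _), by
        have := min_le_right (min d 1) (s / 3); linarith⟩
  have hgi : Integrable fun y => gk θ e (x - y) * f y :=
    cv_integrable (gk_sm hθ e).cont hf (gk_cs hθ he) x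
  have hgi2 : Integrable fun y => gk θ e (x - y) * f x :=
    cv_integrable (h := fun _ => f x) (gk_sm hθ e).cont continuous_const (gk_cs hθ he) x
  have e1 : cg θ * f x = ∫ y, gk θ e (x - y) * f x := by
    rw [integral_mul_const, integral_sub_left_eq_self, gk_mass hθ he he'.2.1]
  have e2 : |cg θ * f x - cv (gk θ e) f x| ≤ η := by
    rw [e1, cv, ← integral_sub hgi2 hgi]
    have hz : ∀ y, y ∉ closedBall x (2 * e) → gk θ e (x - y) * f x - gk θ e (x - y) * f y = 0 := by
      intro y hy
      rw [gk_zero hθ he (by rw [← dist_eq_norm, dist_comm]; simpa using hy)]; simp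
    rw [← setIntegral_eq_integral_of_forall_compl_eq_zero hz]
    have h3 := norm_setIntegral_le_of_norm_le_const (μ := volume) (s := closedBall x (2 * e))
      (f := fun y => gk θ e (x - y) * f x - gk θ e (x - y) * f y) (C := 2 * C / e ^ 2 * (η / c))
      measure_closedBall_lt_top (by
        intro y hy
        rw [← mul_sub, norm_mul]
        refine mul_le_mul (gk_le hC hB he _) ?_ (norm_nonneg _) (by positivity)
        rw [← dist_eq_norm, dist_comm]
        exact (hs' (lt_of_le_of_lt hy he'.2.2)).le)
    refine h3.trans ?_
    rw [vol_cb x (by positivity)]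
    have : 2 * C / e ^ 2 * (η / c) * ((2 * e) ^ 2 * V2) = η * ((8 * C * V2) / c) := by
      field_simp; ring
    rw [this]
    have : (8 * C * V2) / c ≤ 1 := by rw [div_le_one hc0]; linarith
    nlinarith
  calc _ = |(cg θ * f x - cv (gk θ e) f x) + (cv (gk θ e) f x - cv (gk θ d) f x)| := by ring_nf
    _ ≤ _ := abs_add_le _ _
    _ ≤ b + η := by linarith [h e he he'.1]

/-- Convolution with a bounded kernel of range `2ρ ≤ 2R`, in terms of the energy in `B(0,6R)`. -/
lemma loc_bound {α Ω L : ℝ} {U : Fin 2 → E2 → ℝ} (hU : Adm α Ω L U) (hα : α ≤ 1 / 2)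
    {K : E2 → ℝ} {κ ρ R l : ℝ} (hK : ∀ x, |K x| ≤ κ) (hz : ∀ x, 2 * ρ < ‖x‖ → K x = 0)
    (hL : 0 ≤ L) (hρ : 0 < ρ) (hρR : ρ ≤ R) (hR : 1 ≤ R) (hl : 0 < l) {x : E2} (hx : ‖x‖ ≤ 3 * R) (i : Fin 2) :
    |cv K (U i) x| ≤ κ / 2 * (l * (4 * ρ ^ 2 * V2) + 216 * L * R ^ 3 / l) := by
  have hκ : 0 ≤ κ := (abs_nonneg _).trans (hK 0)
  have hsub : closedBall x (2 * ρ) ⊆ ball 0 (6 * R) := by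
    intro y hy
    have h1 : ‖y - x‖ ≤ 2 * ρ := by rw [← dist_eq_norm]; exact hy
    have h2 : ‖y‖ ≤ ‖y - x‖ + ‖x‖ := by simpa using norm_add_le (y - x) x
    rw [mem_ball_zero_iff]; linarith
  have hc := en_cont hU.sm
  have i1 : IntegrableOn (en U) (closedBall x (2 * ρ)) := (intOn_ball hc _).mono_set hsub
  have i2 : IntegrableOn (fun _ : E2 => l) (closedBall x (2 * ρ)) := integrableOn_const (by
    exact measure_closedBall_lt_top.ne)
  have hz' : ∀ y, y ∉ closedBall x (2 * ρ) → K (x - y) * U i y = 0 := by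
    intro y hy
    rw [hz _ (by rw [← dist_eq_norm, dist_comm]; simpa using hy)]; simp
  rw [cv, ← setIntegral_eq_integral_of_forall_compl_eq_zero hz']
  have h1 := norm_integral_le_of_norm_le (μ := volume.restrict (closedBall x (2 * ρ)))
    (f := fun y => K (x - y) * U i y) (g := fun y => κ / 2 * (l + en U y / l))
    ((i2.add (i1.div_const l)).const_mul (κ / 2)) (Filter.Eventually.of_forall fun y => by
      rw [norm_mul]
      have h3 : |U i y| ≤ (l + en U y / l) / 2 := by
        have h4 : U i y ^ 2 / l ≤ en U y / l := by gcongr; exact sq_le_en U i y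
        have h5 : 2 * |U i y| ≤ l + U i y ^ 2 / l := by
          rw [← sub_nonneg]
          have : l + U i y ^ 2 / l - 2 * |U i y| = (l - |U i y|) ^ 2 / l := by
            rw [← sq_abs (U i y)]; field_simp; ring
          rw [this]; positivity
        linarith
      calc _ ≤ κ * ((l + en U y / l) / 2) :=
            mul_le_mul (hK _) h3 (abs_nonneg _) hκ
        _ = _ := by ring)
  refine h1.trans ?_
  rw [integral_const_mul, integral_add i2 (i1.div_const l), integral_div, setIntegral_const,
    vol_cb x (by positivity)]
  have h2 : ∫ y in closedBall x (2 * ρ), en U y ≤ 216 * L * R ^ 3 := by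
    calc _ ≤ ∫ y in ball 0 (6 * R), en U y :=
          setIntegral_mono_set (intOn_ball hc _) (Filter.Eventually.of_forall (en_nonneg U))
            hsub.eventuallyLE
      _ ≤ L * (6 * R) ^ (2 + 2 * α) := hU.mor _ (by linarith)
      _ ≤ L * (6 * R) ^ ((3 : ℕ) : ℝ) := by
          gcongr
          · linarith
          · push_cast; linarith
      _ = _ := by rw [Real.rpow_natCast]; ring
  rw [smul_eq_mul]
  have e : (2 * ρ) ^ 2 * V2 * l = l * (4 * ρ ^ 2 * V2) := by ring
  rw [e]
  gcongr

/-- The mollified velocity at scale `d`. -/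
def bf (θ : E2 → ℝ) (d : ℝ) (f : E2 → ℝ) (x : E2) : ℝ := (cg θ)⁻¹ * cv (gk θ d) f x

lemma bf_sm {θ : E2 → ℝ} (hθ : IsCutoff θ) {d : ℝ} (hd : 0 < d) {f : E2 → ℝ} (hf : Continuous f) :
    Sm (bf θ d f) := contDiff_const.mul (cv_sm (gk_sm hθ d) hf (gk_cs hθ hd))

/-- Velocity at scale `d`: a small error plus a log-Lipschitz mollified part; and the growth of the
velocity on discs. -/
lemma vel_bounds {θ : E2 → ℝ} (hθ : IsCutoff θ) {Ω L : ℝ} (hΩ : 0 ≤ Ω) (hL : 0 ≤ L) :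
    ∃ A : ℝ, 0 ≤ A ∧ ∀ α, α ≤ 1 / 2 → ∀ U, Adm α Ω L U → ∀ R, 1 ≤ R →
      (∀ i x, ‖x‖ ≤ 3 * R → |U i x| ≤ A * R ^ (3 / 4 : ℝ)) ∧
      ∀ d, 0 < d → d ≤ R → (∀ i x, |U i x - bf θ d (U i) x| ≤ A * d) ∧
        (∀ i j x, ‖x‖ ≤ 3 * R → |pd j (bf θ d (U i)) x| ≤ A * (1 + Real.log (R / d))) := by
  obtain ⟨C, hC, hB⟩ := kernel_bounds hθ
  change KB θ C at hB
  have hV := V2_nonneg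
  have hc := cg_ne hθ
  have hc0 : 0 < |cg θ| := abs_pos.2 hc
  set D := 8 * C * V2 * Ω + C * (4 * V2 + 216 * L) + 4 * C * V2 * Ω * (1 + Real.log 4) with hD
  have hl4 : 0 ≤ Real.log 4 := Real.log_nonneg (by norm_num)
  have hp1 : 0 ≤ 8 * C * V2 * Ω := by positivity
  have hp2 : 0 ≤ C * (4 * V2 + 216 * L) := by positivity
  have hp3 : 0 ≤ 4 * C * V2 * Ω * (1 + Real.log 4) := by positivity
  have hD0 : 0 ≤ D := by positivity
  refine ⟨|cg θ|⁻¹ * D, by positivity, fun α hα U hU R hR => ?_⟩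
  have hR0 : 0 < R := by linarith
  -- the difference of two mollifications, through the localised Biot–Savart law
  have near : ∀ e d, 0 < e → e ≤ d → ∀ i x,
      |cv (gk θ e) (U i) x - cv (gk θ d) (U i) x| ≤ 8 * C * V2 * Ω * d := by
    intro e d he hed i x
    rw [bs_ident hθ hU.sm hU.div he hed, abs_mul, abs_sg, one_mul]
    have hd : 0 < 2 * d := by linarith
    refine (cv_bound ((K1_int hd).1.const_mul (2 * C))
      (fun z hz => pdM_le hθ hC hB he hed (1 - i) hz) hU.vort x).trans (le_of_eq ?_)
    rw [integral_const_mul, (K1_int hd).2]; ring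
  have near' : ∀ d, 0 < d → ∀ i x, |cg θ * U i x - cv (gk θ d) (U i) x| ≤ 8 * C * V2 * Ω * d :=
    fun d hd i x => approx_id hθ hC hB (hU.sm i).cont hd fun e he hed => near e d he hed i x
  refine ⟨fun i x hx => ?_, fun d hd hdR => ⟨fun i x => ?_, fun i j x hx => ?_⟩⟩
  · set ρ := R ^ (3 / 4 : ℝ) with hρ
    have hρ0 : 0 < ρ := Real.rpow_pos_of_pos hR0 _
    have hρR : ρ ≤ R := by
      calc ρ ≤ R ^ (1 : ℝ) := Real.rpow_le_rpow_of_exponent_le hR (by norm_num)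
        _ = R := Real.rpow_one R
    have hρ4 : R ^ 3 = ρ ^ 4 := by
      rw [hρ, ← Real.rpow_natCast, ← Real.rpow_natCast, ← Real.rpow_mul hR0.le]; norm_num
    have h1 := near' ρ hρ0 i x
    have h2 := loc_bound hU hα (gk_le hC hB hρ0) (fun y hy => gk_zero hθ hρ0 hy) hL hρ0 hρR hR hρ0 hx i
    have h3 : 2 * C / ρ ^ 2 / 2 * (ρ * (4 * ρ ^ 2 * V2) + 216 * L * R ^ 3 / ρ) =
        C * (4 * V2 + 216 * L) * ρ := by rw [hρ4]; field_simp
    rw [h3] at h2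
    have h4 : |cg θ| * |U i x| ≤ D * ρ := by
      rw [← abs_mul]
      calc _ = |(cg θ * U i x - cv (gk θ ρ) (U i) x) + cv (gk θ ρ) (U i) x| := by ring_nf
        _ ≤ _ := abs_add_le _ _
        _ ≤ 8 * C * V2 * Ω * ρ + C * (4 * V2 + 216 * L) * ρ := add_le_add h1 h2
        _ ≤ D * ρ := by rw [hD]; nlinarith
    rw [mul_assoc, ← div_eq_inv_mul, le_div_iff₀ hc0]; linarith
  · have h1 := near' d hd i x
    have h2 : U i x - bf θ d (U i) x = (cg θ)⁻¹ * (cg θ * U i x - cv (gk θ d) (U i) x) := by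
      rw [bf]; field_simp
    rw [h2, abs_mul, abs_inv, mul_assoc]
    gcongr
    refine h1.trans ?_
    gcongr; linarith
  · have hMs := Mk_sm hθ d R
    have hMc := Mk_cs hθ hd hdR
    have e1 : cv (gk θ d) (U i) = fun x => cv (gk θ R) (U i) x +
        sg i * cv (pd (1 - i) (Mk θ d R)) (rot U) x := by
      funext y; rw [← bs_ident hθ hU.sm hU.div hd hdR i y]; ring
    have hrc := (rot_sm hU.sm).cont
    have s1 := cv_sm (gk_sm hθ R) (hU.sm i).cont (gk_cs hθ hR0)
    have s2 := cv_sm (hMs.pd (1 - i)) hrc (pd_cs hMc _)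
    have e2 : pd j (bf θ d (U i)) x = (cg θ)⁻¹ * (cv (pd j (gk θ R)) (U i) x +
        sg i * cv (pd j (pd (1 - i) (Mk θ d R))) (rot U) x) := by
      have : bf θ d (U i) = fun x => (cg θ)⁻¹ * cv (gk θ d) (U i) x := rfl
      rw [this, pd_const_mul (cv_sm (gk_sm hθ d) (hU.sm i).cont (gk_cs hθ hd)), e1,
        pd_add s1 (contDiff_const.mul s2), pd_const_mul s2,
        pd_cv (gk_sm hθ R) (hU.sm i).cont (gk_cs hθ hR0), pd_cv (hMs.pd _) hrc (pd_cs hMc _)]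
    have h2 := loc_bound hU hα (pd_gk_le hθ hC hB hR0 j) (fun y hy => by
      have e : gk θ R =ᶠ[nhds y] fun _ => 0 := by
        filter_upwards [(continuous_norm.isOpen_preimage _ isOpen_Ioi).mem_nhds hy] with z hz
        exact gk_zero hθ hR0 hz
      rw [pd_congr_nhds e]; simp [pd]) hL hR0 le_rfl hR one_pos hx i
    have h3 : 2 * C / R ^ 3 / 2 * (1 * (4 * R ^ 2 * V2) + 216 * L * R ^ 3 / 1) ≤
        C * (4 * V2 + 216 * L) := by
      have : 2 * C / R ^ 3 / 2 * (1 * (4 * R ^ 2 * V2) + 216 * L * R ^ 3 / 1) =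
        C * (4 * V2 / R + 216 * L) := by field_simp
      rw [this]
      gcongr
      exact div_le_self (by positivity) hR
    have h4 := cv_bound ((K2_int (d := d / 2) (r := 2 * R) (by linarith) (by linarith)).1.const_mul
      (2 * C)) (fun z _ => pd2M_le hθ hC hB hd hdR j (1 - i) z) hU.vort x
    rw [integral_const_mul, (K2_int (d := d / 2) (r := 2 * R) (by linarith) (by linarith)).2] at h4
    have h5 : Real.log (2 * R / (d / 2)) = Real.log 4 + Real.log (R / d) := by
      rw [← Real.log_mul (by norm_num) (by positivity)]; congr 1; field_simp; norm_num
    have hlog : 0 ≤ Real.log (R / d) := Real.log_nonneg (by rw [le_div_iff₀ hd]; linarith)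
    rw [h5] at h4
    rw [e2, abs_mul, abs_inv, mul_assoc]
    gcongr
    calc _ ≤ |cv (pd j (gk θ R)) (U i) x| +
          |sg i * cv (pd j (pd (1 - i) (Mk θ d R))) (rot U) x| := abs_add_le _ _
      _ = |cv (pd j (gk θ R)) (U i) x| +
          |cv (pd j (pd (1 - i) (Mk θ d R))) (rot U) x| := by rw [abs_mul, abs_sg, one_mul]
      _ ≤ C * (4 * V2 + 216 * L) + 2 * C * (2 * V2 * (Real.log 4 + Real.log (R / d))) * Ω :=
          add_le_add (h2.trans h3) h4
      _ ≤ D * (1 + Real.log (R / d)) := by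
          rw [hD]
          have q1 : 0 ≤ (8 * C * V2 * Ω) * (1 + Real.log (R / d)) := by positivity
          have q2 : 0 ≤ C * (4 * V2 + 216 * L) * Real.log (R / d) := by positivity
          have q3 : 0 ≤ C * V2 * Ω * (1 + Real.log 4 * Real.log (R / d)) := by positivity
          nlinarith

/-! ### Local enstrophy estimate -/

/-- The source `∑ ∂ⱼuₖ ∂ₖuⱼ` of the pressure. -/
def Qf (U : Fin 2 → E2 → ℝ) (x : E2) : ℝ := ∑ j, ∑ k, pd j (U k) x * pd k (U j) x

/-- The square of the full velocity gradient. -/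
def gn (U : Fin 2 → E2 → ℝ) (x : E2) : ℝ := ∑ j, ∑ k, pd j (U k) x ^ 2

lemma Qf_cont {U : Fin 2 → E2 → ℝ} (h : ∀ k, Sm (U k)) : Continuous (Qf U) :=
  continuous_finsetSum _ fun j _ => continuous_finsetSum _ fun k _ =>
    ((h k).pd j).cont.mul ((h j).pd k).cont

lemma gn_cont {U : Fin 2 → E2 → ℝ} (h : ∀ k, Sm (U k)) : Continuous (gn U) :=
  continuous_finsetSum _ fun j _ => continuous_finsetSum _ fun k _ => ((h k).pd j).cont.pow 2

lemma gn_nonneg (U : Fin 2 → E2 → ℝ) (x : E2) : 0 ≤ gn U x :=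
  Finset.sum_nonneg fun _ _ => Finset.sum_nonneg fun _ _ => sq_nonneg _

/-- The full gradient is controlled by the vorticity up to the pressure source, a double divergence. -/
lemma gn_eq (U : Fin 2 → E2 → ℝ) (x : E2) : gn U x = rot U x ^ 2 + Qf U x := by
  simp only [gn, rot, Qf, Fin.sum_univ_two]; ring

lemma abs_Qf_le (U : Fin 2 → E2 → ℝ) (x : E2) : |Qf U x| ≤ gn U x := by
  simp only [gn, Qf, Fin.sum_univ_two]
  rw [abs_le]
  constructor <;>
  nlinarith [sq_nonneg (pd 0 (U 1) x + pd 1 (U 0) x), sq_nonneg (pd 0 (U 1) x - pd 1 (U 0) x),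
    sq_nonneg (pd 0 (U 0) x), sq_nonneg (pd 1 (U 1) x)]

lemma abs_mul_le_en (U : Fin 2 → E2 → ℝ) (j k : Fin 2) (x : E2) : |U j x * U k x| ≤ en U x := by
  have h1 := sq_le_en U j x
  have h2 := sq_le_en U k x
  rw [abs_le]
  constructor <;> nlinarith [sq_nonneg (U j x + U k x), sq_nonneg (U j x - U k x)]

/-- For divergence-free fields the pressure source is a double divergence. -/
lemma Qf_eq {U : Fin 2 → E2 → ℝ} (hs : ∀ k, Sm (U k)) (hdiv : ∀ x, ∑ k, pd k (U k) x = 0) (x : E2) :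
    Qf U x = ∑ j, ∑ k, pd j (pd k (fun y => U j y * U k y)) x := by
  have h2 : ∀ k, pd k (pd 0 (U 0)) x + pd k (pd 1 (U 1)) x = 0 := by
    intro k
    have e : (fun y => pd 0 (U 0) y + pd 1 (U 1) y) = fun _ => 0 := by
      funext y; have := hdiv y; rwa [Fin.sum_univ_two] at this
    have := congrFun (pd_add ((hs 0).pd 0) ((hs 1).pd 1) k) x
    rw [e] at this
    simp [pd] at this
    simpa [pd] using this.symm
  have h3 : ∀ j k, pd j (pd k (fun y => U j y * U k y)) x =
      (pd j (pd k (U j)) x * U k x + pd k (U j) x * pd j (U k) x) +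
      (pd j (U j) x * pd k (U k) x + U j x * pd j (pd k (U k)) x) := by
    intro j k
    rw [pd_mul (hs j) (hs k), pd_add (((hs j).pd k).mul (hs k)) ((hs j).mul ((hs k).pd k)),
      pd_mul ((hs j).pd k) (hs k), pd_mul (hs j) ((hs k).pd k)]
  simp only [h3, Qf, Fin.sum_univ_two]
  rw [pd_comm (hs 0) 0 1, pd_comm (hs 1) 1 0]
  have hd := hdiv x
  rw [Fin.sum_univ_two] at hd
  have h20 := h2 0
  have h21 := h2 1
  have hd' : pd 0 (U 0) x = - pd 1 (U 1) x := by linarith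
  have e0 : pd 0 (pd 0 (U 0)) x = - pd 0 (pd 1 (U 1)) x := by linarith
  have e1 : pd 1 (pd 0 (U 0)) x = - pd 1 (pd 1 (U 1)) x := by linarith
  rw [e0, e1, hd']; ring

/-- Two integrations by parts against the pressure source. -/
lemma int_Qf {U : Fin 2 → E2 → ℝ} (hs : ∀ k, Sm (U k)) (hdiv : ∀ x, ∑ k, pd k (U k) x = 0)
    {M : E2 → ℝ} (hM : Sm M) (hc : HasCompactSupport M) :
    ∫ x, M x * Qf U x = ∑ j, ∑ k, ∫ x, pd j (pd k M) x * (U j x * U k x) := by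
  have hp : ∀ j k, Sm fun y => U j y * U k y := fun j k => (hs j).mul (hs k)
  have e : ∀ j k, ∫ x, M x * pd j (pd k (fun y => U j y * U k y)) x =
      ∫ x, pd j (pd k M) x * (U j x * U k x) := by
    intro j k
    rw [ibp hM ((hp j k).pd k) hc, ibp (hM.pd j) (hp j k) (pd_cs hc j), neg_neg, pd_comm hM]
  have hi : ∀ j k, Integrable fun x => M x * pd j (pd k (fun y => U j y * U k y)) x :=
    fun j k => cs_int (hM.cont.mul (((hp j k).pd k).pd j).cont) hc.mul_right
  simp only [Qf_eq hs hdiv, Finset.mul_sum]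
  rw [integral_finsetSum _ fun j _ => integrable_finsetSum _ fun k _ => hi j k]
  refine Finset.sum_congr rfl fun j _ => ?_
  rw [integral_finsetSum _ fun k _ => hi j k]
  exact Finset.sum_congr rfl fun k _ => e j k

/-- The cut-off at scale `R`. -/
def ph (θ : E2 → ℝ) (R : ℝ) (x : E2) : ℝ := θ (R⁻¹ • x)

lemma ph_sm {θ : E2 → ℝ} (hθ : IsCutoff θ) (R : ℝ) : Sm (ph θ R) := sm_smul hθ.1 _

lemma norm_inv_smul {R : ℝ} (hR : 0 < R) (x : E2) : ‖R⁻¹ • x‖ = ‖x‖ / R := by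
  rw [norm_smul, Real.norm_eq_abs, abs_of_pos (by positivity), ← div_eq_inv_mul]

lemma ph_nonneg {θ : E2 → ℝ} (hθ : IsCutoff θ) (R : ℝ) (x : E2) : 0 ≤ ph θ R x := (hθ.2.1 _).1

lemma ph_le_one {θ : E2 → ℝ} (hθ : IsCutoff θ) (R : ℝ) (x : E2) : ph θ R x ≤ 1 := (hθ.2.1 _).2

lemma ph_one {θ : E2 → ℝ} (hθ : IsCutoff θ) {R : ℝ} (hR : 0 < R) {x : E2} (hx : ‖x‖ ≤ R) :
    ph θ R x = 1 := hθ.2.2.1 _ (by rw [norm_inv_smul hR, div_le_one hR]; exact hx)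

lemma ph_zero {θ : E2 → ℝ} (hθ : IsCutoff θ) {R : ℝ} (hR : 0 < R) {x : E2} (hx : 2 * R ≤ ‖x‖) :
    ph θ R x = 0 := hθ.2.2.2 _ (by rw [norm_inv_smul hR, le_div_iff₀ hR]; exact hx)

lemma ph_cs {θ : E2 → ℝ} (hθ : IsCutoff θ) {R : ℝ} (hR : 0 < R) : HasCompactSupport (ph θ R) :=
  cs_of_zero_off fun _ hx => ph_zero hθ hR (le_of_lt hx)

lemma ph_bounds {θ : E2 → ℝ} (hθ : IsCutoff θ) : ∃ C : ℝ, 1 ≤ C ∧ ∀ R : ℝ, 0 < R → ∀ x,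
    (∀ i, |pd i (ph θ R) x| ≤ C / R) ∧ (∀ i j, |pd i (pd j (ph θ R)) x| ≤ C / R ^ 2) := by
  have hc : HasCompactSupport θ := cs_of_zero_off (r := 2) fun x hx => hθ.2.2.2 x hx.le
  have hs : Sm θ := hθ.1
  choose C1 h1 using fun i => (pd_cs hc i).exists_bound_of_continuous (hs.pd i).cont
  choose C2 h2 using fun i j => (pd_cs (pd_cs hc j) i).exists_bound_of_continuous
    ((hs.pd j).pd i).cont
  obtain ⟨D1, hD1, h1'⟩ := exists_fin_bound C1
  obtain ⟨D2, hD2, h2'⟩ := exists_fin_bound fun p : Fin 2 × Fin 2 => C2 p.1 p.2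
  refine ⟨max D1 D2, hD1.trans (le_max_left _ _), fun R hR x => ⟨fun i => ?_, fun i j => ?_⟩⟩
  · have : pd i (ph θ R) = fun x => R⁻¹ * pd i θ (R⁻¹ • x) := pd_comp_smul _ _ _
    rw [this, abs_mul, abs_of_pos (by positivity), div_eq_inv_mul]
    gcongr
    exact (h1 i _).trans ((h1' i).trans (le_max_left _ _))
  · have e : pd j (ph θ R) = fun x => R⁻¹ * pd j θ (R⁻¹ • x) := pd_comp_smul _ _ _
    have : pd i (pd j (ph θ R)) x = (R ^ 2)⁻¹ * pd i (pd j θ) (R⁻¹ • x) := by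
      rw [e, pd_const_mul (sm_smul (hs.pd j) _), pd_comp_smul]; ring
    rw [this, abs_mul, abs_of_pos (by positivity), div_eq_inv_mul]
    gcongr
    exact (h2 i j _).trans ((h2' (i, j)).trans (le_max_right _ _))

lemma Adm.mor3 {α Ω L : ℝ} {U : Fin 2 → E2 → ℝ} (hU : Adm α Ω L U) (hα : α ≤ 1 / 2) (hL : 0 ≤ L)
    {R : ℝ} (hR : 1 ≤ R) : ∫ x in ball 0 R, en U x ≤ L * R ^ 3 := by
  refine (hU.mor R hR).trans ?_
  rw [← Real.rpow_natCast]
  gcongr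
  push_cast; linarith

lemma vol_ball {r : ℝ} (hr : 0 ≤ r) :
    (volume : Measure E2).real (ball 0 r) = r ^ 2 * V2 := by
  rw [← Measure.addHaar_real_closedBall_eq_addHaar_real_ball, vol_cb 0 hr]

/-- The velocity gradient is locally square integrable with polynomial growth, being controlled by
the vorticity and the local energy. -/
lemma enstrophy {θ : E2 → ℝ} (hθ : IsCutoff θ) {Ω L : ℝ} (hL : 0 ≤ L) :
    ∃ A : ℝ, 0 ≤ A ∧ ∀ α, α ≤ 1 / 2 → ∀ U, Adm α Ω L U → ∀ R, 1 ≤ R →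
      ∫ x in ball 0 R, gn U x ≤ A * R ^ 3 := by
  obtain ⟨C, hC, hb⟩ := ph_bounds hθ
  have hV := V2_nonneg
  refine ⟨9 * V2 * Ω ^ 2 + 108 * C * L, by positivity, fun α hα U hU R hR => ?_⟩
  have hR0 : 0 < R := by linarith
  have hp := ph_sm hθ R
  have hpc := ph_cs hθ hR0
  have hgc := gn_cont hU.sm
  have hrc := (rot_sm hU.sm).cont
  have hi : ∀ {f : E2 → ℝ}, Continuous f → Integrable fun x => ph θ R x * f x := fun hf =>
    cs_int (hp.cont.mul hf) hpc.mul_right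
  have h1 : ∫ x in ball 0 R, gn U x ≤ ∫ x, ph θ R x * gn U x := by
    have e : ∫ x in ball 0 R, gn U x = ∫ x in ball 0 R, ph θ R x * gn U x :=
      setIntegral_congr_fun measurableSet_ball fun x hx => by
        rw [ph_one hθ hR0 (by simpa using le_of_lt (mem_ball_zero_iff.1 hx)), one_mul]
    rw [e]
    exact setIntegral_le_integral (hi hgc) (Filter.Eventually.of_forall fun x =>
      mul_nonneg (hθ.2.1 _).1 (gn_nonneg U x))
  have h2 : ∫ x, ph θ R x * gn U x = (∫ x, ph θ R x * rot U x ^ 2) +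
      ∑ j, ∑ k, ∫ x, pd j (pd k (ph θ R)) x * (U j x * U k x) := by
    rw [← int_Qf hU.sm hU.div hp hpc, ← integral_add (hi (f := fun x => rot U x ^ 2) (hrc.pow 2)) (hi (Qf_cont hU.sm))]
    congr 1; funext x; rw [gn_eq]; ring
  have h3 : |∫ x, ph θ R x * rot U x ^ 2| ≤ 9 * V2 * Ω ^ 2 * R ^ 3 := by
    refine (abs_int_le (r := 3 * R) (g := fun _ => Ω ^ 2) (fun x hx => by
      rw [ph_zero hθ hR0 (by linarith), zero_mul]) (integrableOn_const measure_ball_lt_top.ne)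
      (fun x _ => ?_)).trans ?_
    · have hr := hU.vort x
      rw [abs_mul, abs_of_nonneg (ph_nonneg hθ R x), abs_of_nonneg (sq_nonneg _), ← sq_abs (rot U x)]
      have := ph_le_one hθ R x
      calc _ ≤ 1 * Ω ^ 2 := by
            refine mul_le_mul this ?_ (by positivity) zero_le_one
            gcongr
        _ = _ := one_mul _
    · rw [setIntegral_const, vol_ball (by positivity), smul_eq_mul]
      have : R ^ 2 ≤ R ^ 3 := pow_le_pow_right₀ hR (by norm_num)
      have h9 : 0 ≤ 9 * V2 * Ω ^ 2 := by positivity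
      nlinarith
  have h4 : ∀ j k, |∫ x, pd j (pd k (ph θ R)) x * (U j x * U k x)| ≤ 27 * C * L * R ^ 3 := by
    intro j k
    refine (abs_int_le (r := 3 * R) (g := fun x => C * en U x) (fun x hx => ?_)
      ((intOn_ball (en_cont hU.sm) _).const_mul C) (fun x _ => ?_)).trans ?_
    · have e : pd k (ph θ R) =ᶠ[nhds x] fun _ => 0 := by
        filter_upwards [(continuous_norm.isOpen_preimage _ isOpen_Ioi).mem_nhds
          (show 2 * R < ‖x‖ by linarith)] with z hz
        exact pd_zero_off (fun y hy => ph_zero hθ hR0 hy) k z hz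
      rw [pd_congr_nhds e]; simp [pd]
    · rw [abs_mul]
      refine mul_le_mul (((hb R hR0 x).2 j k).trans ?_) (abs_mul_le_en U j k x) (abs_nonneg _)
        (by linarith)
      exact div_le_self (by linarith) (one_le_pow₀ hR)
    · rw [integral_const_mul]
      calc _ ≤ C * (L * (3 * R) ^ 3) := by
            gcongr; exact hU.mor3 hα hL (by linarith)
        _ = _ := by ring
  have h5 := abs_le.1 h3
  simp only [Fin.sum_univ_two] at h2
  have q := fun j k => (abs_le.1 (h4 j k)).2
  have := q 0 0; have := q 0 1; have := q 1 0; have := q 1 1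
  rw [h2] at h1
  linarith [h5.2]

/-! ### Splitting of the pressure force -/

/-- The pressure force, in terms of the components of the velocity. -/
def PF (θ : E2 → ℝ) (U : Fin 2 → E2 → ℝ) (i : Fin 2) (x : E2) : ℝ :=
  (∫ y, pd i (thetaE θ) (x - y) * Qf U y) +
  ∑ j, ∑ k, ∫ y, pd i (pd j (pd k (oneThetaE θ))) (x - y) * (U j y * U k y)

/-- Absolute convergence of the far-field pressure integrals. -/
def PIf (θ : E2 → ℝ) (U : Fin 2 → E2 → ℝ) : Prop := ∀ x i j k,
  Integrable (fun y => pd i (pd j (pd k (oneThetaE θ))) (x - y) * (U j y * U k y))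

lemma Dk_le {θ : E2 → ℝ} (hθ : IsCutoff θ) {C : ℝ} (hC : 1 ≤ C) (hB : KB θ C) {d : ℝ} (hd : 0 < d)
    (i : Fin 2) {x : E2} (hx : x ≠ 0) : |Dk θ d i x| ≤ 2 * C * K1 (2 * d) x := by
  have hx0 : 0 < ‖x‖ := norm_pos_iff.2 hx
  rcases le_or_gt ‖x‖ (2 * d) with h | h
  · rw [K1, Set.indicator_of_mem (show ‖x‖ ∈ Set.Ioc 0 (2 * d) from ⟨hx0, h⟩), Dk]
    have h1 := (hB d hd x).1 i
    have h2 := pd_fundE_bound i hx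
    have h3 : C / (d + ‖x‖) ≤ C / ‖x‖ := by gcongr; linarith
    have h4 : 1 / ‖x‖ ≤ C / ‖x‖ := by gcongr
    calc _ ≤ |pd i fundE x| + |pd i (Bs θ d) x| := abs_sub _ _
      _ ≤ C / ‖x‖ + C / ‖x‖ := by linarith
      _ = _ := by ring
  · rw [K1_zero h, Dk_zero hθ hd i h]; simp

lemma Dk_int {θ : E2 → ℝ} (hθ : IsCutoff θ) {d : ℝ} (hd : 0 < d) (i : Fin 2) :
    Integrable (Dk θ d i) := by
  obtain ⟨C, hC, hB⟩ := kernel_bounds hθ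
  have hm : AEStronglyMeasurable (Dk θ d i) volume :=
    ((measurable_fderiv_apply_const ℝ fundE (e2 i)).sub
      ((Bs_sm hθ d).pd i).cont.measurable).aestronglyMeasurable
  refine ((K1_int (r := 2 * d) (by linarith)).1.const_mul (2 * C)).mono' hm ?_
  filter_upwards [ae_ne_zero] with x hx using Dk_le hθ hC hB hd i hx

lemma pd2_refl {M : E2 → ℝ} (hM : Sm M) (x : E2) (j k : Fin 2) :
    pd j (pd k (fun y => M (x - y))) = fun y => pd j (pd k M) (x - y) := by
  have e : pd k (fun y => M (x - y)) = fun y => (-1) * pd k M (x - y) := by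
    rw [pd_comp_sub]; funext y; ring
  rw [e, pd_const_mul (sm_comp_sub (hM.pd k) x), pd_comp_sub]
  funext y; ring

/-- The pressure force is scale independent: it splits into a near part at scale `d`, a far part at
scale `R`, and an intermediate part with a smooth compactly supported kernel. -/
lemma PF_split {θ : E2 → ℝ} (hθ : IsCutoff θ) {U : Fin 2 → E2 → ℝ} (hs : ∀ k, Sm (U k))
    (hdiv : ∀ x, ∑ k, pd k (U k) x = 0) (hI : PIf θ U) {d R : ℝ} (hd : 0 < d) (hd1 : d ≤ 1)
    (hR : 1 ≤ R) (i : Fin 2) (x : E2) :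
    (∀ j k, Integrable fun y => pd i (pd j (pd k (Bs θ R))) (x - y) * (U j y * U k y)) ∧
    PF θ U i x = cv (Dk θ d i) (Qf U) x +
      (∑ j, ∑ k, cv (pd i (pd j (pd k (Mk θ d R)))) (fun y => U j y * U k y) x +
       ∑ j, ∑ k, cv (pd i (pd j (pd k (Bs θ R)))) (fun y => U j y * U k y) x) := by
  have hp : ∀ j k, Continuous fun y => U j y * U k y := fun j k => (hs j).cont.mul (hs k).cont
  have hM : ∀ a b, Sm (Mk θ a b) := Mk_sm hθ
  have hMi : ∀ a b, 0 < a → a ≤ b → ∀ j k,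
      Integrable fun y => pd i (pd j (pd k (Mk θ a b))) (x - y) * (U j y * U k y) :=
    fun a b ha hab j k => cv_integrable ((((hM a b).pd k).pd j).pd i).cont (hp j k)
      (pd_cs (pd_cs (pd_cs (Mk_cs hθ ha hab) k) j) i) x
  have hfar : ∀ j k, Integrable fun y => pd i (pd j (pd k (Bs θ R))) (x - y) * (U j y * U k y) := by
    intro j k
    have h := (hI x i j k).sub (hMi 1 R one_pos hR j k)
    refine h.congr (Filter.Eventually.of_forall fun y => ?_)
    simp only [Pi.sub_apply, pd3_Mk hθ, Bs_one]; ring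
  refine ⟨hfar, ?_⟩
  have hQ := Qf_cont hs
  have n1 : Integrable fun y => Dk θ d i (x - y) * Qf U y :=
    cvK_integrable (Dk_int hθ hd i) (fun z hz => Dk_zero hθ hd i hz) hQ x
  have n2 : Integrable fun y => pd i (Mk θ d 1) (x - y) * Qf U y :=
    cv_integrable ((hM d 1).pd i).cont hQ (pd_cs (Mk_cs hθ hd hd1) i) x
  have n3 : ∫ y, pd i (thetaE θ) (x - y) * Qf U y =
      cv (Dk θ d i) (Qf U) x + ∫ y, pd i (Mk θ d 1) (x - y) * Qf U y := by
    rw [cv, ← integral_add n1 n2]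
    apply integral_congr_ae
    have h1 : volume ({x} : Set E2) = 0 := measure_singleton x
    filter_upwards [compl_mem_ae_iff.2 h1] with y hy
    rw [pd_thetaE hθ d i (sub_ne_zero.2 (Ne.symm hy))]; ring
  have n4 : ∫ y, pd i (Mk θ d 1) (x - y) * Qf U y =
      ∑ j, ∑ k, ∫ y, pd i (pd j (pd k (Mk θ d 1))) (x - y) * (U j y * U k y) := by
    rw [int_Qf hs hdiv (sm_comp_sub ((hM d 1).pd i) x) (cs_refl (pd_cs (Mk_cs hθ hd hd1) i) x)]
    refine Finset.sum_congr rfl fun j _ => Finset.sum_congr rfl fun k _ => ?_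
    rw [pd2_refl ((hM d 1).pd i), pd_comm (hM d 1) k i, pd_comm ((hM d 1).pd k) j i]
  rw [PF, n3, n4, add_assoc, ← Finset.sum_add_distrib, ← Finset.sum_add_distrib]
  congr 1
  refine Finset.sum_congr rfl fun j _ => ?_
  rw [← Finset.sum_add_distrib, ← Finset.sum_add_distrib]
  refine Finset.sum_congr rfl fun k _ => ?_
  rw [← integral_add (hMi d 1 hd hd1 j k) (hI x i j k), cv, cv,
    ← integral_add (hMi d R hd (hd1.trans hR) j k) (hfar j k)]
  congr 1; funext y
  simp only [pd3_Mk hθ, Bs_one]; ring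

/-! ### The transport terms in the energy balance for the difference -/

/-- Advection by a divergence-free field only sees the gradient of the cut-off. -/
lemma term_adv {θ : E2 → ℝ} (hθ : IsCutoff θ) {U W : Fin 2 → E2 → ℝ} (hU : ∀ k, Sm (U k))
    (hdiv : ∀ x, ∑ k, pd k (U k) x = 0) (hW : ∀ k, Sm (W k)) {R B D : ℝ} (hR : 0 < R)
    (hD0 : 0 ≤ D)
    (hB : ∀ i x, ‖x‖ ≤ 3 * R → |U i x| ≤ B) (hD : ∀ i x, |pd i (ph θ R) x| ≤ D) :
    |∫ x, ph θ R x * ∑ i, ∑ j, W i x * (U j x * pd j (W i) x)| ≤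
      D * B * ∫ x in ball 0 (3 * R), en W x := by
  have hp := ph_sm hθ R
  have hpc := ph_cs hθ hR
  have hes : Sm (en W) := ContDiff.sum fun k _ => (hW k).pow 2
  have e1 : ∀ j x, pd j (en W) x = 2 * ∑ i, W i x * pd j (W i) x := by
    intro j x
    have : en W = fun x => ∑ k, W k x * W k x := by funext x; simp [en, sq]
    rw [this, pd_sum _ (fun k => (hW k).mul (hW k)), Finset.mul_sum]
    refine Finset.sum_congr rfl fun k _ => ?_
    rw [pd_mul (hW k) (hW k)]; ring
  have e2 : ∀ j, ∫ x, ph θ R x * U j x * pd j (en W) x =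
      - ∫ x, (pd j (ph θ R) x * U j x + ph θ R x * pd j (U j) x) * en W x := by
    intro j
    rw [ibp (hp.mul (hU j)) hes hpc.mul_right j, pd_mul hp (hU j)]
  have i1 : ∀ j, Integrable fun x => ph θ R x * U j x * pd j (en W) x := fun j =>
    cs_int ((hp.cont.mul (hU j).cont).mul (hes.pd j).cont) hpc.mul_right.mul_right
  have i2 : ∀ j, Integrable fun x =>
      (pd j (ph θ R) x * U j x + ph θ R x * pd j (U j) x) * en W x := fun j =>
    cs_int ((((hp.pd j).cont.mul (hU j).cont).add (hp.cont.mul ((hU j).pd j).cont)).mul hes.cont)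
      ((pd_cs hpc j).mul_right.add hpc.mul_right).mul_right
  have e3 : ∫ x, ph θ R x * ∑ i, ∑ j, W i x * (U j x * pd j (W i) x) =
      ∫ x, -(1 / 2) * ((∑ j, pd j (ph θ R) x * U j x) * en W x) := by
    calc _ = ∫ x, (1 / 2) * ∑ j, ph θ R x * U j x * pd j (en W) x := by
          congr 1; funext x
          simp only [e1, Fin.sum_univ_two]; ring
      _ = (1 / 2) * ∑ j, - ∫ x, (pd j (ph θ R) x * U j x + ph θ R x * pd j (U j) x) * en W x := by
          rw [integral_const_mul, integral_finsetSum _ fun j _ => i1 j]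
          simp only [e2]
      _ = -(1 / 2) * ∫ x, ∑ j, (pd j (ph θ R) x * U j x + ph θ R x * pd j (U j) x) * en W x := by
          rw [integral_finsetSum _ fun j _ => i2 j, Finset.sum_neg_distrib]; ring
      _ = _ := by
          rw [← integral_const_mul]
          congr 1; funext x
          have := hdiv x
          simp only [Fin.sum_univ_two] at this ⊢
          linear_combination (-(1 / 2) * ph θ R x * en W x) * this
  rw [e3, ← integral_const_mul]
  refine abs_int_le (fun x hx => ?_) ((intOn_ball hes.cont _).const_mul _) fun x hx => ?_
  · have : ∀ j, pd j (ph θ R) x = 0 := fun j =>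
      pd_zero_off (fun y hy => ph_zero hθ hR hy) j x (by linarith)
    simp [this]
  · have h1 : ∀ j, |pd j (ph θ R) x * U j x| ≤ D * B := fun j => by
      rw [abs_mul]; exact mul_le_mul (hD j x) (hB j x hx.le) (abs_nonneg _) hD0
    have h2 := en_nonneg W x
    rw [abs_mul, abs_mul, abs_of_nonneg h2, Fin.sum_univ_two]
    have h3 := (abs_add_le (pd 0 (ph θ R) x * U 0 x) (pd 1 (ph θ R) x * U 1 x)).trans
      (add_le_add (h1 0) (h1 1))
    have h4 : |(-(1 / 2) : ℝ)| = 1 / 2 := by norm_num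
    rw [h4]
    nlinarith

/-- Stretching by a field with bounded gradient. -/
lemma term_stretch {θ : E2 → ℝ} (hθ : IsCutoff θ) {W b : Fin 2 → E2 → ℝ} (hW : ∀ k, Sm (W k))
    {R B : ℝ} (hR : 0 < R) (hB : ∀ i j x, ‖x‖ ≤ 3 * R → |pd j (b i) x| ≤ B) :
    |∫ x, ph θ R x * ∑ i, ∑ j, W i x * (W j x * pd j (b i) x)| ≤
      4 * B * ∫ x, ph θ R x * en W x := by
  have hp := ph_sm hθ R
  have hpc := ph_cs hθ hR
  rw [← integral_const_mul, ← Real.norm_eq_abs]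
  refine norm_integral_le_of_norm_le
    ((cs_int (hp.cont.mul (en_cont hW)) hpc.mul_right).const_mul _)
    (Filter.Eventually.of_forall fun x => ?_)
  rw [Real.norm_eq_abs, abs_mul, abs_of_nonneg (ph_nonneg hθ R x)]
  rcases le_or_gt ‖x‖ (3 * R) with h | h
  · have h1 : ∀ i j, |W i x * (W j x * pd j (b i) x)| ≤ en W x * B := fun i j => by
      rw [← mul_assoc, abs_mul]
      exact mul_le_mul (abs_mul_le_en W i j x) (hB i j x h) (abs_nonneg _) (en_nonneg W x)
    have h2 : |∑ i, ∑ j, W i x * (W j x * pd j (b i) x)| ≤ ∑ i : Fin 2, ∑ j : Fin 2, en W x * B :=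
      (Finset.abs_sum_le_sum_abs _ _).trans (Finset.sum_le_sum fun i _ =>
        (Finset.abs_sum_le_sum_abs _ _).trans (Finset.sum_le_sum fun j _ => h1 i j))
    simp only [Fin.sum_univ_two] at h2 ⊢
    have := ph_nonneg hθ R x
    nlinarith
  · rw [ph_zero hθ hR (by linarith)]; simp

/-- Stretching by a uniformly small field, after integration by parts. -/
lemma term_small {θ : E2 → ℝ} (hθ : IsCutoff θ) {W a : Fin 2 → E2 → ℝ} (hW : ∀ k, Sm (W k))
    (ha : ∀ k, Sm (a k)) {R B D : ℝ} (hR : 0 < R)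
    (hD : ∀ i x, |pd i (ph θ R) x| ≤ D) (hB : ∀ i x, |a i x| ≤ B) :
    |∫ x, ph θ R x * ∑ i, ∑ j, W i x * (W j x * pd j (a i) x)| ≤
      4 * B * ((D + 1) * (∫ x in ball 0 (3 * R), en W x) + ∫ x in ball 0 (3 * R), gn W x) := by
  have hp := ph_sm hθ R
  have hpc := ph_cs hθ hR
  have hD0 : 0 ≤ D := (abs_nonneg _).trans (hD 0 0)
  have hB0 : 0 ≤ B := (abs_nonneg _).trans (hB 0 0)
  have hww : ∀ i j, Sm fun x => W i x * W j x := fun i j => (hW i).mul (hW j)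
  have hi : ∀ i j, Integrable fun x => (ph θ R x * (W i x * W j x)) * pd j (a i) x := fun i j =>
    cs_int ((hp.cont.mul (hww i j).cont).mul ((ha i).pd j).cont) hpc.mul_right.mul_right
  have e : ∫ x, ph θ R x * ∑ i, ∑ j, W i x * (W j x * pd j (a i) x) =
      ∑ i, ∑ j, ∫ x, (ph θ R x * (W i x * W j x)) * pd j (a i) x := by
    calc _ = ∫ x, ∑ i, ∑ j, (ph θ R x * (W i x * W j x)) * pd j (a i) x := by
          congr 1; funext x; simp only [Fin.sum_univ_two]; ring
      _ = _ := by
          rw [integral_finsetSum _ fun i _ => integrable_finsetSum _ fun j _ => hi i j]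
          exact Finset.sum_congr rfl fun i _ => integral_finsetSum _ fun j _ => hi i j
  have key : ∀ i j, |∫ x, (ph θ R x * (W i x * W j x)) * pd j (a i) x| ≤
      B * ((D + 1) * (∫ x in ball 0 (3 * R), en W x) + ∫ x in ball 0 (3 * R), gn W x) := by
    intro i j
    rw [ibp (hp.mul (hww i j)) (ha i) hpc.mul_right, pd_mul hp (hww i j), pd_mul (hW i) (hW j),
      abs_neg, ← integral_const_mul, ← integral_add ((intOn_ball (en_cont hW) _).const_mul _)
      (intOn_ball (gn_cont hW) _), ← integral_const_mul]
    refine abs_int_le (fun x hx => ?_) ?_ fun x hx => ?_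
    · have : ∀ j, pd j (ph θ R) x = 0 := fun j =>
        pd_zero_off (fun y hy => ph_zero hθ hR hy) j x (by linarith)
      simp [this, ph_zero hθ hR (show 2 * R ≤ ‖x‖ by linarith)]
    · exact intOn_ball (continuous_const.mul ((continuous_const.mul (en_cont hW)).add (gn_cont hW))) _
    · have g1 : ∀ p q, pd p (W q) x ^ 2 ≤ gn W x := fun p q =>
        (Finset.single_le_sum (f := fun q => pd p (W q) x ^ 2) (fun _ _ => sq_nonneg _)
          (Finset.mem_univ q)).trans
        (Finset.single_le_sum (f := fun p => ∑ q, pd p (W q) x ^ 2)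
          (fun _ _ => Finset.sum_nonneg fun _ _ => sq_nonneg _) (Finset.mem_univ p))
      have g2 : ∀ p q r, |pd p (W q) x * W r x| ≤ (gn W x + en W x) / 2 := fun p q r => by
        have := g1 p q
        have := sq_le_en W r x
        rw [abs_le]
        constructor <;> nlinarith [sq_nonneg (pd p (W q) x + W r x), sq_nonneg (pd p (W q) x - W r x)]
      have h1 : |pd j (ph θ R) x * (W i x * W j x)| ≤ D * en W x := by
        rw [abs_mul]; exact mul_le_mul (hD j x) (abs_mul_le_en W i j x) (abs_nonneg _) hD0
      have h2 := g2 j i j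
      have h3 := g2 j j i
      have h4 : |pd j (W i) x * W j x + W i x * pd j (W j) x| ≤ gn W x + en W x := by
        refine (abs_add_le _ _).trans ?_
        rw [mul_comm (W i x)]; linarith
      have h5 : |ph θ R x * (pd j (W i) x * W j x + W i x * pd j (W j) x)| ≤ gn W x + en W x := by
        rw [abs_mul, abs_of_nonneg (ph_nonneg hθ R x)]
        exact (mul_le_mul (ph_le_one hθ R x) h4 (abs_nonneg _) zero_le_one).trans (one_mul _).le
      rw [abs_mul, mul_comm B]
      refine mul_le_mul ((abs_add_le _ _).trans ?_) (hB i x) (abs_nonneg _) ?_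
      · linarith
      · have := en_nonneg W x
        have := gn_nonneg W x
        positivity
  rw [e]
  refine (Finset.abs_sum_le_sum_abs _ _).trans ((Finset.sum_le_sum fun i _ =>
    (Finset.abs_sum_le_sum_abs _ _).trans (Finset.sum_le_sum fun j _ => key i j)).trans ?_)
  simp only [Fin.sum_univ_two]
  linarith

/-! ### The pressure term in the energy balance for the difference -/

/-- The difference of the tensor products `U ⊗ U - V ⊗ V`. -/
def pr (U V : Fin 2 → E2 → ℝ) (j k : Fin 2) (y : E2) : ℝ := U j y * U k y - V j y * V k y

/-- The difference of two fields. -/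
def df (U V : Fin 2 → E2 → ℝ) (k : Fin 2) (y : E2) : ℝ := U k y - V k y

lemma pr_cont {U V : Fin 2 → E2 → ℝ} (hU : ∀ k, Sm (U k)) (hV : ∀ k, Sm (V k)) (j k : Fin 2) :
    Continuous (pr U V j k) :=
  ((hU j).cont.mul (hU k).cont).sub ((hV j).cont.mul (hV k).cont)

lemma df_sm {U V : Fin 2 → E2 → ℝ} (hU : ∀ k, Sm (U k)) (hV : ∀ k, Sm (V k)) (k : Fin 2) :
    Sm (df U V k) := (hU k).sub (hV k)

/-- The difference of the tensor products is linear in the difference of the fields. -/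
lemma pr_eq (U V : Fin 2 → E2 → ℝ) (j k : Fin 2) (y : E2) :
    pr U V j k y = df U V j y * U k y + V j y * df U V k y := by
  simp only [pr, df]; ring

/-- The pressure potential at intermediate scales. -/
def piM (θ : E2 → ℝ) (U V : Fin 2 → E2 → ℝ) (d R : ℝ) (x : E2) : ℝ :=
  ∑ j, ∑ k, cv (pd j (pd k (Mk θ d R))) (pr U V j k) x

lemma piM_sm {θ : E2 → ℝ} (hθ : IsCutoff θ) {U V : Fin 2 → E2 → ℝ} (hU : ∀ k, Sm (U k))
    (hV : ∀ k, Sm (V k)) {d R : ℝ} (hd : 0 < d) (hdR : d ≤ R) : Sm (piM θ U V d R) :=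
  ContDiff.sum fun j _ => ContDiff.sum fun k _ => cv_sm (((Mk_sm hθ d R).pd k).pd j)
    (pr_cont hU hV j k) (pd_cs (pd_cs (Mk_cs hθ hd hdR) k) j)

/-- The gradient of the intermediate potential is the intermediate part of the pressure force. -/
lemma pd_piM {θ : E2 → ℝ} (hθ : IsCutoff θ) {U V : Fin 2 → E2 → ℝ} (hU : ∀ k, Sm (U k))
    (hV : ∀ k, Sm (V k)) {d R : ℝ} (hd : 0 < d) (hdR : d ≤ R) (i : Fin 2) :
    pd i (piM θ U V d R) = fun x => ∑ j, ∑ k, cv (pd i (pd j (pd k (Mk θ d R)))) (pr U V j k) x := by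
  have h1 : ∀ j k, Sm (cv (pd j (pd k (Mk θ d R))) (pr U V j k)) := fun j k =>
    cv_sm (((Mk_sm hθ d R).pd k).pd j) (pr_cont hU hV j k) (pd_cs (pd_cs (Mk_cs hθ hd hdR) k) j)
  have h2 : ∀ j, Sm fun x => ∑ k, cv (pd j (pd k (Mk θ d R))) (pr U V j k) x := fun j =>
    ContDiff.sum fun k _ => h1 j k
  have e : piM θ U V d R = fun x => ∑ j, ∑ k, cv (pd j (pd k (Mk θ d R))) (pr U V j k) x := rfl
  rw [e, pd_sum _ h2]
  funext x
  refine Finset.sum_congr rfl fun j _ => ?_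
  rw [pd_sum _ (h1 j)]
  refine Finset.sum_congr rfl fun k _ => ?_
  rw [pd_cv (((Mk_sm hθ d R).pd k).pd j) (pr_cont hU hV j k) (pd_cs (pd_cs (Mk_cs hθ hd hdR) k) j)]

lemma K2_cv_int {d r : ℝ} (hd : 0 < d) (hdr : d ≤ r) {h : E2 → ℝ} (hh : Continuous h) (x : E2) :
    Integrable fun y => K2 d r (x - y) * h y :=
  cvK_integrable (K2_int hd hdr).1 (fun _ hz => K2_zero hz) hh x

/-- The intermediate pressure potential, weighted by the difference of the velocities. -/
lemma piM_le {θ : E2 → ℝ} (hθ : IsCutoff θ) {C : ℝ} (hC : 1 ≤ C) (hK : KB θ C)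
    {U V : Fin 2 → E2 → ℝ} (hU : ∀ k, Sm (U k)) (hV : ∀ k, Sm (V k)) {d R B : ℝ} (hd : 0 < d)
    (hdR : d ≤ R) (hBU : ∀ i y, ‖y‖ ≤ 6 * R → |U i y| ≤ B) (hBV : ∀ i y, ‖y‖ ≤ 6 * R → |V i y| ≤ B)
    (i : Fin 2) {x : E2} (hx : ‖x‖ < 3 * R) :
    |df U V i x * piM θ U V d R x| ≤ 8 * C * B *
      ((∫ z, K2 (d / 2) (2 * R) z) * en (df U V) x + cv (K2 (d / 2) (2 * R)) (en (df U V)) x) := by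
  set W := df U V with hW
  set K := K2 (d / 2) (2 * R) with hKdef
  have hWs := df_sm hU hV
  have hR : 0 < R := by linarith
  have hd2 : 0 < d / 2 := by linarith
  have hd2R : d / 2 ≤ 2 * R := by linarith
  have hKi := (K2_int hd2 hd2R).1
  have hi1 : Integrable fun y => K (x - y) * en W x := (hKi.comp_sub_left x).mul_const _
  have hi2 : Integrable fun y => K (x - y) * en W y := K2_cv_int hd2 hd2R (en_cont hWs) x
  have hB0 : 0 ≤ B := (abs_nonneg _).trans (hBU 0 0 (by simp; linarith))
  have ww : ∀ j y, |W i x| * |W j y| ≤ (en W x + en W y) / 2 := fun j y => by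
    have h1 := sq_le_en W i x
    have h2 := sq_le_en W j y
    rw [← sq_abs] at h1 h2
    nlinarith [sq_nonneg (|W i x| - |W j y|)]
  have key : ∀ j k, |W i x * cv (pd j (pd k (Mk θ d R))) (pr U V j k) x| ≤
      2 * C * B * ((∫ z, K z) * en W x + cv K (en W) x) := by
    intro j k
    have e : (∫ z, K z) * en W x + cv K (en W) x = ∫ y, (K (x - y) * en W x + K (x - y) * en W y) := by
      rw [integral_add hi1 hi2, integral_mul_const, integral_sub_left_eq_self K volume x, cv]
    rw [e, cv, ← integral_const_mul, ← integral_const_mul, ← Real.norm_eq_abs]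
    refine norm_integral_le_of_norm_le ((hi1.add hi2).const_mul _)
      (Filter.Eventually.of_forall fun y => ?_)
    rw [Real.norm_eq_abs]
    have hM := pd2M_le hθ hC hK hd hdR j k (x - y)
    have hK0 := K2_nonneg (d / 2) (2 * R) (x - y)
    rcases le_or_gt ‖x - y‖ (2 * R) with h | h
    · have hy : ‖y‖ ≤ 6 * R := by
        have := norm_sub_norm_le y x
        rw [norm_sub_rev] at this
        linarith
      have h1 : |W i x * pr U V j k y| ≤ B * (en W x + en W y) := by
        rw [pr_eq, mul_add]
        refine (abs_add_le _ _).trans ?_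
        rw [abs_mul, abs_mul, abs_mul, abs_mul]
        have a1 := hBU k y hy
        have a2 := hBV j y hy
        have b1 := ww j y
        have b2 := ww k y
        have c0 : 0 ≤ (en W x + en W y) / 2 := le_trans (by positivity) b1
        calc _ = (|W i x| * |W j y|) * |U k y| + (|W i x| * |W k y|) * |V j y| := by
              rw [← hW]; ring
          _ ≤ (en W x + en W y) / 2 * B + (en W x + en W y) / 2 * B := by gcongr
          _ = _ := by ring
      calc |W i x * (pd j (pd k (Mk θ d R)) (x - y) * pr U V j k y)|
          = |pd j (pd k (Mk θ d R)) (x - y)| * |W i x * pr U V j k y| := by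
            rw [← abs_mul]; congr 1; ring
        _ ≤ (2 * C * K (x - y)) * (B * (en W x + en W y)) := by
            refine mul_le_mul hM h1 (abs_nonneg _) ?_
            positivity
        _ = _ := by ring
    · have : pd j (pd k (Mk θ d R)) (x - y) = 0 := by
        rw [K2_zero h, mul_zero] at hM
        exact abs_nonpos_iff.1 hM
      have h1 := en_nonneg W x
      have h2 := en_nonneg W y
      rw [this]; simp only [zero_mul, mul_zero, abs_zero]
      positivity
  rw [piM, Finset.mul_sum]
  simp only [Finset.mul_sum]
  refine (Finset.abs_sum_le_sum_abs _ _).trans ((Finset.sum_le_sum fun i _ =>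
    (Finset.abs_sum_le_sum_abs _ _).trans (Finset.sum_le_sum fun j _ => key i j)).trans ?_)
  simp only [Fin.sum_univ_two]
  exact le_of_eq (by ring)

/-- Intermediate pressure: the divergence-free condition moves the gradient onto the cut-off. -/
lemma term_mid {θ : E2 → ℝ} (hθ : IsCutoff θ) {C : ℝ} (hC : 1 ≤ C) (hK : KB θ C)
    {U V : Fin 2 → E2 → ℝ} (hU : ∀ k, Sm (U k)) (hV : ∀ k, Sm (V k))
    (hdU : ∀ x, ∑ k, pd k (U k) x = 0) (hdV : ∀ x, ∑ k, pd k (V k) x = 0)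
    {d R B D : ℝ} (hd : 0 < d) (hdR : d ≤ R) (hBU : ∀ i y, ‖y‖ ≤ 6 * R → |U i y| ≤ B)
    (hBV : ∀ i y, ‖y‖ ≤ 6 * R → |V i y| ≤ B) (hD : ∀ i x, |pd i (ph θ R) x| ≤ D) :
    |∫ x, ph θ R x * ∑ i, df U V i x * pd i (piM θ U V d R) x| ≤
      32 * C * B * D * (∫ z, K2 (d / 2) (2 * R) z) * ∫ x in ball 0 (5 * R), en (df U V) x := by
  have hR : 0 < R := by linarith
  have hd2 : 0 < d / 2 := by linarith
  have hd2R : d / 2 ≤ 2 * R := by linarith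
  have hp := ph_sm hθ R
  have hpc := ph_cs hθ hR
  have hWs := df_sm hU hV
  have hP := piM_sm hθ hU hV hd hdR
  have hB0 : 0 ≤ B := (abs_nonneg _).trans (hBU 0 0 (by simp; linarith))
  have hD0 : 0 ≤ D := (abs_nonneg _).trans (hD 0 0)
  have hdW : ∀ x, ∑ k, pd k (df U V k) x = 0 := fun x => by
    have e : ∀ k, pd k (df U V k) x = pd k (U k) x - pd k (V k) x := fun k =>
      congrFun (pd_sub (hU k) (hV k) k) x
    simp only [e, Finset.sum_sub_distrib, hdU, hdV, sub_zero]
  set W := df U V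
  set P := piM θ U V d R with hPdef
  set K := K2 (d / 2) (2 * R) with hKdef
  have i1 : ∀ i, Integrable fun x => (ph θ R x * W i x) * pd i P x := fun i =>
    cs_int ((hp.cont.mul (hWs i).cont).mul (hP.pd i).cont) hpc.mul_right.mul_right
  have i2 : ∀ i, Integrable fun x => (pd i (ph θ R) x * W i x + ph θ R x * pd i (W i) x) * P x :=
    fun i => cs_int ((((hp.pd i).cont.mul (hWs i).cont).add
      (hp.cont.mul ((hWs i).pd i).cont)).mul hP.cont)
      ((pd_cs hpc i).mul_right.add hpc.mul_right).mul_right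
  have e : ∫ x, ph θ R x * ∑ i, W i x * pd i P x = ∫ x, -∑ i, pd i (ph θ R) x * (W i x * P x) := by
    calc _ = ∫ x, ∑ i, (ph θ R x * W i x) * pd i P x := by
          congr 1; funext x; simp only [Fin.sum_univ_two]; ring
      _ = ∑ i, - ∫ x, (pd i (ph θ R) x * W i x + ph θ R x * pd i (W i) x) * P x := by
          rw [integral_finsetSum _ fun i _ => i1 i]
          refine Finset.sum_congr rfl fun i _ => ?_
          rw [ibp (hp.mul (hWs i)) hP hpc.mul_right i, pd_mul hp (hWs i)]
      _ = _ := by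
          rw [Finset.sum_neg_distrib, ← integral_finsetSum _ fun i _ => i2 i, ← integral_neg]
          congr 1; funext x
          have := hdW x
          simp only [Fin.sum_univ_two] at this ⊢
          linear_combination (-ph θ R x * P x) * this
  have hy := young (3 * R) (K2_int hd2 hd2R).1 (K2_nonneg _ _) (fun x hx => K2_zero hx)
    (en_cont hWs) (en_nonneg W)
  have hIK : 0 ≤ ∫ z, K z := integral_nonneg (K2_nonneg _ _)
  have h_int : IntegrableOn (fun x => 16 * C * B * D * ((∫ z, K z) * en W x + cv K (en W) x))
      (ball 0 (3 * R)) :=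
    (((intOn_ball (en_cont hWs) (3 * R)).const_mul (∫ z, K z)).add hy.1).const_mul _
  rw [e]
  refine (abs_int_le (r := 3 * R) (fun x hx => ?_) h_int fun x hx => ?_).trans ?_
  · have : ∀ j, pd j (ph θ R) x = 0 := fun j =>
      pd_zero_off (fun y hy => ph_zero hθ hR hy) j x (by linarith)
    simp [this]
  · have h1 : ∀ i, |pd i (ph θ R) x * (W i x * P x)| ≤
        D * (8 * C * B * ((∫ z, K z) * en W x + cv K (en W) x)) := fun i => by
      rw [abs_mul]
      exact mul_le_mul (hD i x) (piM_le hθ hC hK hU hV hd hdR hBU hBV i hx) (abs_nonneg _) hD0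
    rw [abs_neg]
    refine (Finset.abs_sum_le_sum_abs _ _).trans ((Finset.sum_le_sum fun i _ => h1 i).trans ?_)
    simp only [Fin.sum_univ_two]
    exact le_of_eq (by ring)
  · rw [integral_const_mul, integral_add ((intOn_ball (en_cont hWs) (3 * R)).const_mul _) hy.1,
      integral_const_mul]
    have h1 : ∫ x in ball 0 (3 * R), en W x ≤ ∫ x in ball 0 (5 * R), en W x :=
      ball_mono_int (en_cont hWs) (en_nonneg W) (by linarith)
    have h2 := hy.2
    rw [show 3 * R + 2 * R = 5 * R by ring] at h2
    calc _ ≤ 16 * C * B * D * ((∫ z, K z) * (∫ x in ball 0 (5 * R), en W x) +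
          (∫ z, K z) * ∫ x in ball 0 (5 * R), en W x) := by gcongr
      _ = _ := by ring

/-- The far pressure is bounded on large discs: its kernel decays like `|y|⁻³`, which beats the
growth of the fields, and the Cauchy–Schwarz inequality keeps one factor of the difference. -/
lemma far_le {θ : E2 → ℝ} {C : ℝ} (hC : 1 ≤ C) (hK : KB θ C) {α Ω L : ℝ} (hL : 0 ≤ L)
    {U V : Fin 2 → E2 → ℝ} (hU : Adm α Ω L U) (hV : Adm α Ω L V) {m c : ℝ} (hc : 0 ≤ c)
    (hα : α < 1 / 2) (hm : m ≤ 3)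
    (hW : ∀ r : ℝ, 1 ≤ r → ∫ x in ball 0 r, en (df U V) x ≤ c * r ^ m) {R : ℝ} (hR : 1 ≤ R)
    (i j k : Fin 2) {x : E2} (hx : ‖x‖ < 3 * R) :
    |cv (pd i (pd j (pd k (Bs θ R)))) (pr U V j k) x| ≤
      64 * C * (2 * √c * √L * (3 / (1 / 2 - α)) * R ^ (m / 2 + α - 2)) := by
  set W := df U V with hWdef
  have hWs := df_sm hU.sm hV.sm
  have hcW : Continuous fun y => √(en W y) := (en_cont hWs).sqrt
  have hcU : Continuous fun y => √(en U y) := (en_cont hU.sm).sqrt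
  have hcV : Continuous fun y => √(en V y) := (en_cont hV.sm).sqrt
  set s := m / 2 + 1 + α with hs
  have hs3 : s < 3 := by linarith
  have hR0 : 0 < R := by linarith
  set H : E2 → ℝ := fun y => √(en W y) * √(en U y) + √(en W y) * √(en V y) with hH
  have hHc : Continuous H := (hcW.mul hcU).add (hcW.mul hcV)
  have hH0 : ∀ y, 0 ≤ H y := fun y => by positivity
  have hb : ∀ r : ℝ, 1 ≤ r → ∫ y in ball 0 r, H y ≤ (2 * √c * √L) * r ^ s := by
    intro r hr
    have hr0 : 0 < r := by linarith
    have q : ∀ Z : Fin 2 → E2 → ℝ, Adm α Ω L Z →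
        ∫ y in ball 0 r, √(en W y) * √(en Z y) ≤ (√c * √L) * r ^ s := by
      intro Z hZ
      refine (cs_ball hcW (en_cont hZ.sm).sqrt (fun _ => Real.sqrt_nonneg _)
        (fun _ => Real.sqrt_nonneg _) (X := c * r ^ m) (Y := L * r ^ (2 + 2 * α)) ?_ ?_).trans ?_
      · simp only [Real.sq_sqrt (en_nonneg W _)]; exact hW r hr
      · simp only [Real.sq_sqrt (en_nonneg Z _)]; exact hZ.mor r hr
      · rw [Real.sqrt_mul hc, Real.sqrt_mul hL, Real.sqrt_eq_rpow (r ^ m),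
          Real.sqrt_eq_rpow (r ^ (2 + 2 * α)), ← Real.rpow_mul hr0.le, ← Real.rpow_mul hr0.le]
        have : r ^ s = r ^ (m * (1 / 2)) * r ^ ((2 + 2 * α) * (1 / 2)) := by
          rw [← Real.rpow_add hr0]; congr 1; rw [hs]; ring
        rw [this]
        exact le_of_eq (by ring)
    have i1 : IntegrableOn (fun y => √(en W y) * √(en U y)) (ball 0 r) := intOn_ball (hcW.mul hcU) r
    have i2 : IntegrableOn (fun y => √(en W y) * √(en V y)) (ball 0 r) := intOn_ball (hcW.mul hcV) r
    rw [hH, integral_add i1 i2]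
    have := q U hU
    have := q V hV
    linarith
  obtain ⟨l1, l2⟩ := layer hHc hH0 (by positivity) hs3 hb hR
  have hα' : 0 < 1 / 2 - α := by linarith
  have hκ : 3 / (3 - s) ≤ 3 / (1 / 2 - α) := by
    exact div_le_div_of_nonneg_left (by norm_num) hα' (by rw [hs]; linarith)
  have hsq : ∀ (Z : Fin 2 → E2 → ℝ) k y, |Z k y| ≤ √(en Z y) := fun Z k y =>
    Real.abs_le_sqrt (sq_le_en Z k y)
  have main : |cv (pd i (pd j (pd k (Bs θ R)))) (pr U V j k) x| ≤
      ∫ y, 64 * C * (H y / (R + ‖y‖) ^ 3) := by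
    rw [cv, ← Real.norm_eq_abs]
    refine norm_integral_le_of_norm_le (l1.const_mul _) (Filter.Eventually.of_forall fun y => ?_)
    rw [Real.norm_eq_abs, abs_mul]
    have h1 := (hK R hR0 (x - y)).2.2 i j k
    have h2 : C / (R + ‖x - y‖) ^ 3 ≤ 64 * C / (R + ‖y‖) ^ 3 := by
      rw [div_le_div_iff₀ (by positivity) (by positivity)]
      have h3 : R + ‖y‖ ≤ 4 * (R + ‖x - y‖) := by
        have := norm_sub_norm_le y x
        rw [norm_sub_rev] at this
        have := norm_nonneg (x - y)
        linarith
      have h4 : (R + ‖y‖) ^ 3 ≤ (4 * (R + ‖x - y‖)) ^ 3 := by gcongr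
      calc C * (R + ‖y‖) ^ 3 ≤ C * (4 * (R + ‖x - y‖)) ^ 3 := by gcongr
        _ = _ := by ring
    have h5 : |pr U V j k y| ≤ H y := by
      rw [pr_eq, hH]
      refine (abs_add_le _ _).trans ?_
      rw [abs_mul, abs_mul, mul_comm |V j y|]
      have a1 := hsq W j y
      have a2 := hsq W k y
      have a3 := hsq U k y
      have a4 := hsq V j y
      dsimp only
      gcongr
    calc _ ≤ (64 * C / (R + ‖y‖) ^ 3) * H y :=
          mul_le_mul (h1.trans h2) h5 (abs_nonneg _) (by positivity)
      _ = _ := by ring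
  refine main.trans ?_
  rw [integral_const_mul]
  have e : s - 3 = m / 2 + α - 2 := by rw [hs]; ring
  rw [e] at l2
  have hb2 : 2 * √c * √L * (3 / (3 - s)) * R ^ (m / 2 + α - 2) ≤
      2 * √c * √L * (3 / (1 / 2 - α)) * R ^ (m / 2 + α - 2) := by gcongr
  exact mul_le_mul_of_nonneg_left (l2.trans hb2) (by positivity)

lemma abs_int_ball_le {W : Fin 2 → E2 → ℝ} (hWs : ∀ k, Sm (W k)) {m c : ℝ} (hc : 0 ≤ c)
    (hm : m ≤ 3) (hW : ∀ r : ℝ, 1 ≤ r → ∫ x in ball 0 r, en W x ≤ c * r ^ m) {R : ℝ}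
    (hR : 1 ≤ R) (i : Fin 2) :
    ∫ x in ball 0 (3 * R), |W i x| ≤ 27 * √V2 * √c * R ^ (m / 2 + 1) := by
  have hR0 : 0 < R := by linarith
  have hV := V2_nonneg
  have h := cs_ball (f := fun x => |W i x|) (g := fun _ => 1) (hWs i).cont.abs continuous_const
    (fun _ => abs_nonneg _) (fun _ => zero_le_one) (r := 3 * R) (X := c * (27 * R ^ m))
    (Y := (3 * R) ^ 2 * V2) ?_ ?_
  · simp only [mul_one] at h
    refine h.trans ?_
    have e1 : √((3 * R) ^ 2 * V2) = 3 * R * √V2 := by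
      rw [Real.sqrt_mul (by positivity), Real.sqrt_sq (by positivity)]
    have e2 : √(c * (27 * R ^ m)) = √c * (√27 * R ^ (m / 2)) := by
      rw [Real.sqrt_mul hc, Real.sqrt_mul (by norm_num), Real.sqrt_eq_rpow (R ^ m),
        ← Real.rpow_mul hR0.le]
      congr 3; ring
    have e3 : R ^ (m / 2 + 1) = R ^ (m / 2) * R := by rw [Real.rpow_add hR0, Real.rpow_one]
    have h27 : √27 ≤ 9 := by
      rw [Real.sqrt_le_left (by norm_num)]; norm_num
    rw [e1, e2, e3]
    calc _ = √27 * (3 * √V2 * √c * (R ^ (m / 2) * R)) := by ring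
      _ ≤ 9 * (3 * √V2 * √c * (R ^ (m / 2) * R)) := by gcongr
      _ = _ := by ring
  · have h1 : ∫ x in ball 0 (3 * R), |W i x| ^ 2 ≤ ∫ x in ball 0 (3 * R), en W x :=
      setIntegral_mono (intOn_ball ((hWs i).cont.abs.pow 2) _) (intOn_ball (en_cont hWs) _)
        fun x => by simpa only [sq_abs] using sq_le_en W i x
    refine h1.trans ((hW (3 * R) (by linarith)).trans ?_)
    rw [Real.mul_rpow (by norm_num) hR0.le]
    have : (3 : ℝ) ^ m ≤ 3 ^ (3 : ℝ) := Real.rpow_le_rpow_of_exponent_le (by norm_num) hm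
    have h3 : (3 : ℝ) ^ (3 : ℝ) = 27 := by
      rw [show (3 : ℝ) ^ (3 : ℝ) = (3 : ℝ) ^ ((3 : ℕ) : ℝ) by norm_num, Real.rpow_natCast]; norm_num
    rw [h3] at this
    gcongr
  · rw [setIntegral_const, vol_ball (by positivity)]; simp

/-- The near pressure is small: its kernel has mass proportional to its scale. -/
lemma near_le {θ : E2 → ℝ} (hθ : IsCutoff θ) {C : ℝ} (hC : 1 ≤ C) (hK : KB θ C)
    {U : Fin 2 → E2 → ℝ} (hU : ∀ k, Sm (U k)) {d : ℝ} (hd : 0 < d) (i : Fin 2) (x : E2) :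
    |cv (Dk θ d i) (Qf U) x| ≤ 2 * C * cv (K1 (2 * d)) (gn U) x := by
  have hi : Integrable fun y => K1 (2 * d) (x - y) * gn U y :=
    cvK_integrable (K1_int (by linarith)).1 (fun _ hz => K1_zero hz) (gn_cont hU) x
  rw [cv, cv, ← integral_const_mul, ← Real.norm_eq_abs]
  refine norm_integral_le_of_norm_le (hi.const_mul _) ?_
  have h1 : volume ({x} : Set E2) = 0 := measure_singleton x
  filter_upwards [compl_mem_ae_iff.2 h1] with y hy
  rw [Real.norm_eq_abs, abs_mul, ← mul_assoc]
  exact mul_le_mul (Dk_le hθ hC hK hd i (sub_ne_zero.2 (Ne.symm hy))) (abs_Qf_le U y) (abs_nonneg _)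
    (mul_nonneg (by linarith) (K1_nonneg _ _))

/-- Near and far pressure, tested against the difference. -/
lemma term_nf {θ : E2 → ℝ} (hθ : IsCutoff θ) {C : ℝ} (hC : 1 ≤ C) (hK : KB θ C)
    {U V : Fin 2 → E2 → ℝ} (hU : ∀ k, Sm (U k)) (hV : ∀ k, Sm (V k))
    (hdU : ∀ x, ∑ k, pd k (U k) x = 0) (hdV : ∀ x, ∑ k, pd k (V k) x = 0)
    (hIU : PIf θ U) (hIV : PIf θ V) {d R B Φ : ℝ} (hd : 0 < d)
    (hd1 : d ≤ 1) (hR : 1 ≤ R) (hBU : ∀ i y, ‖y‖ ≤ 6 * R → |U i y| ≤ B)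
    (hBV : ∀ i y, ‖y‖ ≤ 6 * R → |V i y| ≤ B)
    (hΦ : ∀ i j k x, ‖x‖ < 3 * R → |cv (pd i (pd j (pd k (Bs θ R)))) (pr U V j k) x| ≤ Φ)
    (i : Fin 2) :
    |∫ x, ph θ R x * (df U V i x * (PF θ U i x - PF θ V i x - pd i (piM θ U V d R) x))| ≤
      16 * B * C * V2 * d * ((∫ x in ball 0 (5 * R), gn U x) + ∫ x in ball 0 (5 * R), gn V x) +
      4 * Φ * ∫ x in ball 0 (3 * R), |df U V i x| := by
  have hR0 : 0 < R := by linarith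
  have hdR : d ≤ R := by linarith
  have hWs := df_sm hU hV
  have hB0 : 0 ≤ B := (abs_nonneg _).trans (hBU 0 0 (by simp; linarith))
  have hΦ0 : 0 ≤ Φ := (abs_nonneg _).trans (hΦ 0 0 0 0 (by simp; linarith))
  have hVV := V2_nonneg
  have k1 := K1_int (r := 2 * d) (by linarith)
  have yU := young (3 * R) k1.1 (K1_nonneg _) (fun x hx => K1_zero hx) (gn_cont hU) (gn_nonneg U)
  have yV := young (3 * R) k1.1 (K1_nonneg _) (fun x hx => K1_zero hx) (gn_cont hV) (gn_nonneg V)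
  have iW : IntegrableOn (fun x => |df U V i x|) (ball 0 (3 * R)) := intOn_ball (hWs i).cont.abs _
  have dec : ∀ x, PF θ U i x - PF θ V i x - pd i (piM θ U V d R) x =
      (cv (Dk θ d i) (Qf U) x - cv (Dk θ d i) (Qf V) x) +
      ∑ j, ∑ k, cv (pd i (pd j (pd k (Bs θ R)))) (pr U V j k) x := by
    intro x
    obtain ⟨f1, s1⟩ := PF_split hθ hU hdU hIU hd hd1 hR i x
    obtain ⟨f2, s2⟩ := PF_split hθ hV hdV hIV hd hd1 hR i x
    have hp : ∀ (Z : Fin 2 → E2 → ℝ), (∀ k, Sm (Z k)) → ∀ j k, Continuous fun y => Z j y * Z k y :=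
      fun Z hZ j k => (hZ j).cont.mul (hZ k).cont
    have e1 : ∀ j k, cv (pd i (pd j (pd k (Bs θ R)))) (pr U V j k) x =
        cv (pd i (pd j (pd k (Bs θ R)))) (fun y => U j y * U k y) x -
        cv (pd i (pd j (pd k (Bs θ R)))) (fun y => V j y * V k y) x := by
      intro j k
      simp only [cv, pr, mul_sub]
      exact integral_sub (f1 j k) (f2 j k)
    have e2 : ∀ j k, cv (pd i (pd j (pd k (Mk θ d R)))) (pr U V j k) x =
        cv (pd i (pd j (pd k (Mk θ d R)))) (fun y => U j y * U k y) x -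
        cv (pd i (pd j (pd k (Mk θ d R)))) (fun y => V j y * V k y) x := by
      intro j k
      have hM := ((((Mk_sm hθ d R).pd k).pd j).pd i).cont
      have hMc := pd_cs (pd_cs (pd_cs (Mk_cs hθ hd hdR) k) j) i
      have := integral_sub (cv_integrable hM (hp U hU j k) hMc x)
        (cv_integrable hM (hp V hV j k) hMc x)
      simp only [cv, pr, mul_sub]
      exact this
    rw [pd_piM hθ hU hV hd hdR, s1, s2]
    simp only [e1, e2, Finset.sum_sub_distrib]
    ring
  have j1 : IntegrableOn (fun x => 4 * B * C * cv (K1 (2 * d)) (gn U) x) (ball 0 (3 * R)) :=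
    yU.1.const_mul _
  have j2 : IntegrableOn (fun x => 4 * B * C * cv (K1 (2 * d)) (gn V) x) (ball 0 (3 * R)) :=
    yV.1.const_mul _
  have j3 : IntegrableOn (fun x => 4 * B * C * cv (K1 (2 * d)) (gn U) x +
      4 * B * C * cv (K1 (2 * d)) (gn V) x) (ball 0 (3 * R)) := j1.add j2
  have j4 : IntegrableOn (fun x => 4 * Φ * |df U V i x|) (ball 0 (3 * R)) := iW.const_mul _
  have h_int : IntegrableOn (fun x => (4 * B * C * cv (K1 (2 * d)) (gn U) x +
      4 * B * C * cv (K1 (2 * d)) (gn V) x) + 4 * Φ * |df U V i x|) (ball 0 (3 * R)) := j3.add j4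
  refine (abs_int_le (r := 3 * R) (fun x hx => ?_) h_int fun x hx => ?_).trans ?_
  · rw [ph_zero hθ hR0 (by linarith), zero_mul]
  · rw [dec, abs_mul, abs_mul, abs_of_nonneg (ph_nonneg hθ R x)]
    have n1 := near_le hθ hC hK hU hd i x
    have n2 := near_le hθ hC hK hV hd i x
    have w1 : |df U V i x| ≤ 2 * B := by
      have a1 := hBU i x (by linarith)
      have a2 := hBV i x (by linarith)
      exact (abs_sub _ _).trans (by linarith)
    have f1 : |∑ j, ∑ k, cv (pd i (pd j (pd k (Bs θ R)))) (pr U V j k) x| ≤ 4 * Φ := by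
      refine (Finset.abs_sum_le_sum_abs _ _).trans ((Finset.sum_le_sum fun j _ =>
        (Finset.abs_sum_le_sum_abs _ _).trans (Finset.sum_le_sum fun k _ => hΦ i j k x hx)).trans ?_)
      simp only [Fin.sum_univ_two]
      exact le_of_eq (by ring)
    have n3 := (abs_sub (cv (Dk θ d i) (Qf U) x) (cv (Dk θ d i) (Qf V) x)).trans (add_le_add n1 n2)
    have c0 : 0 ≤ 2 * C * cv (K1 (2 * d)) (gn U) x + 2 * C * cv (K1 (2 * d)) (gn V) x :=
      (abs_nonneg _).trans n3
    have t1 := (abs_add_le (cv (Dk θ d i) (Qf U) x - cv (Dk θ d i) (Qf V) x)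
      (∑ j, ∑ k, cv (pd i (pd j (pd k (Bs θ R)))) (pr U V j k) x)).trans (add_le_add n3 f1)
    calc _ ≤ 1 * (|df U V i x| * ((2 * C * cv (K1 (2 * d)) (gn U) x +
          2 * C * cv (K1 (2 * d)) (gn V) x) + 4 * Φ)) := by
          refine mul_le_mul (ph_le_one hθ R x) ?_ (by positivity) zero_le_one
          exact mul_le_mul_of_nonneg_left t1 (abs_nonneg _)
      _ = |df U V i x| * (2 * C * cv (K1 (2 * d)) (gn U) x +
          2 * C * cv (K1 (2 * d)) (gn V) x) + 4 * Φ * |df U V i x| := by ring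
      _ ≤ 2 * B * (2 * C * cv (K1 (2 * d)) (gn U) x +
          2 * C * cv (K1 (2 * d)) (gn V) x) + 4 * Φ * |df U V i x| := by gcongr
      _ = _ := by ring
  · rw [integral_add j3 j4, integral_add j1 j2, integral_const_mul, integral_const_mul,
      integral_const_mul]
    have q : ∀ Z : Fin 2 → E2 → ℝ, (∀ k, Sm (Z k)) → ∫ x in ball 0 (3 * R + 2 * d), gn Z x ≤
        ∫ x in ball 0 (5 * R), gn Z x := fun Z hZ =>
      ball_mono_int (gn_cont hZ) (gn_nonneg Z) (by linarith)
    have u2 := yU.2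
    have v2 := yV.2
    rw [k1.2] at u2 v2
    have u3 : ∫ x in ball 0 (3 * R), cv (K1 (2 * d)) (gn U) x ≤
        2 * V2 * (2 * d) * ∫ x in ball 0 (5 * R), gn U x :=
      u2.trans (mul_le_mul_of_nonneg_left (q U hU) (by positivity))
    have v3 : ∫ x in ball 0 (3 * R), cv (K1 (2 * d)) (gn V) x ≤
        2 * V2 * (2 * d) * ∫ x in ball 0 (5 * R), gn V x :=
      v2.trans (mul_le_mul_of_nonneg_left (q V hV) (by positivity))
    have hBC : 0 ≤ 4 * B * C := by positivity
    have := mul_le_mul_of_nonneg_left u3 hBC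
    have := mul_le_mul_of_nonneg_left v3 hBC
    linarith

/-! ### The energy estimate at a fixed time -/

/-- Half of the rate of change of the localised energy of the difference of two Euler flows, up to
sign. -/
def Jf (θ : E2 → ℝ) (U V : Fin 2 → E2 → ℝ) (R : ℝ) : ℝ :=
  ∫ x, ph θ R x * ∑ i, df U V i x * ((∑ j, U j x * pd j (df U V i) x) +
    (∑ j, df U V j x * pd j (V i) x) + (PF θ U i x - PF θ V i x))

lemma int_add5 {f₁ f₂ f₃ f₄ : E2 → ℝ} {g : Fin 2 → E2 → ℝ} (h₁ : Integrable f₁)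
    (h₂ : Integrable f₂) (h₃ : Integrable f₃) (h₄ : Integrable f₄) (h₅ : ∀ i, Integrable (g i)) :
    (∫ x, f₁ x) + ((∫ x, f₂ x) + ((∫ x, f₃ x) + ((∫ x, f₄ x) + ∑ i, ∫ x, g i x))) =
      ∫ x, (f₁ x + (f₂ x + (f₃ x + (f₄ x + ∑ i, g i x)))) := by
  have k := integrable_finsetSum Finset.univ fun i _ => h₅ i
  have k4 : Integrable fun x => f₄ x + ∑ i, g i x := h₄.add k
  have k3 : Integrable fun x => f₃ x + (f₄ x + ∑ i, g i x) := h₃.add k4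
  have k2 : Integrable fun x => f₂ x + (f₃ x + (f₄ x + ∑ i, g i x)) := h₂.add k3
  rw [integral_add h₁ k2, integral_add h₂ k3, integral_add h₃ k4, integral_add h₄ k,
    integral_finsetSum _ fun i _ => h₅ i]

/-- Decomposition of the energy balance: advection, stretching by the mollified field, stretching by
the mollification error, intermediate pressure, and near and far pressure. -/
lemma Jf_split {θ : E2 → ℝ} (hθ : IsCutoff θ) {U V : Fin 2 → E2 → ℝ} (hU : ∀ k, Sm (U k))
    (hV : ∀ k, Sm (V k)) (hPU : ∀ i, Continuous (PF θ U i)) (hPV : ∀ i, Continuous (PF θ V i))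
    {d R : ℝ} (hd : 0 < d) (hdR : d ≤ R) :
    Jf θ U V R = (∫ x, ph θ R x * ∑ i, ∑ j, df U V i x * (U j x * pd j (df U V i) x)) +
      ((∫ x, ph θ R x * ∑ i, ∑ j, df U V i x * (df U V j x * pd j (bf θ d (V i)) x)) +
      ((∫ x, ph θ R x * ∑ i, ∑ j, df U V i x *
        (df U V j x * pd j (fun y => V i y - bf θ d (V i) y) x)) +
      ((∫ x, ph θ R x * ∑ i, df U V i x * pd i (piM θ U V d R) x) +
      ∑ i, ∫ x, ph θ R x *
        (df U V i x * (PF θ U i x - PF θ V i x - pd i (piM θ U V d R) x))))) := by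
  have hR : 0 < R := by linarith
  have hp := ph_sm hθ R
  have hpc := ph_cs hθ hR
  have hW := df_sm hU hV
  have hP := piM_sm hθ hU hV hd hdR
  have hb : ∀ i, Sm (bf θ d (V i)) := fun i => bf_sm hθ hd (hV i).cont
  have hi : ∀ {f : E2 → ℝ}, Continuous f → Integrable fun x => ph θ R x * f x := fun hf =>
    cs_int (hp.cont.mul hf) hpc.mul_right
  have cW := fun i => (hW i).cont
  have cU := fun i => (hU i).cont
  have cdW := fun i j => ((hW i).pd j).cont
  have cb := fun i j => ((hb i).pd j).cont
  have hVb : ∀ i, Sm (fun y => V i y - bf θ d (V i) y) := fun i => (hV i).sub (hb i)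
  have ca := fun i j => ((hVb i).pd j).cont
  have cP := fun i => (hP.pd i).cont
  have i1 := hi (f := fun x => ∑ i, ∑ j, df U V i x * (U j x * pd j (df U V i) x))
    (continuous_finsetSum _ fun i _ => continuous_finsetSum _ fun j _ =>
      (cW i).mul ((cU j).mul (cdW i j)))
  have i2 := hi (f := fun x => ∑ i, ∑ j, df U V i x * (df U V j x * pd j (bf θ d (V i)) x))
    (continuous_finsetSum _ fun i _ => continuous_finsetSum _ fun j _ =>
      (cW i).mul ((cW j).mul (cb i j)))
  have i3 := hi (f := fun x => ∑ i, ∑ j, df U V i x *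
        (df U V j x * pd j (fun y => V i y - bf θ d (V i) y) x))
    (continuous_finsetSum _ fun i _ => continuous_finsetSum _ fun j _ =>
      (cW i).mul ((cW j).mul (ca i j)))
  have i4 := hi (f := fun x => ∑ i, df U V i x * pd i (piM θ U V d R) x)
    (continuous_finsetSum _ fun i _ => (cW i).mul (cP i))
  have i5 := fun i => hi
    (f := fun x => df U V i x * (PF θ U i x - PF θ V i x - pd i (piM θ U V d R) x))
    ((cW i).mul (((hPU i).sub (hPV i)).sub (cP i)))
  rw [int_add5 i1 i2 i3 i4 i5]
  rw [Jf]
  congr 1; funext x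
  have e : ∀ i j, pd j (fun y => V i y - bf θ d (V i) y) x = pd j (V i) x - pd j (bf θ d (V i)) x :=
    fun i j => congrFun (pd_sub (hV i) (hb i) j) x
  simp only [e, Fin.sum_univ_two]
  ring

set_option maxHeartbeats 2000000 in
/-- The energy estimate at a fixed time. Localised to a disc of radius `R`, the energy of the
difference grows at a logarithmic rate, up to an error gaining `R^(-1/4)` over the growth already
known, and a remainder which is small with `d`. -/
lemma key_fixed {θ : E2 → ℝ} (hθ : IsCutoff θ) {α Ω L : ℝ} (hΩ : 0 ≤ Ω) (hL : 0 ≤ L)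
    (hα : α < 1 / 2) :
    ∃ A : ℝ, 0 ≤ A ∧ ∀ U V, Adm α Ω L U → Adm α Ω L V → PIf θ U → PIf θ V →
      (∀ i, Continuous (PF θ U i)) → (∀ i, Continuous (PF θ V i)) →
      ∀ m c : ℝ, m ≤ 3 → 0 ≤ c →
      (∀ r : ℝ, 1 ≤ r → ∫ x in ball 0 r, en (df U V) x ≤ c * r ^ m) →
      ∀ d R : ℝ, 0 < d → d ≤ 1 → 1 ≤ R →
      |Jf θ U V R| ≤ A * (1 + Real.log (R / d)) *
        ((∫ x, ph θ R x * en (df U V) x) + c * R ^ (m - 1 / 4)) + A * d * R ^ 4 := by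
  obtain ⟨C, hC, hK⟩ := kernel_bounds hθ
  change KB θ C at hK
  obtain ⟨D, hD1, hD⟩ := ph_bounds hθ
  obtain ⟨A₁, hA₁, hvel⟩ := vel_bounds hθ hΩ hL
  obtain ⟨A₂, hA₂, hens⟩ := enstrophy hθ (Ω := Ω) hL
  have hV2 := V2_nonneg
  have hα' : 0 < 1 / 2 - α := by linarith
  set κ := 3 / (1 / 2 - α) with hκ
  have hκ0 : 0 < κ := by positivity
  set a₁ := 54 * D * A₁ with ha1
  set a₂ := 4 * A₁ with ha2
  set a₃ := 432 * A₁ * ((D + 1) * L + A₂) with ha3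
  set a₄ := 32000 * C * A₁ * D * V2 with ha4
  set a₅ := 16000 * A₁ * C * V2 * A₂ with ha5
  set a₆ := 27648 * C * √L * κ * √V2 with ha6
  have ha1' : 0 ≤ a₁ := by positivity
  have ha2' : 0 ≤ a₂ := by positivity
  have ha3' : 0 ≤ a₃ := by positivity
  have ha4' : 0 ≤ a₄ := by positivity
  have ha5' : 0 ≤ a₅ := by positivity
  have ha6' : 0 ≤ a₆ := by positivity
  refine ⟨a₁ + a₂ + a₃ + a₄ + a₅ + a₆, by positivity,
    fun U V hU hV hIU hIV hPU hPV m c hm hc hW d R hd hd1 hR => ?_⟩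
  have hR0 : 0 < R := by linarith
  have hdR : d ≤ R := by linarith
  have hα2 : α ≤ 1 / 2 := hα.le
  set F := ∫ x, ph θ R x * en (df U V) x with hF
  have hF0 : 0 ≤ F := integral_nonneg fun x => mul_nonneg (ph_nonneg hθ R x) (en_nonneg _ x)
  set X := c * R ^ (m - 1 / 4) with hX
  have hX0 : 0 ≤ X := by positivity
  set l := Real.log (R / d) with hl
  have hl0 : 0 ≤ l := Real.log_nonneg (by rw [le_div_iff₀ hd]; linarith)
  have hWs := df_sm hU.sm hV.sm
  set B := 2 * A₁ * R ^ (3 / 4 : ℝ) with hB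
  have hB0 : 0 ≤ B := by positivity
  have hBR : B ≤ 2 * A₁ * R := by
    have : R ^ (3 / 4 : ℝ) ≤ R ^ (1 : ℝ) := Real.rpow_le_rpow_of_exponent_le hR (by norm_num)
    rw [Real.rpow_one] at this
    exact mul_le_mul_of_nonneg_left this (by positivity)
  have hbd : ∀ Z, Adm α Ω L Z → ∀ i y, ‖y‖ ≤ 6 * R → |Z i y| ≤ B := by
    intro Z hZ i y hy
    refine ((hvel α hα2 Z hZ (2 * R) (by linarith)).1 i y (by linarith)).trans ?_
    rw [Real.mul_rpow (by norm_num) hR0.le]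
    have h2 : (2 : ℝ) ^ (3 / 4 : ℝ) ≤ 2 ^ (1 : ℝ) :=
      Real.rpow_le_rpow_of_exponent_le (by norm_num) (by norm_num)
    rw [Real.rpow_one] at h2
    calc A₁ * (2 ^ (3 / 4 : ℝ) * R ^ (3 / 4 : ℝ)) ≤ A₁ * (2 * R ^ (3 / 4 : ℝ)) := by gcongr
      _ = B := by rw [hB]; ring
  have hball : ∀ q : ℝ, 1 ≤ q → ∫ x in ball 0 (q * R), en (df U V) x ≤ q ^ 3 * (c * R ^ m) := by
    intro q hq
    refine (hW (q * R) (by nlinarith)).trans ?_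
    rw [Real.mul_rpow (by linarith) hR0.le]
    have : q ^ m ≤ q ^ ((3 : ℕ) : ℝ) := Real.rpow_le_rpow_of_exponent_le hq (by exact_mod_cast hm)
    rw [Real.rpow_natCast] at this
    calc c * (q ^ m * R ^ m) ≤ c * (q ^ 3 * R ^ m) := by gcongr
      _ = _ := by ring
  have hen : ∀ q : ℝ, 0 ≤ ∫ x in ball 0 q, en (df U V) x := fun q =>
    integral_nonneg (en_nonneg _)
  have hsc : B * (D / R) * (c * R ^ m) = 2 * A₁ * D * X := by
    have : R ^ (m - 1 / 4) * R = R ^ (3 / 4 : ℝ) * R ^ m := by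
      rw [← Real.rpow_add hR0, ← Real.rpow_add_one hR0.ne']; congr 1; ring
    rw [hB, hX, show R ^ (m - 1 / 4) = R ^ (3 / 4 : ℝ) * R ^ m / R by
      rw [eq_div_iff hR0.ne', this]]
    ring
  have hDn : ∀ i x, |pd i (ph θ R) x| ≤ D / R := fun i x => (hD R hR0 x).1 i
  have hDR : D / R ≤ D := div_le_self (by linarith) hR
  have hv := (hvel α hα2 V hV R hR).2 d hd hdR
  -- advection
  have t1 : |∫ x, ph θ R x * ∑ i, ∑ j, df U V i x * (U j x * pd j (df U V i) x)| ≤ a₁ * X := by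
    refine (term_adv hθ hU.sm hU.div hWs hR0 (by positivity)
      (fun i x hx => hbd U hU i x (by linarith)) hDn).trans ?_
    calc _ ≤ D / R * B * (3 ^ 3 * (c * R ^ m)) := by
          gcongr; exact hball 3 (by norm_num)
      _ = 27 * (B * (D / R) * (c * R ^ m)) := by ring
      _ = _ := by rw [hsc, ha1]; ring
  -- stretching by the mollified field
  have t2 : |∫ x, ph θ R x * ∑ i, ∑ j, df U V i x * (df U V j x * pd j (bf θ d (V i)) x)| ≤
      a₂ * ((1 + l) * F) := by
    refine (term_stretch hθ hWs hR0 (fun i j x hx => hv.2 i j x hx)).trans (le_of_eq ?_)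
    rw [ha2]; ring
  -- stretching by the remainder of the mollification
  have t3 : |∫ x, ph θ R x * ∑ i, ∑ j, df U V i x *
      (df U V j x * pd j (fun y => V i y - bf θ d (V i) y) x)| ≤ a₃ * (d * R ^ 4) := by
    have h3R : 1 ≤ 3 * R := by linarith
    have hb : ∀ i, Sm (bf θ d (V i)) := fun i => bf_sm hθ hd (hV.sm i).cont
    refine (term_small hθ hWs (a := fun i y => V i y - bf θ d (V i) y)
      (fun i => (hV.sm i).sub (hb i)) hR0 hDn (fun i x => hv.1 i x)).trans ?_
    have e1 : ∫ x in ball 0 (3 * R), en (df U V) x ≤ 108 * L * R ^ 3 := by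
      have : ∫ x in ball 0 (3 * R), en (df U V) x ≤
          ∫ x in ball 0 (3 * R), (2 * en U x + 2 * en V x) :=
        setIntegral_mono (intOn_ball (en_cont hWs) _)
          (intOn_ball ((continuous_const.mul (en_cont hU.sm)).add
            (continuous_const.mul (en_cont hV.sm))) _) fun x => by
            simp only [en, df, Fin.sum_univ_two]
            nlinarith [sq_nonneg (U 0 x + V 0 x), sq_nonneg (U 1 x + V 1 x)]
      rw [integral_add ((intOn_ball (en_cont hU.sm) _).const_mul 2)
        ((intOn_ball (en_cont hV.sm) _).const_mul 2), integral_const_mul, integral_const_mul] at this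
      have := hU.mor3 hα2 hL h3R
      have := hV.mor3 hα2 hL h3R
      nlinarith
    have e2 : ∫ x in ball 0 (3 * R), gn (df U V) x ≤ 108 * A₂ * R ^ 3 := by
      have : ∫ x in ball 0 (3 * R), gn (df U V) x ≤
          ∫ x in ball 0 (3 * R), (2 * gn U x + 2 * gn V x) :=
        setIntegral_mono (intOn_ball (gn_cont hWs) _)
          (intOn_ball ((continuous_const.mul (gn_cont hU.sm)).add
            (continuous_const.mul (gn_cont hV.sm))) _) fun x => by
            have e : ∀ j k, pd j (df U V k) x = pd j (U k) x - pd j (V k) x := fun j k =>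
              congrFun (pd_sub (hU.sm k) (hV.sm k) j) x
            simp only [gn, e, Fin.sum_univ_two]
            nlinarith [sq_nonneg (pd 0 (U 0) x + pd 0 (V 0) x), sq_nonneg (pd 0 (U 1) x + pd 0 (V 1) x),
              sq_nonneg (pd 1 (U 0) x + pd 1 (V 0) x), sq_nonneg (pd 1 (U 1) x + pd 1 (V 1) x)]
      rw [integral_add ((intOn_ball (gn_cont hU.sm) _).const_mul 2)
        ((intOn_ball (gn_cont hV.sm) _).const_mul 2), integral_const_mul, integral_const_mul] at this
      have := hens α hα2 U hU (3 * R) h3R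
      have := hens α hα2 V hV (3 * R) h3R
      nlinarith
    have hR34 : R ^ 3 ≤ R ^ 4 := pow_le_pow_right₀ hR (by norm_num)
    calc _ ≤ 4 * (A₁ * d) * ((D + 1) * (108 * L * R ^ 3) + 108 * A₂ * R ^ 3) := by
          gcongr
          exact hen _
      _ = a₃ * (d * R ^ 3) := by rw [ha3]; ring
      _ ≤ _ := by gcongr
  -- intermediate pressure
  have t4 : |∫ x, ph θ R x * ∑ i, df U V i x * pd i (piM θ U V d R) x| ≤ a₄ * ((1 + l) * X) := by
    refine (term_mid hθ hC hK hU.sm hV.sm hU.div hV.div hd hdR (hbd U hU) (hbd V hV) hDn).trans ?_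
    rw [(K2_int (d := d / 2) (r := 2 * R) (by linarith) (by linarith)).2]
    have hlog : Real.log (2 * R / (d / 2)) ≤ 2 * (1 + l) := by
      have e : 2 * R / (d / 2) = 4 * (R / d) := by field_simp; ring
      rw [e, Real.log_mul (by norm_num) (by positivity)]
      have h4 : Real.log 4 ≤ 2 := by
        rw [show (4 : ℝ) = 2 ^ 2 by norm_num, Real.log_pow]
        have := Real.log_two_lt_d9
        push_cast; linarith
      linarith
    have hlog0 : 0 ≤ Real.log (2 * R / (d / 2)) :=
      Real.log_nonneg (by rw [le_div_iff₀ (by linarith)]; linarith)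
    calc _ ≤ 32 * C * B * (D / R) * (2 * V2 * (2 * (1 + l))) * (5 ^ 3 * (c * R ^ m)) := by
          gcongr
          · exact hen _
          · exact hball 5 (by norm_num)
      _ = 16000 * C * V2 * (1 + l) * (B * (D / R) * (c * R ^ m)) := by ring
      _ = _ := by rw [hsc, ha4]; ring
  -- near and far pressure
  have t5 : ∀ i, |∫ x, ph θ R x *
      (df U V i x * (PF θ U i x - PF θ V i x - pd i (piM θ U V d R) x))| ≤
      a₅ / 2 * (d * R ^ 4) + a₆ / 2 * X := by
    intro i
    refine (term_nf hθ hC hK hU.sm hV.sm hU.div hV.div hIU hIV hd hd1 hR (hbd U hU) (hbd V hV)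
      (fun i j k x hx => far_le hC hK hL hU hV hc hα hm hW hR i j k hx) i).trans ?_
    have h5 : ∀ Z, Adm α Ω L Z → ∫ x in ball 0 (5 * R), gn Z x ≤ 125 * A₂ * R ^ 3 := fun Z hZ => by
      have := hens α hα2 Z hZ (5 * R) (by linarith)
      linarith
    have f1 := h5 U hU
    have f2 := h5 V hV
    have f3 := abs_int_ball_le hWs hc hm hW hR i
    have g1 : 16 * B * C * V2 * d * ((∫ x in ball 0 (5 * R), gn U x) +
        ∫ x in ball 0 (5 * R), gn V x) ≤ a₅ / 2 * (d * R ^ 4) := by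
      have n1 : 0 ≤ ∫ x in ball 0 (5 * R), gn U x := integral_nonneg (gn_nonneg U)
      have n2 : 0 ≤ ∫ x in ball 0 (5 * R), gn V x := integral_nonneg (gn_nonneg V)
      calc _ ≤ 16 * (2 * A₁ * R) * C * V2 * d * (125 * A₂ * R ^ 3 + 125 * A₂ * R ^ 3) := by gcongr
        _ = _ := by rw [ha5]; ring
    have g2 : 4 * (64 * C * (2 * √c * √L * (3 / (1 / 2 - α)) * R ^ (m / 2 + α - 2))) *
        ∫ x in ball 0 (3 * R), |df U V i x| ≤ a₆ / 2 * X := by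
      have e1 : R ^ (m / 2 + α - 2) * R ^ (m / 2 + 1) ≤ R ^ (m - 1 / 4) := by
        rw [← Real.rpow_add hR0]
        exact Real.rpow_le_rpow_of_exponent_le hR (by linarith)
      have e2 : √c * √c = c := Real.mul_self_sqrt hc
      calc _ ≤ 4 * (64 * C * (2 * √c * √L * κ * R ^ (m / 2 + α - 2))) *
            (27 * √V2 * √c * R ^ (m / 2 + 1)) := by rw [← hκ]; gcongr
        _ = a₆ / 2 * (√c * √c * (R ^ (m / 2 + α - 2) * R ^ (m / 2 + 1))) := by rw [ha6]; ring
        _ ≤ _ := by rw [e2, hX]; gcongr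
    exact add_le_add g1 g2
  rw [Jf_split hθ hU.sm hV.sm hPU hPV hd hdR]
  have t6 := t5 0
  have t7 := t5 1
  rw [Fin.sum_univ_two (f := fun i => ∫ x, ph θ R x *
      (df U V i x * (PF θ U i x - PF θ V i x - pd i (piM θ U V d R) x)))]
  refine (abs_add_le _ _).trans ((add_le_add t1 ((abs_add_le _ _).trans (add_le_add t2
    ((abs_add_le _ _).trans (add_le_add t3 ((abs_add_le _ _).trans (add_le_add t4
    ((abs_add_le _ _).trans (add_le_add t6 t7))))))))).trans ?_)
  have hlX : X ≤ (1 + l) * X := by nlinarith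
  have hlF : 0 ≤ (1 + l) * F := by positivity
  have hdR4 : 0 ≤ d * R ^ 4 := by positivity
  have hlX0 : 0 ≤ (1 + l) * X := by positivity
  have s1 : a₁ * X ≤ a₁ * ((1 + l) * X) := by gcongr
  have s6 : a₆ * X ≤ a₆ * ((1 + l) * X) := by gcongr
  have p : ∀ {a b : ℝ}, 0 ≤ a → 0 ≤ b → 0 ≤ a * b := fun ha hb => mul_nonneg ha hb
  have := p ha1' hlF
  have := p ha3' hlF
  have := p ha4' hlF
  have := p ha5' hlF
  have := p ha6' hlF
  have := p ha1' hdR4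
  have := p ha2' hdR4
  have := p ha4' hdR4
  have := p ha6' hdR4
  have := p ha2' hlX0
  have := p ha3' hlX0
  have := p ha5' hlX0
  have e : (a₁ + a₂ + a₃ + a₄ + a₅ + a₆) * (1 + l) * (F + X) +
      (a₁ + a₂ + a₃ + a₄ + a₅ + a₆) * d * R ^ 4 =
      (a₁ + a₂ + a₃ + a₄ + a₅ + a₆) * ((1 + l) * F) + (a₁ + a₂ + a₃ + a₄ + a₅ + a₆) * ((1 + l) * X) +
      (a₁ + a₂ + a₃ + a₄ + a₅ + a₆) * (d * R ^ 4) := by ring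
  rw [e]
  clear_value a₁ a₂ a₃ a₄ a₅ a₆
  linarith

/-! ### Growth bootstrap -/

/-- Grönwall's inequality for a function vanishing at the left end of the interval. -/
lemma gron {a b Λ β : ℝ} {F F' : ℝ → ℝ} (hc : ContinuousOn F (Set.Icc a b))
    (hd : ∀ t ∈ Set.Ioo a b, HasDerivAt F (F' t) t) (h0 : F a = 0) (hΛ : 0 ≤ Λ) (hβ : 0 ≤ β)
    (h : ∀ t ∈ Set.Ioo a b, F' t ≤ Λ * F t + β) {t : ℝ} (ht : t ∈ Set.Icc a b) :
    F t ≤ β * (t - a) * Real.exp (Λ * (t - a)) := by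
  set g : ℝ → ℝ := fun s => Real.exp (-Λ * (s - a)) * F s - β * (s - a) with hg
  have hgd : ∀ s ∈ Set.Ioo a b, HasDerivAt g
      (Real.exp (-Λ * (s - a)) * (-Λ) * F s + Real.exp (-Λ * (s - a)) * F' s - β) s := by
    intro s hs
    have e1 : HasDerivAt (fun s : ℝ => s - a) 1 s := (hasDerivAt_id s).sub_const a
    have e2 := (e1.const_mul (-Λ)).exp
    exact ((e2.mul (hd s hs)).sub (e1.const_mul β)).congr_deriv (by simp only [mul_one])
  have anti : AntitoneOn g (Set.Icc a b) := by
    refine antitoneOn_of_deriv_nonpos (convex_Icc a b) ?_ ?_ ?_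
    · exact ((by fun_prop : Continuous fun s : ℝ => Real.exp (-Λ * (s - a))).continuousOn.mul
        hc).sub (by fun_prop : Continuous fun s : ℝ => β * (s - a)).continuousOn
    · rw [interior_Icc]
      exact fun s hs => (hgd s hs).differentiableAt.differentiableWithinAt
    · rw [interior_Icc]
      intro s hs
      rw [(hgd s hs).deriv]
      have h1 := h s hs
      have h2 : Real.exp (-Λ * (s - a)) ≤ 1 := by
        rw [Real.exp_le_one_iff]; nlinarith [hs.1]
      have h3 := Real.exp_pos (-Λ * (s - a))
      nlinarith [mul_le_mul_of_nonneg_left h1 h3.le, mul_le_mul_of_nonneg_right h2 hβ]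
  have := anti ⟨le_rfl, ht.1.trans ht.2⟩ ht ht.1
  simp only [hg, h0, sub_self, mul_zero] at this
  have e : Real.exp (Λ * (t - a)) * Real.exp (-Λ * (t - a)) = 1 := by
    rw [← Real.exp_add, ← Real.exp_zero]; congr 1; ring
  have h3 := Real.exp_pos (Λ * (t - a))
  have : Real.exp (-Λ * (t - a)) * F t ≤ β * (t - a) := by linarith
  calc F t = Real.exp (Λ * (t - a)) * (Real.exp (-Λ * (t - a)) * F t) := by
        rw [← mul_assoc, e, one_mul]
    _ ≤ Real.exp (Λ * (t - a)) * (β * (t - a)) := by gcongr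
    _ = _ := by ring

/-- One step of the bootstrap: on a short time interval the growth exponent improves by `1/8`.
The logarithmic rate costs an arbitrarily small power of `R` there. -/
lemma boot_step {A a b : ℝ} (hA : 0 ≤ A) (hb1 : b - a ≤ 1) (hbA : 224 * A * (b - a) ≤ 1)
    {f F F' : ℝ → ℝ → ℝ}
    (hc : ∀ R, 1 ≤ R → ContinuousOn (F R) (Set.Icc a b))
    (hd : ∀ R, 1 ≤ R → ∀ t ∈ Set.Ioo a b, HasDerivAt (F R) (F' R t) t)
    (h0 : ∀ R, 1 ≤ R → F R a = 0)
    (hf : ∀ R, 1 ≤ R → ∀ t ∈ Set.Icc a b, f R t ≤ F R t)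
    (hk : ∀ m c : ℝ, m ≤ 3 → 0 ≤ c → ∀ t ∈ Set.Ioo a b, (∀ r, 1 ≤ r → f r t ≤ c * r ^ m) →
      ∀ R, 1 ≤ R → F' R t ≤
        2 * A * (1 + 7 * Real.log R) * (F R t + c * R ^ (m - 1 / 4)) + 2 * A * R ^ (-2 : ℝ))
    {m c : ℝ} (hm : m ≤ 3) (hm1 : -1 ≤ m) (hc0 : 0 ≤ c)
    (hyp : ∀ t ∈ Set.Icc a b, ∀ r, 1 ≤ r → f r t ≤ c * r ^ m) :
    ∃ c', 0 ≤ c' ∧ ∀ t ∈ Set.Icc a b, ∀ r, 1 ≤ r → f r t ≤ c' * r ^ (m - 1 / 8) := by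
  refine ⟨(226 * A * c + 2 * A) * Real.exp 1, by positivity, fun t ht R hR => ?_⟩
  have hR0 : 0 < R := by linarith
  refine (hf R hR t ht).trans ?_
  have hlog0 : 0 ≤ Real.log R := Real.log_nonneg hR
  have hlog : Real.log R ≤ 16 * R ^ (1 / 16 : ℝ) := by
    have := Real.log_le_rpow_div hR0.le (show (0 : ℝ) < 1 / 16 by norm_num)
    linarith
  have hR16 : 1 ≤ R ^ (1 / 16 : ℝ) := Real.one_le_rpow hR (by norm_num)
  set Λ := 2 * A * (1 + 7 * Real.log R) with hΛ
  set β := Λ * (c * R ^ (m - 1 / 4)) + 2 * A * R ^ (-2 : ℝ) with hβ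
  have hΛ0 : 0 ≤ Λ := by positivity
  have hβ0 : 0 ≤ β := by positivity
  have g := gron (hc R hR) (hd R hR) (h0 R hR) hΛ0 hβ0 (fun s hs => by
    have := hk m c hm hc0 s hs (fun r hr => hyp s ⟨hs.1.le, hs.2.le⟩ r hr) R hR
    rw [hβ]; linarith) ht
  have hta : 0 ≤ t - a := by linarith [ht.1]
  have hta1 : t - a ≤ b - a := by linarith [ht.2]
  have e1 : Real.exp (Λ * (t - a)) ≤ Real.exp 1 * R ^ (1 / 16 : ℝ) := by
    rw [Real.rpow_def_of_pos hR0, ← Real.exp_add, Real.exp_le_exp, hΛ]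
    have h1 : A * (t - a) ≤ 1 / 224 := by nlinarith
    have h2 : 0 ≤ A * (t - a) := by positivity
    nlinarith [mul_le_mul_of_nonneg_right h1 hlog0]
  have e2 : β ≤ (226 * A * c + 2 * A) * R ^ (m - 3 / 16) := by
    have h1 : Λ ≤ 226 * A * R ^ (1 / 16 : ℝ) := by
      have : 1 + 7 * Real.log R ≤ 113 * R ^ (1 / 16 : ℝ) := by linarith
      calc Λ ≤ 2 * A * (113 * R ^ (1 / 16 : ℝ)) := by rw [hΛ]; gcongr
        _ = _ := by ring
    have h2 : R ^ (-2 : ℝ) ≤ R ^ (m - 3 / 16) :=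
      Real.rpow_le_rpow_of_exponent_le hR (by linarith)
    have h3 : R ^ (1 / 16 : ℝ) * R ^ (m - 1 / 4) = R ^ (m - 3 / 16) := by
      rw [← Real.rpow_add hR0]; congr 1; ring
    calc β ≤ 226 * A * R ^ (1 / 16 : ℝ) * (c * R ^ (m - 1 / 4)) + 2 * A * R ^ (m - 3 / 16) := by
          rw [hβ]; gcongr
      _ = 226 * A * c * (R ^ (1 / 16 : ℝ) * R ^ (m - 1 / 4)) + 2 * A * R ^ (m - 3 / 16) := by ring
      _ = _ := by rw [h3]; ring
  have e3 : R ^ (m - 3 / 16) * R ^ (1 / 16 : ℝ) = R ^ (m - 1 / 8) := by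
    rw [← Real.rpow_add hR0]; congr 1; ring
  calc F R t ≤ β * (t - a) * Real.exp (Λ * (t - a)) := g
    _ ≤ β * 1 * Real.exp (Λ * (t - a)) := by gcongr; linarith
    _ ≤ (226 * A * c + 2 * A) * R ^ (m - 3 / 16) * 1 * (Real.exp 1 * R ^ (1 / 16 : ℝ)) := by
        gcongr
    _ = (226 * A * c + 2 * A) * Real.exp 1 * (R ^ (m - 3 / 16) * R ^ (1 / 16 : ℝ)) := by ring
    _ = _ := by rw [e3]

/-- Iterating the bootstrap brings the growth exponent below zero, so that a nondecreasing function
of the radius must vanish. -/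
lemma boot {A a b : ℝ} (hA : 0 ≤ A) (hb1 : b - a ≤ 1) (hbA : 224 * A * (b - a) ≤ 1)
    {f F F' : ℝ → ℝ → ℝ}
    (hc : ∀ R, 1 ≤ R → ContinuousOn (F R) (Set.Icc a b))
    (hd : ∀ R, 1 ≤ R → ∀ t ∈ Set.Ioo a b, HasDerivAt (F R) (F' R t) t)
    (h0 : ∀ R, 1 ≤ R → F R a = 0)
    (hf : ∀ R, 1 ≤ R → ∀ t ∈ Set.Icc a b, f R t ≤ F R t)
    (hk : ∀ m c : ℝ, m ≤ 3 → 0 ≤ c → ∀ t ∈ Set.Ioo a b, (∀ r, 1 ≤ r → f r t ≤ c * r ^ m) →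
      ∀ R, 1 ≤ R → F' R t ≤
        2 * A * (1 + 7 * Real.log R) * (F R t + c * R ^ (m - 1 / 4)) + 2 * A * R ^ (-2 : ℝ))
    {c : ℝ} (hc0 : 0 ≤ c) (hyp : ∀ t ∈ Set.Icc a b, ∀ r, 1 ≤ r → f r t ≤ c * r ^ (3 : ℝ))
    (hmono : ∀ t ∈ Set.Icc a b, ∀ r s, 1 ≤ r → r ≤ s → f r t ≤ f s t) :
    ∀ t ∈ Set.Icc a b, ∀ r, 1 ≤ r → f r t ≤ 0 := by
  have ind : ∀ n : ℕ, n ≤ 25 → ∃ c', 0 ≤ c' ∧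
      ∀ t ∈ Set.Icc a b, ∀ r, 1 ≤ r → f r t ≤ c' * r ^ (3 - (n : ℝ) / 8) := by
    intro n
    induction n with
    | zero => exact fun _ => ⟨c, hc0, by simpa using hyp⟩
    | succ n ih =>
      intro hn
      obtain ⟨c₁, hc₁, h₁⟩ := ih (by omega)
      have hn' : (n : ℝ) ≤ 24 := by exact_mod_cast (by omega : n ≤ 24)
      have hn0 : (0 : ℝ) ≤ n := n.cast_nonneg
      obtain ⟨c₂, hc₂, h₂⟩ := boot_step hA hb1 hbA hc hd h0 hf hk (by linarith) (by linarith) hc₁ h₁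
      refine ⟨c₂, hc₂, fun t ht r hr => (h₂ t ht r hr).trans_eq ?_⟩
      congr 2; push_cast; ring
  obtain ⟨c', hc', h⟩ := ind 25 le_rfl
  intro t ht r hr
  have lim : Filter.Tendsto (fun s : ℝ => c' * s ^ (-(1 / 8) : ℝ)) Filter.atTop (nhds (c' * 0)) :=
    (tendsto_rpow_neg_atTop (by norm_num)).const_mul c'
  rw [mul_zero] at lim
  refine ge_of_tendsto lim ?_
  filter_upwards [Filter.eventually_ge_atTop r] with s hs
  refine (hmono t ht r s hr hs).trans ((h t ht s (hr.trans hs)).trans_eq ?_)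
  norm_num

/-! ### From Yudovich solutions to admissible fields -/

/-- The coordinate functions of a planar vector field. -/
def cp (u : E2 → E2) (k : Fin 2) (y : E2) : ℝ := u y k

/-- Space-time domain of the solutions. -/
abbrev dom : Set (ℝ × E2) := Set.Ici 0 ×ˢ Set.univ

/-- Time derivative of the `i`-th coordinate of a time-dependent field, one-sided at `t = 0`. -/
def acc (u : ℝ → E2 → E2) (i : Fin 2) (q : ℝ × E2) : ℝ :=
  fderivWithin ℝ (fun q : ℝ × E2 => u q.1 q.2) dom q (1, 0) i

lemma dom_ud : UniqueDiffOn ℝ dom := (uniqueDiffOn_Ici 0).prod uniqueDiffOn_univ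

section
variable {θ : E2 → ℝ} {u : ℝ → E2 → E2}

lemma sol_smv (h : IsYudovichSolution θ u) {t : ℝ} (ht : 0 ≤ t) : ContDiff ℝ (⊤ : ℕ∞) (u t) := by
  rw [← contDiffOn_univ]
  exact h.1.comp (f := fun x : E2 => (t, x)) (contDiff_const.prodMk contDiff_id).contDiffOn
    fun x _ => ⟨ht, trivial⟩

lemma sol_sm (h : IsYudovichSolution θ u) {t : ℝ} (ht : 0 ≤ t) (k : Fin 2) : Sm (cp (u t) k) :=
  (contDiff_euclidean.1 (sol_smv h ht)) k

lemma pd_cp {v : E2 → E2} (hv : ContDiff ℝ (⊤ : ℕ∞) v) (j k : Fin 2) (x : E2) :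
    pd j (cp v k) x = pdv j k v x := by
  have h1 : HasFDerivAt v (fderiv ℝ v x) x := (hv.differentiable (by simp) x).hasFDerivAt
  have h2 := ((EuclideanSpace.proj k : E2 →L[ℝ] ℝ).hasFDerivAt (x := v x)).comp x h1
  have h3 : HasFDerivAt (cp v k) ((EuclideanSpace.proj k : E2 →L[ℝ] ℝ).comp (fderiv ℝ v x)) x := h2
  rw [pd, h3.fderiv]
  rfl

lemma sol_div (h : IsYudovichSolution θ u) {t : ℝ} (ht : 0 ≤ t) (x : E2) :
    ∑ k, pd k (cp (u t) k) x = 0 := by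
  simp only [pd_cp (sol_smv h ht)]
  exact h.2.1 t ht x

lemma sol_PIf (h : IsYudovichSolution θ u) {t : ℝ} (ht : 0 ≤ t) : PIf θ (cp (u t)) :=
  fun x i j k => (h.2.2.1 t ht x).2 i j k

lemma sol_PF (h : IsYudovichSolution θ u) {t : ℝ} (ht : 0 ≤ t) (i : Fin 2) (x : E2) :
    PF θ (cp (u t)) i x = pressureForce θ (u t) i x := by
  simp only [PF, Qf, pd_cp (sol_smv h ht)]
  rfl

lemma acc_cont (h : IsYudovichSolution θ u) (i : Fin 2) : ContinuousOn (acc u i) dom := by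
  have h1 := h.1.continuousOn_fderivWithin dom_ud (by simp)
  have h2 : ContinuousOn (fun q => fderivWithin ℝ (fun q : ℝ × E2 => u q.1 q.2) dom q (1, 0)) dom :=
    h1.clm_apply continuousOn_const
  exact (EuclideanSpace.proj i : E2 →L[ℝ] ℝ).continuous.comp_continuousOn h2

/-- The one-sided time derivative is the one given by the Euler equations. -/
lemma acc_eq (h : IsYudovichSolution θ u) {t : ℝ} (ht : 0 ≤ t) (i : Fin 2) (x : E2) :
    acc u i (t, x) = -(∑ j, cp (u t) j x * pd j (cp (u t) i) x) - PF θ (cp (u t)) i x := by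
  have h1 : HasFDerivWithinAt (fun q : ℝ × E2 => u q.1 q.2)
      (fderivWithin ℝ (fun q : ℝ × E2 => u q.1 q.2) dom (t, x)) dom (t, x) :=
    ((h.1.differentiableOn (by simp)) (t, x) ⟨ht, trivial⟩).hasFDerivWithinAt
  have h2 : HasDerivWithinAt (fun s : ℝ => (s, x)) ((1 : ℝ), (0 : E2)) (Set.Ici 0) t :=
    (hasDerivWithinAt_id t _).prodMk (hasDerivWithinAt_const t _ x)
  have h3 := HasFDerivWithinAt.comp_hasDerivWithinAt t h1 h2
    (show Set.MapsTo (fun s : ℝ => (s, x)) (Set.Ici 0) dom from fun s hs => ⟨hs, trivial⟩)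
  have h4 := (((EuclideanSpace.proj i : E2 →L[ℝ] ℝ).hasFDerivAt).comp_hasDerivWithinAt t h3)
  have h5 := h.2.2.2 t ht x i
  have := ((uniqueDiffOn_Ici (0 : ℝ)) t ht).eq_deriv _ h4 h5
  rw [sol_PF h ht]
  simp only [pd_cp (sol_smv h ht)]
  exact this

lemma acc_deriv (h : IsYudovichSolution θ u) {t : ℝ} (ht : 0 < t) (i : Fin 2) (x : E2) :
    HasDerivAt (fun s => u s x i) (acc u i (t, x)) t := by
  rw [acc_eq h ht.le, sol_PF h ht.le]
  simp only [pd_cp (sol_smv h ht.le)]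
  exact (h.2.2.2 t ht.le x i).hasDerivAt (Ici_mem_nhds ht)

/-- The pressure force is continuous in space: by the Euler equations it is expressed through the
acceleration and the advection term, which are. -/
lemma PF_cont (h : IsYudovichSolution θ u) {t : ℝ} (ht : 0 ≤ t) (i : Fin 2) :
    Continuous (PF θ (cp (u t)) i) := by
  have h1 : Continuous fun x => acc u i (t, x) :=
    (acc_cont h i).comp_continuous (by fun_prop) fun x => ⟨ht, trivial⟩
  have h2 : PF θ (cp (u t)) i =
      fun x => -(∑ j, cp (u t) j x * pd j (cp (u t) i) x) - acc u i (t, x) := by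
    funext x; rw [acc_eq h ht]; ring
  rw [h2]
  exact (continuous_finsetSum _ fun j _ =>
    (sol_sm h ht j).cont.mul ((sol_sm h ht i).pd j).cont).neg.sub h1

lemma sol_cont (h : IsYudovichSolution θ u) (i : Fin 2) :
    ContinuousOn (fun q : ℝ × E2 => u q.1 q.2 i) dom :=
  (EuclideanSpace.proj i : E2 →L[ℝ] ℝ).continuous.comp_continuousOn h.1.continuousOn

/-- The extended-real vorticity and Morrey bounds turned into real ones. -/
lemma sol_adm (h : IsYudovichSolution θ u) {t : ℝ} (ht : 0 ≤ t) {α : ℝ} {M : ℝ≥0∞} (hM : M ≠ ⊤)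
    (hc : ∀ x, ENNReal.ofReal |curl2 (u t) x| ≤ M) (hm : morreyR α 1 (u t) ≤ M) :
    Adm α M.toReal (M.toReal ^ 2) (cp (u t)) := by
  refine ⟨fun k => sol_sm h ht k, sol_div h ht, fun x => ?_, fun r hr => ?_⟩
  · have : rot (cp (u t)) x = curl2 (u t) x := by
      simp only [rot, curl2, pd_cp (sol_smv h ht)]
    rw [this]
    exact (ENNReal.ofReal_le_iff_le_toReal hM).1 (hc x)
  · have h0 : 0 < r ^ (2 + 2 * α) := Real.rpow_pos_of_pos (by linarith) _
    have h1 := (le_iSup (fun r : {r : ℝ // 1 ≤ r} =>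
      ((∫⁻ x in ball (0 : E2) (r : ℝ), (‖u t x‖₊ : ℝ≥0∞) ^ 2) /
      ENNReal.ofReal ((r : ℝ) ^ (((2 : ℕ) : ℝ) + 2 * α))) ^ ((1 : ℝ) / 2)) ⟨r, hr⟩).trans hm
    simp only [Nat.cast_ofNat] at h1
    have h2 : (∫⁻ x in ball (0 : E2) r, (‖u t x‖₊ : ℝ≥0∞) ^ 2) /
        ENNReal.ofReal (r ^ (2 + 2 * α)) ≤ M ^ 2 := by
      have := ENNReal.rpow_le_rpow h1 (show (0 : ℝ) ≤ 2 by norm_num)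
      rw [← ENNReal.rpow_mul] at this
      norm_num at this
      exact this
    have h3 : (∫⁻ x in ball (0 : E2) r, (‖u t x‖₊ : ℝ≥0∞) ^ 2) ≤
        M ^ 2 * ENNReal.ofReal (r ^ (2 + 2 * α)) :=
      (ENNReal.div_le_iff (by simpa using h0) (by simp)).1 h2
    have h4 : ENNReal.ofReal (∫ x in ball 0 r, en (cp (u t)) x) =
        ∫⁻ x in ball (0 : E2) r, (‖u t x‖₊ : ℝ≥0∞) ^ 2 := by
      rw [ofReal_integral_eq_lintegral_ofReal
        (intOn_ball (en_cont fun k => sol_sm h ht k) r) (ae_of_all _ (en_nonneg _))]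
      refine lintegral_congr fun x => ?_
      have : en (cp (u t)) x = ‖u t x‖ ^ 2 := (EuclideanSpace.real_norm_sq_eq (u t x)).symm
      rw [this, ENNReal.ofReal_pow (norm_nonneg _), ofReal_norm]
      rfl
    rw [← h4, ENNReal.ofReal_le_iff_le_toReal
      (ENNReal.mul_ne_top (ENNReal.pow_ne_top hM) ENNReal.ofReal_ne_top)] at h3
    rwa [ENNReal.toReal_mul, ENNReal.toReal_pow, ENNReal.toReal_ofReal h0.le] at h3

end

/-! ### Evolution of the localised energy and conclusion -/

/-- Localised energy of the difference of two time-dependent fields. -/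
def Fe (θ : E2 → ℝ) (u v : ℝ → E2 → E2) (R t : ℝ) : ℝ :=
  ∫ x, ph θ R x * en (df (cp (u t)) (cp (v t))) x

section
variable {θ : E2 → ℝ} {u v : ℝ → E2 → E2}

lemma Fe_cont (hθ : IsCutoff θ) (hu : IsYudovichSolution θ u) (hv : IsYudovichSolution θ v) {R : ℝ}
    (hR : 0 < R) : ContinuousOn (Fe θ u v R) (Set.Ici 0) := by
  refine continuousOn_integral_of_compact_support (isCompact_closedBall (0 : E2) (2 * R))
    (f := fun t x => ph θ R x * en (df (cp (u t)) (cp (v t))) x) ?_ ?_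
  · have h1 : ContinuousOn (fun q : ℝ × E2 => ph θ R q.2 * ∑ i, (u q.1 q.2 i - v q.1 q.2 i) ^ 2) dom :=
      ((ph_sm hθ R).cont.comp continuous_snd).continuousOn.mul
        (continuousOn_finsetSum _ fun i _ => ((sol_cont hu i).sub (sol_cont hv i)).pow 2)
    exact h1
  · intro t x _ hx
    rw [mem_closedBall_zero_iff, not_le] at hx
    simp only [ph_zero hθ hR hx.le, zero_mul]

/-- Energy balance, by differentiating under the integral and inserting the Euler equations. -/
lemma Fe_deriv (hθ : IsCutoff θ) (hu : IsYudovichSolution θ u) (hv : IsYudovichSolution θ v)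
    {R : ℝ} (hR : 0 < R) {t : ℝ} (ht : 0 < t) :
    HasDerivAt (Fe θ u v R) (-2 * Jf θ (cp (u t)) (cp (v t)) R) t := by
  set G : ℝ → E2 → ℝ := fun s x => ph θ R x *
    ∑ i, 2 * ((u s x i - v s x i) * (acc u i (s, x) - acc v i (s, x))) with hG
  have hGc : ContinuousOn (fun q : ℝ × E2 => G q.1 q.2) dom :=
    ((ph_sm hθ R).cont.comp continuous_snd).continuousOn.mul
      (continuousOn_finsetSum _ fun i _ => continuousOn_const.mul
        (((sol_cont hu i).sub (sol_cont hv i)).mul ((acc_cont hu i).sub (acc_cont hv i))))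
  have hG0 : ∀ s x, 2 * R ≤ ‖x‖ → G s x = 0 := fun s x hx => by
    simp only [hG, ph_zero hθ hR hx, zero_mul]
  have hGs : ∀ s, 0 ≤ s → Continuous (G s) := fun s hs =>
    hGc.comp_continuous (f := fun x => (s, x)) (by fun_prop) fun x => ⟨hs, trivial⟩
  have hD : ∀ s, 0 < s → ∀ x, HasDerivAt
      (fun s => ph θ R x * en (df (cp (u s)) (cp (v s))) x) (G s x) s := by
    intro s hs x
    have h1 : HasDerivAt (fun s => ∑ i, (u s x i - v s x i) ^ 2)
        (∑ i, 2 * ((u s x i - v s x i) * (acc u i (s, x) - acc v i (s, x)))) s := by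
      refine HasDerivAt.fun_sum fun i _ => ?_
      refine (((acc_deriv hu hs i x).sub (acc_deriv hv hs i x)).pow 2).congr_deriv ?_
      simp only [Pi.sub_apply]
      push_cast
      ring
    exact h1.const_mul _
  obtain ⟨K, hK⟩ := ((isCompact_Icc (a := t / 2) (b := 2 * t)).prod
    (isCompact_closedBall (0 : E2) (2 * R))).exists_bound_of_continuousOn
    (hGc.mono fun q hq => ⟨show (0 : ℝ) ≤ q.1 by linarith [hq.1.1], trivial⟩)
  have hW : ∀ s, 0 ≤ s → ∀ k, Sm (df (cp (u s)) (cp (v s)) k) := fun s hs =>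
    df_sm (fun k => sol_sm hu hs k) (fun k => sol_sm hv hs k)
  have hFc : ∀ s, 0 ≤ s → Integrable (fun x => ph θ R x * en (df (cp (u s)) (cp (v s))) x) :=
    fun s hs => cs_int ((ph_sm hθ R).cont.mul (en_cont (hW s hs))) (ph_cs hθ hR).mul_right
  have main := hasDerivAt_integral_of_dominated_loc_of_deriv_le (μ := volume) (𝕜 := ℝ)
    (F := fun s x => ph θ R x * en (df (cp (u s)) (cp (v s))) x) (F' := G) (x₀ := t)
    (s := Set.Icc (t / 2) (2 * t)) (bound := (closedBall (0 : E2) (2 * R)).indicator fun _ => K)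
    (Icc_mem_nhds (by linarith) (by linarith))
    (Filter.mem_of_superset (Ioi_mem_nhds ht) fun s hs =>
      (hFc s (le_of_lt hs)).aestronglyMeasurable)
    (hFc t ht.le) (hGs t ht.le).aestronglyMeasurable
    (ae_of_all _ fun x s hs => by
      by_cases hx : x ∈ closedBall (0 : E2) (2 * R)
      · rw [Set.indicator_of_mem hx]; exact hK (s, x) ⟨hs, hx⟩
      · rw [Set.indicator_of_notMem hx, hG0 s x (by
          rw [mem_closedBall_zero_iff, not_le] at hx; exact hx.le), norm_zero])
    ((integrable_indicator_iff measurableSet_closedBall).2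
      (integrableOn_const (measure_closedBall_lt_top.ne)))
    (ae_of_all _ fun x s hs => hD s (by linarith [hs.1]) x)
  refine main.2.congr_deriv ?_
  rw [Jf, ← integral_const_mul]
  refine integral_congr_ae (ae_of_all _ fun x => ?_)
  have e : ∀ i j, pd j (df (cp (u t)) (cp (v t)) i) x =
      pd j (cp (u t) i) x - pd j (cp (v t) i) x := fun i j =>
    congrFun (pd_sub (sol_sm hu ht.le i) (sol_sm hv ht.le i) j) x
  simp only [hG, e, acc_eq hu ht.le, acc_eq hv ht.le, Fin.sum_univ_two, df, cp]
  ring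

end

/-- A priori growth of the energy of the difference: the exponent at which the bootstrap starts. -/
lemma df_mor {α Ω L : ℝ} (hα : α ≤ 1 / 2) (hL : 0 ≤ L) {U V : Fin 2 → E2 → ℝ} (hU : Adm α Ω L U)
    (hV : Adm α Ω L V) {r : ℝ} (hr : 1 ≤ r) : ∫ x in ball 0 r, en (df U V) x ≤ 4 * L * r ^ 3 := by
  have hWs := df_sm hU.sm hV.sm
  have : ∫ x in ball 0 r, en (df U V) x ≤ ∫ x in ball 0 r, (2 * en U x + 2 * en V x) :=
    setIntegral_mono (intOn_ball (en_cont hWs) _)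
      (intOn_ball ((continuous_const.mul (en_cont hU.sm)).add
        (continuous_const.mul (en_cont hV.sm))) _) fun x => by
        simp only [en, df, Fin.sum_univ_two]
        nlinarith [sq_nonneg (U 0 x + V 0 x), sq_nonneg (U 1 x + V 1 x)]
  rw [integral_add ((intOn_ball (en_cont hU.sm) _).const_mul 2)
    ((intOn_ball (en_cont hV.sm) _).const_mul 2), integral_const_mul, integral_const_mul] at this
  have := hU.mor3 hα hL hr
  have := hV.mor3 hα hL hr
  nlinarith

lemma ball_le_ph {θ : E2 → ℝ} (hθ : IsCutoff θ) {W : Fin 2 → E2 → ℝ} (hW : ∀ k, Sm (W k)) {R : ℝ}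
    (hR : 0 < R) : ∫ x in ball 0 R, en W x ≤ ∫ x, ph θ R x * en W x := by
  have h : ∫ x in ball 0 R, en W x = ∫ x in ball 0 R, ph θ R x * en W x :=
    setIntegral_congr_fun measurableSet_ball fun x hx => by
      simp only [ph_one hθ hR (mem_ball_zero_iff.1 hx).le, one_mul]
  rw [h]
  exact setIntegral_le_integral (cs_int ((ph_sm hθ R).cont.mul (en_cont hW)) (ph_cs hθ hR).mul_right)
    (ae_of_all _ fun x => mul_nonneg (ph_nonneg hθ R x) (en_nonneg W x))

lemma en_zero {W : Fin 2 → E2 → ℝ} (hW : ∀ k, Sm (W k))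
    (h : ∀ r, 1 ≤ r → ∫ x in ball 0 r, en W x ≤ 0) (x : E2) (i : Fin 2) : W i x = 0 := by
  have hr : 1 ≤ ‖x‖ + 1 := by linarith [norm_nonneg x]
  have h0 : ∫ y in ball 0 (‖x‖ + 1), en W y = 0 :=
    le_antisymm (h _ hr) (integral_nonneg (en_nonneg W))
  rw [setIntegral_eq_zero_iff_of_nonneg_ae (ae_of_all _ (en_nonneg W))
    (intOn_ball (en_cont hW) _)] at h0
  have := Measure.eqOn_open_of_ae_eq h0 isOpen_ball (en_cont hW).continuousOn continuousOn_const
    (show x ∈ ball (0 : E2) (‖x‖ + 1) by rw [mem_ball_zero_iff]; linarith)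
  have h2 := sq_le_en W i x
  rw [this] at h2
  exact pow_eq_zero_iff (two_ne_zero) |>.1 (le_antisymm h2 (sq_nonneg _))

/-- Uniqueness propagates over time steps whose length depends only on the bounds on `[0, T]`. -/
lemma uniq_on {α : ℝ} (hα : α < 1 / 2) {θ : E2 → ℝ} (hθ : IsCutoff θ) {u v : ℝ → E2 → E2}
    (hu : IsYudovichSolution θ u) (hv : IsYudovichSolution θ v) {T Ω L : ℝ} (hΩ : 0 ≤ Ω)
    (hL : 0 ≤ L) (hau : ∀ t, 0 ≤ t → t ≤ T → Adm α Ω L (cp (u t)))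
    (hav : ∀ t, 0 ≤ t → t ≤ T → Adm α Ω L (cp (v t))) (h0 : ∀ x, u 0 x = v 0 x) :
    ∀ t, 0 ≤ t → t ≤ T → ∀ x, u t x = v t x := by
  obtain ⟨A, hA, key⟩ := key_fixed hθ hΩ hL hα
  set τ := 1 / (1 + 224 * A) with hτ
  have hτ0 : 0 < τ := by positivity
  have hτ1 : τ ≤ 1 := by rw [hτ, div_le_one (by positivity)]; linarith
  have hτA : 224 * A * τ ≤ 1 := by
    rw [hτ, mul_one_div, div_le_one (by positivity)]; linarith
  have ind : ∀ n : ℕ, ∀ t, 0 ≤ t → t ≤ T → t ≤ n * τ → ∀ x, u t x = v t x := by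
    intro n
    induction n with
    | zero =>
      intro t ht _ ht0 x
      have : t = 0 := le_antisymm (by simpa using ht0) ht
      rw [this, h0]
    | succ n ih =>
      intro b hb hbT hbn
      rcases le_or_gt b (n * τ) with hle | hlt
      · exact ih b hb hbT hle
      set a := n * τ with ha
      have ha0 : 0 ≤ a := by positivity
      have hba : b - a ≤ τ := by push_cast at hbn; linarith
      have hW : ∀ t, 0 ≤ t → ∀ k, Sm (df (cp (u t)) (cp (v t)) k) := fun t ht =>
        df_sm (fun k => sol_sm hu ht k) (fun k => sol_sm hv ht k)
      have fin := boot (a := a) (b := b) hA (by linarith)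
        (by nlinarith [mul_le_mul_of_nonneg_left hba hA])
        (f := fun r t => ∫ x in ball 0 r, en (df (cp (u t)) (cp (v t))) x)
        (F := Fe θ u v) (F' := fun R t => -2 * Jf θ (cp (u t)) (cp (v t)) R)
        (fun R hR => (Fe_cont hθ hu hv (by linarith)).mono fun t ht => ha0.trans ht.1)
        (fun R hR t ht => Fe_deriv hθ hu hv (by linarith) (by linarith [ht.1]))
        (fun R hR => by
          have : ∀ x, en (df (cp (u a)) (cp (v a))) x = 0 := fun x => by
            simp only [en, df, cp, ih a ha0 (by linarith) le_rfl x, sub_self]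
            simp
          simp only [Fe, this, mul_zero, integral_zero])
        (fun R hR t ht => ball_le_ph hθ (hW t (ha0.trans ht.1)) (by linarith))
        (fun m c hm hc t ht hf R hR => by
          have ht0 : 0 ≤ t := by linarith [ht.1]
          have htT : t ≤ T := by linarith [ht.2]
          have hR0 : 0 < R := by linarith
          -- mollification at the scale `R⁻⁶` makes the remainder decay
          have k := key _ _ (hau t ht0 htT) (hav t ht0 htT) (sol_PIf hu ht0) (sol_PIf hv ht0)
            (PF_cont hu ht0) (PF_cont hv ht0) m c hm hc hf ((R ^ 6)⁻¹) R (by positivity)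
            (inv_le_one_of_one_le₀ (one_le_pow₀ hR)) hR
          have e1 : R / (R ^ 6)⁻¹ = R ^ 7 := by field_simp
          have e2 : A * (R ^ 6)⁻¹ * R ^ 4 = A * R ^ (-2 : ℝ) := by
            rw [Real.rpow_neg hR0.le, Real.rpow_two]; field_simp
          rw [e1, e2, Real.log_pow] at k
          have k2 := neg_le_of_abs_le k
          change _ ≤ 2 * A * (1 + 7 * Real.log R) *
            ((∫ x, ph θ R x * en (df (cp (u t)) (cp (v t))) x) + c * R ^ (m - 1 / 4)) + _
          push_cast at k2
          linarith)
        (c := 4 * L) (by positivity)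
        (fun t ht r hr => by
          have ht0 : 0 ≤ t := by linarith [ht.1]
          have htT : t ≤ T := by linarith [ht.2]
          have := df_mor hα.le hL (hau t ht0 htT) (hav t ht0 htT) hr
          rw [show (3 : ℝ) = ((3 : ℕ) : ℝ) by norm_num, Real.rpow_natCast]
          exact this)
        (fun t ht r s hr hrs => setIntegral_mono_set
          (intOn_ball (en_cont (hW t (ha0.trans ht.1))) s) (ae_of_all _ (en_nonneg _))
          (ball_subset_ball hrs).eventuallyLE)
      intro x
      ext i
      exact sub_eq_zero.1 (en_zero (hW b hb) (fin b ⟨hlt.le, le_rfl⟩) x i)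
  intro t ht htT
  obtain ⟨n, hn⟩ := exists_nat_ge (t / τ)
  exact ind n t ht htT ((div_le_iff₀ hτ0).1 hn)

/-- Uniqueness (Theorem 5.1): two classical Yudovich solutions of the 2D Euler equations
with locally-in-time bounded vorticity and `L²_α` Morrey norm (`0 ≤ α < 1/2`) that share
the same initial datum coincide for all `t ≥ 0`. -/
theorem yudovich_uniqueness (α : ℝ) (hα0 : 0 ≤ α) (hα : α < 1 / 2)
    (θ : E2 → ℝ) (hθ : IsCutoff θ)
    (u₁ u₂ : ℝ → E2 → E2)
    (h₁ : IsYudovichSolution θ u₁) (h₂ : IsYudovichSolution θ u₂)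
    (hb₁ : ∀ T : ℝ, 0 < T →
      (⨆ t : Set.Icc (0 : ℝ) T,
        ((⨆ x, ENNReal.ofReal |curl2 (u₁ t.1) x|) + morreyR α 1 (u₁ t.1))) < ⊤)
    (hb₂ : ∀ T : ℝ, 0 < T →
      (⨆ t : Set.Icc (0 : ℝ) T,
        ((⨆ x, ENNReal.ofReal |curl2 (u₂ t.1) x|) + morreyR α 1 (u₂ t.1))) < ⊤)
    (h0 : ∀ x, u₁ 0 x = u₂ 0 x) :
    ∀ t, 0 ≤ t → ∀ x, u₁ t x = u₂ t x := by
  intro t ht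
  have hT : 0 < t + 1 := by linarith
  set M₁ := ⨆ s : Set.Icc (0 : ℝ) (t + 1),
      ((⨆ x, ENNReal.ofReal |curl2 (u₁ s.1) x|) + morreyR α 1 (u₁ s.1)) with hM₁
  set M₂ := ⨆ s : Set.Icc (0 : ℝ) (t + 1),
      ((⨆ x, ENNReal.ofReal |curl2 (u₂ s.1) x|) + morreyR α 1 (u₂ s.1)) with hM₂
  have hM : M₁ + M₂ ≠ ⊤ := (ENNReal.add_lt_top.2 ⟨hb₁ _ hT, hb₂ _ hT⟩).ne
  have k₁ : ∀ s, 0 ≤ s → s ≤ t + 1 →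
      ((⨆ x, ENNReal.ofReal |curl2 (u₁ s) x|) + morreyR α 1 (u₁ s)) ≤ M₁ + M₂ := fun s hs hs' =>
    (le_iSup (fun s : Set.Icc (0 : ℝ) (t + 1) => ((⨆ x, ENNReal.ofReal |curl2 (u₁ s.1) x|) +
      morreyR α 1 (u₁ s.1))) ⟨s, hs, hs'⟩).trans le_self_add
  have k₂ : ∀ s, 0 ≤ s → s ≤ t + 1 →
      ((⨆ x, ENNReal.ofReal |curl2 (u₂ s) x|) + morreyR α 1 (u₂ s)) ≤ M₁ + M₂ := fun s hs hs' =>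
    (le_iSup (fun s : Set.Icc (0 : ℝ) (t + 1) => ((⨆ x, ENNReal.ofReal |curl2 (u₂ s.1) x|) +
      morreyR α 1 (u₂ s.1))) ⟨s, hs, hs'⟩).trans le_add_self
  exact uniq_on hα hθ h₁ h₂ (T := t + 1) (Ω := (M₁ + M₂).toReal) (L := (M₁ + M₂).toReal ^ 2)
    ENNReal.toReal_nonneg (by positivity)
    (fun s hs hs' => sol_adm h₁ hs hM
      (fun x => (le_iSup (fun x => ENNReal.ofReal |curl2 (u₁ s) x|) x).trans
        (le_self_add.trans (k₁ s hs hs'))) (le_add_self.trans (k₁ s hs hs')))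
    (fun s hs hs' => sol_adm h₂ hs hM
      (fun x => (le_iSup (fun x => ENNReal.ofReal |curl2 (u₂ s) x|) x).trans
        (le_self_add.trans (k₂ s hs hs'))) (le_add_self.trans (k₂ s hs hs')))
    h0 t ht (by linarith)

end
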